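/- There exist real numbers ξ > 0, N > 0, κ > 0 and δ > 0 with κ ≥ δ, such that for every natural number i ≥ 1 there exist a group H, a two-element subset S = {s₁,s₂} of H, a δ-hyperbolic geodesic metric space X and an action of H on X by isometries, with the following properties: (1) S generates H; (2) every element of (S ∪ S⁻¹)^i has finite order in H; (3) the action of H on X is (κ,N)-acylindrical; (4) some H-orbit in X is unbounded and H is not virtually cyclic (i.e. the action is non-elementary); (5) H has ξ-uniform uniform exponential growth: every finitely generated subgroup of H is either virtually nilpotent or satisfies ω(U) > ξ for every finite symmetric generating set U of that subgroup; (6) every virtually cyclic subgroup of H containing an element that is loxodromic for the action on X is infinite cyclic. -/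

import Mathlib

/-!
Let `F` be the free group of rank two, acting on its Cayley tree, and let `H = F / N`, where `N` is
generated by the `n`-th powers of all elements that translate a line of the tree having a period of
length at most `i`.  The exponent `n` is an odd prime that is huge compared with `i`.  Every element
of length at most `i` translates such a line, so the ball of radius `i` of `H` is torsion.  The point
is that nothing else about the action and the growth depends on `i`.

*The normal subgroup.*  A windmill argument in the tree (`good_of_mem_NN`) shows that every
nontrivial element of `N` has a long overlap with one of the lines: rotating it about that line
by some `g ^ n` brings its endpoint back next to the base point.  This replaces small
cancellation theory; it shows that `H` is not abelian, that torsion elements come from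
stabilizers of lines (`torsion_pow`), and that centralizers of nontrivial torsion elements are torsion
(`torsion_centralizer`).  As `n` is odd, a virtually cyclic subgroup with an element of infinite order
is then infinite cyclic (`cyclic_of_virtuallyCyclic`).

*The space.*  On `F` take the metric `dd` in which moving a distance `s` along one of the lines costs
about `log (s / i)`, truncated at a constant `L`.  Distinct lines overlap in length `O(i)`, which costs
`O(1)`; hence this metric is hyperbolic with a constant not depending on `i`.  As the cost
saturates, rotations about lines do not change large distances (`dd_bend`), so that four points of
`H` lift to `F` with their distances preserved and the quotient metric `dH` is hyperbolic with the same
constant (`dH_hyp`).  The space `X` is the injective hull of `(H, dH)`, which is geodesic and equally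
hyperbolic.  Acylindricity (`acyl_X`) follows by lifting as well: elements moving two far away points a
little move the intermediate points a little; if there were too many such elements, three translates of
a middle point would lie on one of the lines, forcing a long part of the geodesic onto a single line,
where its length is at most `L` (`acyl_F`).

*Growth.*  Let `u, v` be non-commuting elements of a finite symmetric set `U`.  If `u, v` displace every
point of `X` by at least `500`, some short product is a loxodromic isometry without backtracking, and by
acylindricity and ping-pong two products of bounded length generate a free semigroup (`regime_two`).
Otherwise `u, v` have a common vertex `p` of displacement at most `4500` (`small_disp`).  Their
conjugates by `p` lift to `F` as elements whose length is bounded in terms of `i`; two products of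
length at most `5` of the lifts generate a free semigroup of `F`, and the words with a
Thue-Morse like power-free pattern contain no long powers, hence stay distinct in
`H` when `n` is large enough (`regime_one`).  In both cases `U` has at least `2 ^ k` products of length
`c * k`, with `c` a universal constant, which bounds the growth rate from below.
-/

open Pointwise Filter

noncomputable section

universe u v

/-- The Gromov product `(x,y)_t`. -/
def gromov {X : Type*} [MetricSpace X] (x y t : X) : ℝ :=
  (dist x t + dist y t - dist x y) / 2

/-- `X` is `δ`-hyperbolic (four point inequality). -/
def IsDeltaHyperbolic (X : Type*) [MetricSpace X] (δ : ℝ) : Prop :=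
  ∀ x y z t : X, min (gromov x y t) (gromov y z t) - δ ≤ gromov x z t

/-- `X` is a geodesic metric space: any two points are joined by an isometric
embedding of a closed real interval. -/
def IsGeodesicSpace (X : Type*) [MetricSpace X] : Prop :=
  ∀ x y : X, ∃ f : ℝ → X, f 0 = x ∧ f (dist x y) = y ∧
    ∀ s ∈ Set.Icc (0 : ℝ) (dist x y), ∀ t ∈ Set.Icc (0 : ℝ) (dist x y),
      dist (f s) (f t) = |s - t|

/-- The action of `G` on `X` is by isometries. -/
def IsometricAction (G X : Type*) [Group G] [MetricSpace X] [MulAction G X] : Prop :=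
  ∀ g : G, Isometry fun x : X => g • x

/-- The action of `G` on `X` is `(κ,N)`-acylindrical (relative to the
hyperbolicity constant `δ`). -/
def AcylindricalAction (G X : Type*) [Group G] [MetricSpace X] [MulAction G X]
    (δ κ N : ℝ) : Prop :=
  ∀ x y : X, κ ≤ dist x y →
    {g : G | dist (g • x) x ≤ 100 * δ ∧ dist (g • y) y ≤ 100 * δ}.Finite ∧
    ({g : G | dist (g • x) x ≤ 100 * δ ∧ dist (g • y) y ≤ 100 * δ}.ncard : ℝ) ≤ N

/-- `L(U,x)`, the `ℓ^∞`-energy of `U` at `x`. -/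
def energyAt {G X : Type*} [Group G] [MetricSpace X] [MulAction G X]
    (U : Set G) (x : X) : ℝ :=
  sSup ((fun u : G => dist (u • x) x) '' U)

/-- `L(U)`, the `ℓ^∞`-energy of `U`. -/
def energy {G : Type*} (X : Type*) [Group G] [MetricSpace X] [MulAction G X]
    (U : Set G) : ℝ :=
  sInf (Set.range fun x : X => energyAt U x)

/-- The stable translation length `‖g‖^∞`, computed at the point `x` (for an
isometric action, by Fekete's subadditive lemma this infimum equals the limit of
`d(gⁿx,x)/n` and is independent of `x`). -/
def stableLength {G X : Type*} [Group G] [MetricSpace X] [MulAction G X]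
    (g : G) (x : X) : ℝ :=
  ⨅ n : ℕ+, dist ((g ^ (n : ℕ)) • x) x / ((n : ℕ) : ℝ)

/-- `g` is loxodromic for the action on `X`. -/
def IsLoxodromic {G : Type*} (X : Type*) [Group G] [MetricSpace X] [MulAction G X]
    (g : G) : Prop :=
  ∀ x : X, 0 < stableLength g x

/-- The translation length `‖g‖`. -/
def translationLength {G : Type*} (X : Type*) [Group G] [MetricSpace X] [MulAction G X]
    (g : G) : ℝ :=
  sInf (Set.range fun x : X => dist (g • x) x)

/-- The axis of `g`. -/
def axisOf {G X : Type*} [Group G] [MetricSpace X] [MulAction G X]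
    (δ : ℝ) (g : G) : Set X :=
  {x : X | dist (g • x) x ≤ translationLength X g + 8 * δ}

/-- The exponential growth rate `ω(U) = limsup (1/n) log |Uⁿ|`. -/
def growthRate {G : Type*} [Group G] (U : Set G) : ℝ :=
  limsup (fun n : ℕ => Real.log ((U ^ n).ncard : ℝ) / (n : ℝ)) atTop

/-- `S` is `α`-reduced at `p`. -/
def ReducedAt {G X : Type*} [Group G] [MetricSpace X] [MulAction G X]
    (δ α : ℝ) (S : Set G) (p : X) : Prop :=
  S ∩ S⁻¹ = ∅ ∧
  ∀ u₁ ∈ S ∪ S⁻¹, ∀ u₂ ∈ S ∪ S⁻¹, u₁ ≠ u₂ →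
    gromov (u₁ • p) (u₂ • p) p <
      min (dist (u₁ • p) p) (dist (u₂ • p) p) / 2 - α - 50 * δ

/-- A group is virtually cyclic if it has a cyclic subgroup of finite index. -/
def VirtuallyCyclic (H : Type*) [Group H] : Prop :=
  ∃ K : Subgroup H, IsCyclic K ∧ K.FiniteIndex

/-- A group is virtually nilpotent if it has a nilpotent subgroup of finite index. -/
def VirtuallyNilpotent (H : Type*) [Group H] : Prop :=
  ∃ K : Subgroup H, Group.IsNilpotent K ∧ K.FiniteIndex

/-- An `L`-local `(1,δ)`-quasi-geodesic line. -/
def IsLocalQuasiGeodesic {X : Type*} [MetricSpace X] (L δ : ℝ) (γ : ℝ → X) : Prop :=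
  ∀ s t : ℝ, |s - t| ≤ L → dist (γ s) (γ t) ≤ |s - t| ∧ |s - t| ≤ dist (γ s) (γ t) + δ

/-- `Y` is `σ`-quasi-convex. -/
def SigmaQuasiConvex {X : Type*} [MetricSpace X] (σ : ℝ) (Y : Set X) : Prop :=
  ∀ x : X, ∀ y ∈ Y, ∀ y' ∈ Y, Metric.infDist x Y ≤ gromov y y' x + σ

/-- `y` is a `δ`-projection of `x` on `Y`. -/
def IsDProj {X : Type*} [MetricSpace X] (δ : ℝ) (Y : Set X) (x y : X) : Prop :=
  y ∈ Y ∧ dist x y ≤ Metric.infDist x Y + δ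

/-- `l` is a reduced word over `U ∪ U⁻¹`. -/
def IsWordOver {G : Type*} [Group G] (U : Set G) (l : List G) : Prop :=
  (∀ a ∈ l, a ∈ U ∪ U⁻¹) ∧ l.Chain' fun a b => b ≠ a⁻¹

/-- `l` is a `τ`-shortening word over `Y` (relative to `U` and `p`). -/
def IsShorteningWord {G X : Type*} [Group G] [MetricSpace X] [MulAction G X]
    (δ τ : ℝ) (U : Set G) (p : X) (Y : Set X) (l : List G) : Prop :=
  l ≠ [] ∧ IsWordOver U l ∧
  ∃ y₀ y₁ : X, IsDProj δ Y p y₀ ∧ IsDProj δ Y (l.prod • p) y₁ ∧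
    τ < dist y₀ y₁ ∧
    (∀ a ∈ l.head?, dist p y₀ ≤ dist (a • p) p / 2 - 200 * δ) ∧
    (∀ a ∈ l.getLast?, dist (l.prod • p) y₁ ≤ dist (a • p) p / 2 - 200 * δ)

/-- `l` is a `τ`-shortening-free word relative to the family `Ys`. -/
def ShorteningFreeWord {G X : Type*} [Group G] [MetricSpace X] [MulAction G X]
    (δ τ : ℝ) (U : Set G) (p : X) (Ys : Set (Set X)) (l : List G) : Prop :=
  IsWordOver U l ∧
  ∀ Y ∈ Ys, ∀ l₀ l₁ l₂ : List G, l = l₀ ++ l₁ ++ l₂ → ¬ IsShorteningWord δ τ U p Y l₁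

/-- The word length of an element of a free group. -/
def fgNorm {α : Type*} (w : FreeGroup α) : ℕ :=
  letI := Classical.decEq α
  w.toWord.length

/-- `w` is a prefix of `r` in the free group. -/
def FGPrefix {α : Type*} (w r : FreeGroup α) : Prop :=
  fgNorm r = fgNorm w + fgNorm (w⁻¹ * r)

/-- `r'` is a cyclic permutation of `r`. -/
def IsCyclicPerm {α : Type*} (r r' : FreeGroup α) : Prop :=
  ∃ w v : FreeGroup α, r = w * v ∧ fgNorm r = fgNorm w + fgNorm v ∧
    r' = v * w ∧ fgNorm r' = fgNorm v + fgNorm w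

/-- `q` is a piece of the set of relators `R`. -/
def IsPiece {α : Type*} (R : Set (FreeGroup α)) (q : FreeGroup α) : Prop :=
  q ≠ 1 ∧ ∃ r₁ ∈ R, ∃ r₂ ∈ R, r₁ ≠ r₂ ∧ FGPrefix q r₁ ∧ FGPrefix q r₂

/-- `ξ`-uniform uniform exponential growth: every finitely generated subgroup is
either virtually nilpotent or has `ξ`-uniform exponential growth. -/
def UUEG (ξ : ℝ) (Q : Type*) [Group Q] : Prop :=
  ∀ H : Subgroup Q, H.FG →
    (VirtuallyNilpotent H ∨
      ∀ U : Set H, U.Finite → U⁻¹ = U → Subgroup.closure U = ⊤ → ξ < growthRate U)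
/-- A witness for STATEMENT 18: a 2-generated group `H` acting
`(κ,N)`-acylindrically and non-elementarily on a `δ`-hyperbolic geodesic space,
whose ball of radius `i` consists of torsion elements, which has `ξ`-uniform
uniform exponential growth, and all of whose loxodromic (virtually cyclic)
subgroups are infinite cyclic. -/
structure BigTorsionBallWitness (ξ N κ δ : ℝ) (i : ℕ) where
  H : Type
  X : Type
  [grp : Group H]
  [ms : MetricSpace X]
  [act : MulAction H X]
  s₁ : H
  s₂ : H
  generates : Subgroup.closure {s₁, s₂} = ⊤
  torsion_ball : ∀ g ∈ (({s₁, s₂} : Set H) ∪ ({s₁, s₂} : Set H)⁻¹) ^ i, IsOfFinOrder g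
  hyperbolic : IsDeltaHyperbolic X δ
  geodesic : IsGeodesicSpace X
  isometric : IsometricAction H X
  acylindrical : AcylindricalAction H X δ κ N
  unbounded_orbit : ∃ x : X, ¬ Bornology.IsBounded (MulAction.orbit H x)
  not_virtually_cyclic : ¬ VirtuallyCyclic H
  uueg : UUEG ξ H
  loxodromic_subgroups_cyclic : ∀ K : Subgroup H, VirtuallyCyclic K →
    (∃ g ∈ K, IsLoxodromic X g) → IsCyclic K ∧ Infinite K

/-! ### The Cayley tree of the free group -/

namespace TB

/-- The free group of rank two, viewed as the vertex set of its Cayley tree. -/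
abbrev F := FreeGroup (Fin 2)

/-- The word metric of the free group (the distance in the Cayley tree). -/
def nd (x y : F) : ℕ := (x⁻¹ * y).norm

theorem nd_self (x : F) : nd x x = 0 := by simp [nd]
theorem nd_one (x : F) : nd 1 x = x.norm := by simp [nd]
theorem nd_comm (x y : F) : nd x y = nd y x := by
  unfold nd; rw [← FreeGroup.norm_inv_eq]; congr 1; group
theorem nd_tri (x y z : F) : nd x z ≤ nd x y + nd y z := by
  unfold nd
  calc (x⁻¹ * z).norm = ((x⁻¹ * y) * (y⁻¹ * z)).norm := by congr 1; group
    _ ≤ _ := FreeGroup.norm_mul_le _ _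
theorem nd_eq_zero {x y : F} : nd x y = 0 ↔ x = y := by
  unfold nd; rw [FreeGroup.norm_eq_zero, inv_mul_eq_one]
theorem nd_mul (g x y : F) : nd (g * x) (g * y) = nd x y := by
  unfold nd; congr 1; group

theorem exists_common_prefix {β : Type*} (l₁ l₂ : List β) : ∃ p u v : List β,
    l₁ = p ++ u ∧ l₂ = p ++ v ∧ ∀ a ∈ u.head?, ∀ b ∈ v.head?, a ≠ b := by
  induction l₁ generalizing l₂ with
  | nil => exact ⟨[], [], l₂, by simp⟩
  | cons a l ih =>
    cases l₂ with
    | nil => exact ⟨[], a :: l, [], by simp⟩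
    | cons b l' =>
      by_cases h : a = b
      · subst h
        obtain ⟨p, u, v, h1, h2, h3⟩ := ih l'
        exact ⟨a :: p, u, v, by simp [h1], by simp [h2], h3⟩
      · exact ⟨[], a :: l, b :: l', by simp, by simp, by simpa using h⟩

theorem norm_mk_of_isReduced {l : List (Fin 2 × Bool)} (h : FreeGroup.IsReduced l) :
    (FreeGroup.mk l : F).norm = l.length := by
  rw [FreeGroup.norm, FreeGroup.toWord_mk, h.reduce_eq]

theorem mk_inv_mul_mk_append (p u : List (Fin 2 × Bool)) :
    (FreeGroup.mk p)⁻¹ * FreeGroup.mk (p ++ u) = FreeGroup.mk u := by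
  rw [← FreeGroup.mul_mk]; group

/-- The common prefix of the reduced words of `x` and `y` is a median of `1`, `x`, `y`. -/
theorem exists_prefix_median (x y : F) : ∃ o : F,
    o.toWord <+: x.toWord ∧ o.toWord <+: y.toWord ∧
    nd 1 o + nd o x = nd 1 x ∧ nd 1 o + nd o y = nd 1 y ∧ nd x o + nd o y = nd x y := by
  obtain ⟨p, u, v, hx, hy, hne⟩ := exists_common_prefix x.toWord y.toWord
  have rx : FreeGroup.IsReduced (p ++ u) := hx ▸ FreeGroup.isReduced_toWord
  have ry : FreeGroup.IsReduced (p ++ v) := hy ▸ FreeGroup.isReduced_toWord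
  have rp : FreeGroup.IsReduced p := rx.infix (List.prefix_append p u).isInfix
  have ru : FreeGroup.IsReduced u := rx.infix (List.suffix_append p u).isInfix
  have rv : FreeGroup.IsReduced v := ry.infix (List.suffix_append p v).isInfix
  have ex : x = FreeGroup.mk (p ++ u) := by rw [← hx, FreeGroup.mk_toWord]
  have ey : y = FreeGroup.mk (p ++ v) := by rw [← hy, FreeGroup.mk_toWord]
  have hp : (FreeGroup.mk p : F).toWord = p := by rw [FreeGroup.toWord_mk, rp.reduce_eq]
  have hox : nd (FreeGroup.mk p) x = u.length := by
    rw [nd, ex, mk_inv_mul_mk_append, norm_mk_of_isReduced ru]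
  have hoy : nd (FreeGroup.mk p) y = v.length := by
    rw [nd, ey, mk_inv_mul_mk_append, norm_mk_of_isReduced rv]
  have ruv : FreeGroup.IsReduced (FreeGroup.invRev u ++ v) := by
    have r1 : FreeGroup.IsReduced (FreeGroup.invRev u) := by
      rw [FreeGroup.isReduced_iff_reduce_eq, FreeGroup.reduce_invRev, ru.reduce_eq]
    refine List.IsChain.append r1 rv ?_
    intro a ha b hb hab
    cases u with
    | nil => simp [FreeGroup.invRev] at ha
    | cons c u' =>
      simp [FreeGroup.invRev] at ha
      subst ha
      have hcb := hne c (by simp) b hb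
      simp only at hab
      by_contra hh
      apply hcb
      ext
      · rw [hab]
      · simp only at hh; cases h1 : c.2 <;> cases h2 : b.2 <;> simp_all
  refine ⟨FreeGroup.mk p, ?_, ?_, ?_, ?_, ?_⟩
  · rw [hp, hx]; exact List.prefix_append _ _
  · rw [hp, hy]; exact List.prefix_append _ _
  · rw [nd_one, nd_one, hox, norm_mk_of_isReduced rp, ex, norm_mk_of_isReduced rx]; simp
  · rw [nd_one, nd_one, hoy, norm_mk_of_isReduced rp, ey, norm_mk_of_isReduced ry]; simp
  · rw [nd_comm, hox, hoy, nd, ex, ey]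
    have : (FreeGroup.mk (p ++ u))⁻¹ * FreeGroup.mk (p ++ v)
        = FreeGroup.mk (FreeGroup.invRev u ++ v) := by
      rw [← FreeGroup.mul_mk, ← FreeGroup.mul_mk, ← FreeGroup.mul_mk, ← FreeGroup.inv_mk]; group
    rw [this, norm_mk_of_isReduced ruv]; simp

theorem nd_prefix {o y : F} (h : o.toWord <+: y.toWord) : nd 1 o + nd o y = nd 1 y := by
  obtain ⟨u, hu⟩ := h
  have ry : FreeGroup.IsReduced (o.toWord ++ u) := hu ▸ FreeGroup.isReduced_toWord
  have ru : FreeGroup.IsReduced u := ry.infix (List.suffix_append _ u).isInfix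
  have : o⁻¹ * y = FreeGroup.mk u := by
    rw [← mk_inv_mul_mk_append o.toWord u, hu, FreeGroup.mk_toWord, FreeGroup.mk_toWord]
  rw [nd_one, nd_one, nd, this, norm_mk_of_isReduced ru, FreeGroup.norm, FreeGroup.norm, ← hu,
    List.length_append]

theorem fourpt_one (x y z : F) : nd x z + nd 1 y ≤ nd 1 x + nd y z ∨
    nd x z + nd 1 y ≤ nd 1 z + nd x y := by
  obtain ⟨o, h1, h2, h3, h4, h5⟩ := exists_prefix_median x y
  obtain ⟨o', h1', h2', h3', h4', h5'⟩ := exists_prefix_median y z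
  rcases le_total o.toWord.length o'.toWord.length with h | h
  · have hz := nd_prefix ((List.prefix_of_prefix_length_le h2 h1' h).trans h2')
    have := nd_tri x o z
    have := nd_comm x o
    right; omega
  · have hz := nd_prefix ((List.prefix_of_prefix_length_le h1' h2 h).trans h1)
    have := nd_tri x o' z
    have := nd_comm x o'
    have := nd_comm y o'
    left; omega

/-- The four point condition: the Cayley graph of the free group is a tree. -/
theorem fourpt (x y z w : F) : nd x y + nd z w ≤ nd x z + nd y w ∨
    nd x y + nd z w ≤ nd x w + nd y z := by
  have h := fourpt_one (w⁻¹ * x) (w⁻¹ * z) (w⁻¹ * y)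
  have e : ∀ a : F, nd 1 (w⁻¹ * a) = nd w a := fun a => by
    rw [← nd_mul w, mul_one, mul_inv_cancel_left]
  rw [nd_mul, nd_mul, nd_mul, e, e, e] at h
  have := nd_comm z w; have := nd_comm y w; have := nd_comm x w; have := nd_comm y z
  omega

theorem exists_median (x y z : F) : ∃ o, nd x o + nd o y = nd x y ∧ nd x o + nd o z = nd x z ∧
    nd y o + nd o z = nd y z := by
  obtain ⟨o, -, -, h1, h2, h3⟩ := exists_prefix_median (x⁻¹ * y) (x⁻¹ * z)
  refine ⟨x * o, ?_⟩
  rw [← nd_mul x, ← nd_mul x o, ← nd_mul x 1 (x⁻¹ * y)] at h1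
  rw [← nd_mul x, ← nd_mul x o, ← nd_mul x 1 (x⁻¹ * z)] at h2
  rw [← nd_mul x _ o, ← nd_mul x o, ← nd_mul x _ (x⁻¹ * z)] at h3
  simp only [mul_one, mul_inv_cancel_left] at h1 h2 h3
  exact ⟨h1, h2, h3⟩

theorem exists_btw (x y : F) (k : ℕ) (hk : k ≤ nd x y) :
    ∃ z, nd x z = k ∧ nd x z + nd z y = nd x y := by
  set w := (x⁻¹ * y).toWord with hw
  have hr : FreeGroup.IsReduced (w.take k) :=
    FreeGroup.isReduced_toWord.infix (List.take_prefix k w).isInfix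
  have ht : (FreeGroup.mk (w.take k) : F).toWord = w.take k := by
    rw [FreeGroup.toWord_mk, hr.reduce_eq]
  have h1 : nd 1 (FreeGroup.mk (w.take k)) = k := by
    rw [nd_one, norm_mk_of_isReduced hr, List.length_take]
    exact min_eq_left hk
  have h2 := nd_prefix (o := FreeGroup.mk (w.take k)) (y := x⁻¹ * y)
    (by rw [ht]; exact List.take_prefix k w)
  refine ⟨x * FreeGroup.mk (w.take k), ?_⟩
  rw [← nd_mul x, mul_one] at h1
  rw [← nd_mul x, ← nd_mul x _ (x⁻¹ * y), ← nd_mul x 1 (x⁻¹ * y)] at h2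
  simp only [mul_one, mul_inv_cancel_left] at h2
  exact ⟨h1, h2⟩

/-- `Btw x z y`: the vertex `z` lies on the geodesic `[x, y]`. -/
def Btw (x z y : F) : Prop := nd x z + nd z y = nd x y

theorem Btw.symm {x z y : F} (h : Btw x z y) : Btw y z x := by
  unfold Btw at *; rw [nd_comm y z, nd_comm z x, nd_comm y x]; omega
theorem btw_left (x y : F) : Btw x x y := by simp [Btw, nd_self]
theorem btw_right (x y : F) : Btw x y y := by simp [Btw, nd_self]
theorem Btw.mul {x z y : F} (h : Btw x z y) (g : F) : Btw (g * x) (g * z) (g * y) := by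
  unfold Btw at *; rwa [nd_mul, nd_mul, nd_mul]

theorem Btw.uniq {x y z z' : F} (h : Btw x z y) (h' : Btw x z' y) (e : nd x z = nd x z') :
    z = z' := by
  rw [← nd_eq_zero]
  unfold Btw at *
  have := fourpt x y z z'
  have := nd_comm y z; have := nd_comm y z'
  omega

/-- A geodesic triangle is a tripod: `[x, y] ⊆ [x, w] ∪ [w, y]`. -/
theorem Btw.split {x y z : F} (h : Btw x z y) (w : F) : Btw x z w ∨ Btw w z y := by
  unfold Btw at *
  have := fourpt x y z w
  have := nd_comm y z; have := nd_comm y w; have := nd_comm z w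
  have := nd_tri x z w; have := nd_tri w z y
  omega

theorem Btw.trans {x y z w : F} (h : Btw x z y) (h' : Btw x w z) : Btw x w y := by
  unfold Btw at *
  have := nd_tri w z y; have := nd_tri x w y
  omega

theorem Btw.trans' {x y z w : F} (h : Btw x z y) (h' : Btw x w z) : Btw w z y := by
  unfold Btw at *
  have := nd_tri w z y; have := nd_tri x w y
  omega

/-- Local geodesics of a tree are geodesics. -/
theorem btw_local_global {a b c d : F} (h1 : Btw a b c) (h2 : Btw b c d) (hne : b ≠ c) :
    nd a d = nd a b + nd b c + nd c d := by
  have h0 : nd b c ≠ 0 := fun h => hne (nd_eq_zero.1 h)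
  unfold Btw at *
  have h := fourpt a c b d
  have := nd_tri a b d; have := nd_comm c d; have := nd_comm b c
  omega

end TB

/-! ### Lines and translations -/

namespace TB

/-- A parametrized bi-infinite geodesic `f` of the tree, together with an element `w` that
translates it by `τ > 0`. -/
structure PLine where
  f : ℤ → F
  w : F
  τ : ℕ
  pos : 0 < τ
  iso : ∀ a b, nd (f a) (f b) = (a - b).natAbs
  per : ∀ a, w * f a = f (a + τ)

namespace PLine

theorem inj (ℓ : PLine) {a b : ℤ} (h : ℓ.f a = ℓ.f b) : a = b := by
  have := ℓ.iso a b; rw [h, nd_self] at this; omega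

theorem mem_of_btw (ℓ : PLine) {a b : ℤ} {z : F} (h : Btw (ℓ.f a) z (ℓ.f b)) :
    ∃ c, z = ℓ.f c ∧ (a - c).natAbs + (c - b).natAbs = (a - b).natAbs := by
  have hab := ℓ.iso a b
  have hl : nd (ℓ.f a) z ≤ (a - b).natAbs := by unfold Btw at h; omega
  obtain ⟨c, hc, hc'⟩ : ∃ c : ℤ, (a - c).natAbs = nd (ℓ.f a) z ∧
      (a - c).natAbs + (c - b).natAbs = (a - b).natAbs := by
    rcases le_total a b with hh | hh
    · exact ⟨a + nd (ℓ.f a) z, by omega, by omega⟩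
    · exact ⟨a - nd (ℓ.f a) z, by omega, by omega⟩
  refine ⟨c, h.uniq (z' := ℓ.f c) ?_ ?_, hc'⟩
  · unfold Btw; rw [ℓ.iso, ℓ.iso, ℓ.iso]; exact hc'
  · rw [ℓ.iso]; exact hc.symm

theorem exists_proj (ℓ : PLine) (x : F) :
    ∃ p, ∀ b, nd x (ℓ.f b) = nd x (ℓ.f p) + (b - p).natAbs := by
  obtain ⟨p, hp⟩ : ∃ p, ∀ b, nd x (ℓ.f p) ≤ nd x (ℓ.f b) := by
    have hne : (Set.range fun b => nd x (ℓ.f b)).Nonempty := ⟨_, 0, rfl⟩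
    obtain ⟨p, hp⟩ := Nat.sInf_mem hne
    exact ⟨p, fun b => by rw [show nd x (ℓ.f p) = _ from hp]; exact Nat.sInf_le ⟨b, rfl⟩⟩
  refine ⟨p, fun b => ?_⟩
  obtain ⟨o, h1, h2, h3⟩ := exists_median x (ℓ.f p) (ℓ.f b)
  obtain ⟨c, rfl, -⟩ := ℓ.mem_of_btw h3
  have h4 := hp c
  have h5 : ℓ.f c = ℓ.f p := nd_eq_zero.1 (by omega)
  rw [h5] at h2
  rw [← h2, ℓ.iso]; omega

/-- The parameter of the nearest point projection to the line. -/
def proj (ℓ : PLine) (x : F) : ℤ := (ℓ.exists_proj x).choose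

theorem proj_spec (ℓ : PLine) (x : F) (b : ℤ) :
    nd x (ℓ.f b) = nd x (ℓ.f (ℓ.proj x)) + (b - ℓ.proj x).natAbs :=
  (ℓ.exists_proj x).choose_spec b

theorem proj_unique (ℓ : PLine) {x : F} {q : ℤ}
    (h : ∀ b, nd x (ℓ.f b) = nd x (ℓ.f q) + (b - q).natAbs) : ℓ.proj x = q := by
  have h1 := h (ℓ.proj x); have h2 := ℓ.proj_spec x q; omega

theorem proj_f (ℓ : PLine) (a : ℤ) : ℓ.proj (ℓ.f a) = a :=
  ℓ.proj_unique fun b => by rw [ℓ.iso, nd_self]; omega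

theorem nd_of_proj_ne (ℓ : PLine) {x y : F} (h : ℓ.proj x ≠ ℓ.proj y) :
    nd x y = nd x (ℓ.f (ℓ.proj x)) + (ℓ.proj x - ℓ.proj y).natAbs
      + nd (ℓ.f (ℓ.proj y)) y := by
  rw [← ℓ.iso]
  have h1 := ℓ.proj_spec x (ℓ.proj y)
  have h2 := ℓ.proj_spec y (ℓ.proj x)
  refine btw_local_global ?_ ?_ fun hh => h (ℓ.inj hh)
  · unfold Btw; rw [h1, ℓ.iso]; omega
  · unfold Btw; rw [ℓ.iso, nd_comm _ y, nd_comm _ y, h2]; omega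

theorem nd_le_proj (ℓ : PLine) (x y : F) :
    nd x y ≤ nd x (ℓ.f (ℓ.proj x)) + (ℓ.proj x - ℓ.proj y).natAbs
      + nd (ℓ.f (ℓ.proj y)) y := by
  have := nd_tri x (ℓ.f (ℓ.proj x)) y
  have := nd_tri (ℓ.f (ℓ.proj x)) (ℓ.f (ℓ.proj y)) y
  have := ℓ.iso (ℓ.proj x) (ℓ.proj y)
  omega

theorem proj_lip (ℓ : PLine) (x y : F) : (ℓ.proj x - ℓ.proj y).natAbs ≤ nd x y := by
  by_cases h : ℓ.proj x = ℓ.proj y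
  · rw [h]; simp
  · have := ℓ.nd_of_proj_ne h; omega

/-- The part of the line strictly seen by `[x, y]` lies on `[x, y]`. -/
theorem btw_of_proj (ℓ : PLine) {x y : F} (h : ℓ.proj x ≠ ℓ.proj y) {c : ℤ}
    (hc : (ℓ.proj x - c).natAbs + (c - ℓ.proj y).natAbs = (ℓ.proj x - ℓ.proj y).natAbs) :
    Btw x (ℓ.f c) y := by
  unfold Btw
  rw [ℓ.nd_of_proj_ne h, nd_comm _ y, ℓ.proj_spec x c, ℓ.proj_spec y c,
    nd_comm y (ℓ.f (ℓ.proj y))]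
  omega

theorem proj_btw (ℓ : PLine) {x y z : F} (h : Btw x z y) :
    (ℓ.proj x - ℓ.proj z).natAbs + (ℓ.proj z - ℓ.proj y).natAbs
      = (ℓ.proj x - ℓ.proj y).natAbs := by
  by_cases h1 : ℓ.proj x = ℓ.proj z
  · rw [h1]; simp
  by_cases h2 : ℓ.proj z = ℓ.proj y
  · rw [h2]; simp
  have e1 := ℓ.nd_of_proj_ne h1
  have e2 := ℓ.nd_of_proj_ne h2
  have e3 := ℓ.nd_le_proj x y
  unfold Btw at h
  omega

theorem proj_of_btw_line (ℓ : PLine) {x : F} {c : ℤ} {z : F} (h : Btw x z (ℓ.f c))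
    (hc : c = ℓ.proj x) : ℓ.proj z = c := by
  have := ℓ.proj_btw h
  rw [ℓ.proj_f] at this; omega

/-- The translate of a line by a group element. -/
def smul (g : F) (ℓ : PLine) : PLine where
  f a := g * ℓ.f a
  w := g * ℓ.w * g⁻¹
  τ := ℓ.τ
  pos := ℓ.pos
  iso a b := by rw [nd_mul, ℓ.iso]
  per a := by rw [← ℓ.per]; group

/-- The line with the opposite orientation. -/
def rev (ℓ : PLine) : PLine where
  f a := ℓ.f (-a)
  w := ℓ.w⁻¹
  τ := ℓ.τ
  pos := ℓ.pos
  iso a b := by rw [ℓ.iso]; omega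
  per a := by
    rw [inv_mul_eq_iff_eq_mul, ℓ.per]; congr 1; ring

theorem smul_f (g : F) (ℓ : PLine) (a : ℤ) : (ℓ.smul g).f a = g * ℓ.f a := rfl
theorem rev_f (ℓ : PLine) (a : ℤ) : ℓ.rev.f a = ℓ.f (-a) := rfl
theorem smul_τ (g : F) (ℓ : PLine) : (ℓ.smul g).τ = ℓ.τ := rfl
theorem rev_τ (ℓ : PLine) : ℓ.rev.τ = ℓ.τ := rfl

theorem proj_smul (g : F) (ℓ : PLine) (x : F) : (ℓ.smul g).proj (g * x) = ℓ.proj x :=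
  (ℓ.smul g).proj_unique fun b => by
    rw [smul_f, smul_f, nd_mul, nd_mul]; exact ℓ.proj_spec x b

theorem proj_smul' (g : F) (ℓ : PLine) (x : F) : (ℓ.smul g).proj x = ℓ.proj (g⁻¹ * x) := by
  rw [← proj_smul g ℓ, mul_inv_cancel_left]

theorem proj_rev (ℓ : PLine) (x : F) : ℓ.rev.proj x = - ℓ.proj x :=
  ℓ.rev.proj_unique fun b => by
    rw [rev_f, rev_f, neg_neg, ℓ.proj_spec x]; omega

/-- Two lines have the same underlying set of vertices. -/
def Same (ℓ ℓ' : PLine) : Prop := Set.range ℓ.f = Set.range ℓ'.f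

theorem Same.symm {ℓ ℓ' : PLine} (h : Same ℓ ℓ') : Same ℓ' ℓ := Eq.symm h
theorem Same.trans {ℓ ℓ' ℓ'' : PLine} (h : Same ℓ ℓ') (h' : Same ℓ' ℓ'') : Same ℓ ℓ'' :=
  Eq.trans h h'
theorem Same.refl (ℓ : PLine) : Same ℓ ℓ := rfl
theorem Same.smul {ℓ ℓ' : PLine} (h : Same ℓ ℓ') (g : F) :
    Same (ℓ.smul g) (ℓ'.smul g) := by
  unfold Same at *
  have : ∀ m : PLine, Set.range (m.smul g).f = (fun x => g * x) '' Set.range m.f := fun m => by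
    rw [← Set.range_comp]; rfl
  rw [this, this, h]

theorem smul_smul_same (g h : F) (ℓ : PLine) : Same ((ℓ.smul h).smul g) (ℓ.smul (g * h)) := by
  unfold Same; congr 1; funext a; simp [smul_f, mul_assoc]

theorem same_smul_inv {g : F} {ℓ ℓ' : PLine} (h : Same (ℓ.smul g) ℓ') :
    Same ℓ (ℓ'.smul g⁻¹) := by
  refine Same.trans ?_ (h.smul g⁻¹)
  refine Same.trans ?_ (smul_smul_same _ _ _).symm
  unfold Same; congr 1; funext a; simp [smul_f]

theorem same_rev (ℓ : PLine) : Same ℓ ℓ.rev := by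
  apply Set.eq_of_subset_of_subset
  · rintro _ ⟨a, rfl⟩; exact ⟨-a, by rw [rev_f, neg_neg]⟩
  · rintro _ ⟨a, rfl⟩; exact ⟨-a, by rw [rev_f]⟩

theorem Same.cases {ℓ ℓ' : PLine} (h : Same ℓ ℓ') :
    (∃ s, ∀ c, ℓ.f c = ℓ'.f (s + c)) ∨ (∃ s, ∀ c, ℓ.f c = ℓ'.f (s - c)) := by
  have hm : ∀ c, ∃ d, ℓ'.f d = ℓ.f c := fun c => by
    have : ℓ.f c ∈ Set.range ℓ.f := ⟨c, rfl⟩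
    rwa [h] at this
  choose φ hφ using hm
  have hd : ∀ a b, (φ a - φ b).natAbs = (a - b).natAbs := fun a b => by
    rw [← ℓ'.iso, hφ, hφ, ℓ.iso]
  have h01 := hd 1 0
  by_cases h1 : φ 1 = φ 0 + 1
  · left; refine ⟨φ 0, fun c => ?_⟩
    rw [← hφ]; congr 1
    have := hd c 0; have := hd c 1; omega
  · right; refine ⟨φ 0, fun c => ?_⟩
    rw [← hφ]; congr 1
    have := hd c 0; have := hd c 1; omega

theorem int_periodic {P : ℤ → Prop} (c₀ : ℤ) {τ : ℕ} (hτ : 0 < τ)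
    (h0 : ∀ c, c₀ ≤ c → c < c₀ + τ → P c) (hp : ∀ c, P c ↔ P (c + τ)) (c : ℤ) : P c := by
  have hk : ∀ (k : ℕ) c, P c ↔ P (c + k * τ) := by
    intro k; induction k with
    | zero => intro c; simp
    | succ k ih => intro c; rw [ih, hp]; congr! 1; push_cast; ring
  have hz : ∀ (k : ℤ) c, P c ↔ P (c + k * τ) := by
    intro k c
    rcases Int.eq_nat_or_neg k with ⟨m, rfl | rfl⟩
    · exact hk m c
    · rw [hk m (c + -m * τ)]; congr! 1; ring
  rw [hz (-((c - c₀) / τ)) c]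
  have e := Int.emod_add_mul_ediv (c - c₀) τ
  have h1 := Int.emod_nonneg (c - c₀) (show (τ : ℤ) ≠ 0 by omega)
  have h2 := Int.emod_lt_of_pos (c - c₀) (show (0 : ℤ) < τ by omega)
  have e2 : c + -((c - c₀) / τ) * τ = c₀ + (c - c₀) % τ := by linarith
  rw [e2]
  exact h0 _ (by omega) (by omega)

/-- If two periodic lines agree along a segment of length at least the sum of the periods, the
periods commute and the lines agree everywhere. -/
theorem overlap_core (ℓ ℓ' : PLine) (c₀ s : ℤ)
    (h : ∀ c, c₀ ≤ c → c ≤ c₀ + (ℓ.τ + ℓ'.τ : ℕ) → ℓ.f c = ℓ'.f (s + c)) (c : ℤ) :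
    ℓ.f c = ℓ'.f (s + c) := by
  have hp := ℓ.pos
  have hp' := ℓ'.pos
  have hw : ∀ c, c₀ ≤ c → c ≤ c₀ + ℓ.τ → ℓ'.w * ℓ.f c = ℓ.f (c + ℓ'.τ) := fun c h1 h2 => by
    rw [h c h1 (by push_cast; omega), ℓ'.per, h (c + ℓ'.τ) (by omega) (by push_cast; omega),
      add_assoc]
  have hcomm : ℓ.w * ℓ'.w = ℓ'.w * ℓ.w := by
    apply mul_right_cancel (b := ℓ.f c₀)
    rw [mul_assoc, mul_assoc, hw c₀ le_rfl (by omega), ℓ.per, ℓ.per,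
      hw (c₀ + ℓ.τ) (by omega) le_rfl]
    congr 1; ring
  have hw' : ∀ c, ℓ'.w * ℓ.f c = ℓ.f (c + ℓ'.τ) := by
    refine int_periodic c₀ hp (fun c h1 h2 => hw c h1 (by omega)) fun c => ?_
    rw [← ℓ.per, ← mul_assoc, ← hcomm, mul_assoc, show c + (ℓ.τ : ℤ) + ℓ'.τ = c + ℓ'.τ + ℓ.τ by ring,
      ← ℓ.per (c + ℓ'.τ)]
    exact mul_right_inj ℓ.w |>.symm
  refine int_periodic c₀ hp' (fun c h1 h2 => h c h1 (by push_cast; omega)) (fun c => ?_) c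
  rw [← hw', ← add_assoc, ← ℓ'.per]
  exact mul_right_inj ℓ'.w |>.symm

theorem mem_range_of_proj (ℓ ℓ' : PLine) {a b : ℤ}
    (h : ℓ.proj (ℓ'.f a) ≠ ℓ.proj (ℓ'.f b)) {c : ℤ}
    (hc : (ℓ.proj (ℓ'.f a) - c).natAbs + (c - ℓ.proj (ℓ'.f b)).natAbs
      = (ℓ.proj (ℓ'.f a) - ℓ.proj (ℓ'.f b)).natAbs) : ∃ d, ℓ.f c = ℓ'.f d := by
  obtain ⟨d, hd, -⟩ := ℓ'.mem_of_btw (ℓ.btw_of_proj h hc)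
  exact ⟨d, hd⟩

/-- Two lines with a common segment at least as long as the sum of the periods coincide. -/
theorem same_of_common (ℓ ℓ' : PLine) {c₀ c₁ : ℤ} (hc : c₀ + (ℓ.τ + ℓ'.τ : ℕ) ≤ c₁)
    (h0 : ℓ.f c₀ ∈ Set.range ℓ'.f) (h1 : ℓ.f c₁ ∈ Set.range ℓ'.f) : Same ℓ ℓ' := by
  have key : ∀ ℓ' : PLine, c₀ + (ℓ.τ + ℓ'.τ : ℕ) ≤ c₁ → ∀ d₀ d₁ : ℤ, ℓ'.f d₀ = ℓ.f c₀ →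
      ℓ'.f d₁ = ℓ.f c₁ → d₀ ≤ d₁ → Same ℓ ℓ' := by
    intro ℓ' hc d₀ d₁ h0 h1 hd
    have e : (d₀ - d₁).natAbs = (c₀ - c₁).natAbs := by rw [← ℓ'.iso, h0, h1, ℓ.iso]
    have hall := overlap_core ℓ ℓ' c₀ (d₀ - c₀) (fun c hc1 hc2 => by
      have hb : Btw (ℓ'.f d₀) (ℓ.f c) (ℓ'.f d₁) := by
        unfold Btw; rw [h0, h1, ℓ.iso, ℓ.iso, ℓ.iso]; omega
      obtain ⟨d, hd1, hd2⟩ := ℓ'.mem_of_btw hb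
      have e2 : (d₀ - d).natAbs = (c₀ - c).natAbs := by rw [← ℓ'.iso, h0, ← hd1, ℓ.iso]
      rw [hd1]; congr 1; omega)
    apply Set.eq_of_subset_of_subset
    · rintro _ ⟨a, rfl⟩; exact ⟨_, (hall a).symm⟩
    · rintro _ ⟨a, rfl⟩; exact ⟨a - (d₀ - c₀), by rw [hall]; congr 1; ring⟩
  obtain ⟨d₀, h0⟩ := h0
  obtain ⟨d₁, h1⟩ := h1
  rcases le_total d₀ d₁ with h | h
  · exact key ℓ' hc d₀ d₁ h0 h1 h
  · refine (key ℓ'.rev hc (-d₀) (-d₁) ?_ ?_ (by omega)).trans ℓ'.same_rev.symm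
    · rw [rev_f, neg_neg, h0]
    · rw [rev_f, neg_neg, h1]

theorem same_of_overlap (ℓ ℓ' : PLine) {a b : ℤ}
    (h : ℓ.τ + ℓ'.τ ≤ (ℓ.proj (ℓ'.f a) - ℓ.proj (ℓ'.f b)).natAbs) : Same ℓ ℓ' := by
  have hp := ℓ.pos
  have hne : ℓ.proj (ℓ'.f a) ≠ ℓ.proj (ℓ'.f b) := fun h' => by rw [h'] at h; simp at h; omega
  obtain ⟨d, hd⟩ := mem_range_of_proj ℓ ℓ' hne (c := ℓ.proj (ℓ'.f a)) (by omega)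
  obtain ⟨e, he⟩ := mem_range_of_proj ℓ ℓ' hne (c := ℓ.proj (ℓ'.f b)) (by omega)
  rcases le_total (ℓ.proj (ℓ'.f a)) (ℓ.proj (ℓ'.f b)) with h' | h'
  · exact same_of_common ℓ ℓ' (by omega) ⟨d, hd.symm⟩ ⟨e, he.symm⟩
  · exact same_of_common ℓ ℓ' (by omega) ⟨e, he.symm⟩ ⟨d, hd.symm⟩

/-- The dichotomy for the projections of a point to two lines. -/
theorem behrstock (ℓ ℓ' : PLine) (z : F) :
    ℓ.proj z = ℓ.proj (ℓ'.f (ℓ'.proj z)) ∨ ℓ'.proj z = ℓ'.proj (ℓ.f (ℓ.proj z)) := by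
  by_cases h : ℓ.proj z = ℓ.proj (ℓ'.f (ℓ'.proj z))
  · exact Or.inl h
  · exact Or.inr (ℓ'.proj_of_btw_line (ℓ.btw_of_proj h (by omega)) rfl).symm

/-- `g` translates the line by `t`. -/
def IsTr (ℓ : PLine) (g : F) (t : ℤ) : Prop := ∀ a, g * ℓ.f a = ℓ.f (a + t)

/-- `g` preserves the line; in a torsion free group it then acts on it as a translation. -/
def St (ℓ : PLine) (g : F) : Prop := ∃ t, ℓ.IsTr g t

theorem isTr_w (ℓ : PLine) : ℓ.IsTr ℓ.w ℓ.τ := ℓ.per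
theorem isTr_one (ℓ : PLine) : ℓ.IsTr 1 0 := fun a => by simp
theorem IsTr.mul {ℓ : PLine} {g g' : F} {t t' : ℤ} (h : ℓ.IsTr g t) (h' : ℓ.IsTr g' t') :
    ℓ.IsTr (g * g') (t + t') := fun a => by
  rw [mul_assoc, h', h]; congr 1; ring
theorem IsTr.inv {ℓ : PLine} {g : F} {t : ℤ} (h : ℓ.IsTr g t) : ℓ.IsTr g⁻¹ (-t) := fun a => by
  rw [inv_mul_eq_iff_eq_mul, h]; congr 1; ring
theorem IsTr.pow {ℓ : PLine} {g : F} {t : ℤ} (h : ℓ.IsTr g t) (n : ℕ) :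
    ℓ.IsTr (g ^ n) (n * t) := by
  induction n with
  | zero => simpa using ℓ.isTr_one
  | succ n ih => rw [pow_succ]; convert ih.mul h using 1; push_cast; ring
theorem IsTr.zpow {ℓ : PLine} {g : F} {t : ℤ} (h : ℓ.IsTr g t) (n : ℤ) :
    ℓ.IsTr (g ^ n) (n * t) := by
  rcases Int.eq_nat_or_neg n with ⟨m, rfl | rfl⟩
  · simpa using h.pow m
  · rw [zpow_neg]; simpa using (h.pow m).inv
theorem IsTr.conj {ℓ : PLine} {g : F} {t : ℤ} (h : ℓ.IsTr g t) (k : F) :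
    (ℓ.smul k).IsTr (k * g * k⁻¹) t := fun a => by
  rw [smul_f, smul_f, ← h]; group
theorem IsTr.rev {ℓ : PLine} {g : F} {t : ℤ} (h : ℓ.IsTr g t) : ℓ.rev.IsTr g (-t) := fun a => by
  rw [rev_f, rev_f, h]; congr 1; ring
theorem IsTr.ext {ℓ : PLine} {g g' : F} {t : ℤ} (h : ℓ.IsTr g t) (h' : ℓ.IsTr g' t) :
    g = g' := mul_right_cancel ((h 0).trans (h' 0).symm)
theorem IsTr.eq_one {ℓ : PLine} {g : F} (h : ℓ.IsTr g 0) : g = 1 := h.ext ℓ.isTr_one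
theorem IsTr.unique {ℓ : PLine} {g : F} {t t' : ℤ} (h : ℓ.IsTr g t) (h' : ℓ.IsTr g t') :
    t = t' := by
  have := ℓ.inj ((h 0).symm.trans (h' 0)); omega
theorem IsTr.comm {ℓ : PLine} {g g' : F} {t t' : ℤ} (h : ℓ.IsTr g t) (h' : ℓ.IsTr g' t') :
    g * g' = g' * g := (h.mul h').ext (by rw [add_comm]; exact h'.mul h)
theorem IsTr.proj {ℓ : PLine} {g : F} {t : ℤ} (h : ℓ.IsTr g t) (x : F) :
    ℓ.proj (g * x) = ℓ.proj x + t :=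
  ℓ.proj_unique fun b => by
    have e1 : ℓ.f b = g * ℓ.f (b - t) := by rw [h]; congr 1; ring
    rw [← h, e1, nd_mul, nd_mul, ℓ.proj_spec x]; omega
theorem IsTr.of_same {ℓ ℓ' : PLine} (hs : Same ℓ ℓ') {g : F} {t : ℤ} (h : ℓ.IsTr g t) :
    ℓ'.IsTr g t ∨ ℓ'.IsTr g (-t) := by
  rcases hs.symm.cases with ⟨s, hs⟩ | ⟨s, hs⟩
  · left; intro a; rw [hs, hs, h]; congr 1; ring
  · right; intro a; rw [hs, hs, h]; congr 1; ring
theorem St.of_same {ℓ ℓ' : PLine} (hs : Same ℓ ℓ') {g : F} (h : ℓ.St g) : ℓ'.St g := by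
  obtain ⟨t, h⟩ := h
  rcases h.of_same hs with h | h
  · exact ⟨_, h⟩
  · exact ⟨_, h⟩
theorem St.same {ℓ : PLine} {g : F} (h : ℓ.St g) : Same (ℓ.smul g) ℓ := by
  obtain ⟨t, h⟩ := h
  apply Set.eq_of_subset_of_subset
  · rintro _ ⟨a, rfl⟩; exact ⟨_, (h a).symm⟩
  · rintro _ ⟨a, rfl⟩; exact ⟨a - t, by rw [smul_f, h]; congr 1; ring⟩

/-- No element of a free group reverses a line, as its square would be trivial. -/
theorem not_reversing (ℓ : PLine) {g : F} {s : ℤ} : ¬ ∀ c, g * ℓ.f c = ℓ.f (s - c) := by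
  intro h
  have h2 : g ^ 2 = 1 := by
    apply mul_right_cancel (b := ℓ.f 0)
    rw [one_mul, sq, mul_assoc, h, h]; congr 1; ring
  have h1 : g = 1 := by
    by_contra hne
    exact (not_isOfFinOrder_of_isMulTorsionFree hne) (isOfFinOrder_iff_pow_eq_one.2 ⟨2, by norm_num, h2⟩)
  subst h1
  have h3 := ℓ.inj (by simpa using h 0)
  have h4 := ℓ.inj (by simpa using h 1)
  omega

theorem st_of_same {ℓ : PLine} {g : F} (h : Same (ℓ.smul g) ℓ) : ℓ.St g := by
  rcases h.cases with ⟨s, hs⟩ | ⟨s, hs⟩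
  · exact ⟨s, fun a => by rw [← smul_f, hs, add_comm]⟩
  · exact (ℓ.not_reversing (g := g) (s := s) hs).elim

end PLine

/-- A path of the tree without backtracking is a geodesic. -/
theorem iso_of_local (f : ℤ → F) (h1 : ∀ a, nd (f a) (f (a + 1)) = 1)
    (h2 : ∀ a, nd (f a) (f (a + 2)) = 2) (a b : ℤ) : nd (f a) (f b) = (a - b).natAbs := by
  have key : ∀ (k : ℕ) a, nd (f a) (f (a + k)) = k ∧ nd (f a) (f (a + k + 1)) = k + 1 := by
    intro k; induction k with
    | zero => intro a; simp [nd_self, h1]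
    | succ k ih =>
      intro a
      obtain ⟨i1, i2⟩ := ih a
      have e : a + ((k + 1 : ℕ) : ℤ) = a + k + 1 := by push_cast; ring
      rw [e]
      refine ⟨i2, ?_⟩
      have e1 := h1 (a + k)
      have e2 := h2 (a + k)
      have e3 := h1 (a + k + 1)
      rw [show a + (k : ℤ) + 2 = a + k + 1 + 1 by ring] at e2
      rw [btw_local_global (a := f a) (b := f (a + k)) (c := f (a + k + 1)), i1, e1, e3]
      · unfold Btw; omega
      · unfold Btw; omega
      · intro h; rw [h, nd_self] at e1; omega
  rcases le_total a b with h | h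
  · obtain ⟨k, rfl⟩ := Int.le.dest h
    rw [(key k a).1]; omega
  · obtain ⟨k, rfl⟩ := Int.le.dest h
    rw [nd_comm, (key k b).1]; omega

/-- An element moving `y` and `e * y` in a consistent direction is a translation of a line
through `y`. -/
theorem exists_axis (e y : F) (h0 : 0 < nd y (e * y))
    (h : nd y (e * (e * y)) = 2 * nd y (e * y)) :
    ∃ ℓ : PLine, ℓ.w = e ∧ ℓ.τ = nd y (e * y) ∧ ℓ.f 0 = y := by
  set m := nd y (e * y) with hm
  have hb : ∀ r : ℕ, ∃ z, r ≤ 2 * m → nd y z = r ∧ Btw y z (e * (e * y)) := fun r => by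
    by_cases hr : r ≤ 2 * m
    · obtain ⟨z, hz⟩ := exists_btw y (e * (e * y)) r (by omega)
      exact ⟨z, fun _ => hz⟩
    · exact ⟨y, fun h => (hr h).elim⟩
  choose γ hγ using hb
  have hmid : Btw y (e * y) (e * (e * y)) := by
    unfold Btw; rw [nd_mul]; omega
  have g0 : γ 0 = y := (nd_eq_zero.1 (hγ 0 (by omega)).1).symm
  have gm : γ m = e * y := (hγ m (by omega)).2.uniq hmid (by rw [(hγ m (by omega)).1])
  have g2m : γ (2 * m) = e * (e * y) :=
    (hγ (2 * m) le_rfl).2.uniq (btw_right _ _) (by rw [(hγ (2 * m) le_rfl).1, h])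
  have hdist : ∀ r s, r ≤ s → s ≤ 2 * m → nd (γ r) (γ s) = s - r := by
    intro r s hrs hs
    obtain ⟨a1, a2⟩ := hγ r (by omega)
    obtain ⟨b1, b2⟩ := hγ s hs
    have := fourpt y (e * (e * y)) (γ r) (γ s)
    have := nd_comm (γ r) (e * (e * y))
    have := nd_comm (γ s) (e * (e * y))
    have := nd_tri y (γ r) (γ s)
    unfold Btw at a2 b2
    omega
  have hper : ∀ r, r ≤ m → γ (r + m) = e * γ r := by
    intro r hr
    have d1 := hdist 0 r (by omega) (by omega)
    have d2 := hdist r m hr (by omega)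
    rw [g0] at d1; rw [gm] at d2
    have e1 : Btw (e * y) (e * γ r) (e * (e * y)) := by
      unfold Btw; rw [nd_mul, nd_mul, nd_mul]; omega
    refine Btw.uniq (hγ (r + m) (by omega)).2 ?_ ?_
    · have := hmid.symm.trans e1.symm; exact this.symm
    · rw [(hγ (r + m) (by omega)).1]
      have t := hmid.symm.trans' e1.symm
      have t2 : Btw y (e * y) (e * γ r) := t.symm
      unfold Btw at t2; rw [nd_mul] at t2; omega
  let f : ℤ → F := fun c => e ^ (c / (m : ℤ)) * γ (c % (m : ℤ)).toNat
  have hmz : (m : ℤ) ≠ 0 := by omega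
  have hfper : ∀ c, e * f c = f (c + m) := fun c => by
    simp only [f]
    rw [Int.add_ediv_of_dvd_right (dvd_refl _), Int.ediv_self hmz, Int.add_emod_right, zpow_add,
      zpow_one, ← mul_assoc, ← zpow_one_add, add_comm 1 _, zpow_add, zpow_one]
  have hf0 : ∀ s : ℕ, s < m → f s = γ s := fun s hs => by
    simp only [f]
    rw [Int.ediv_eq_zero_of_lt (by omega) (by omega), Int.emod_eq_of_lt (by omega) (by omega)]
    simp
  have hf1 : ∀ s : ℕ, s ≤ 2 * m → f s = γ s := by
    intro s hs
    induction s using Nat.strong_induction_on with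
    | _ s ih =>
      by_cases h1 : s < m
      · exact hf0 s h1
      · have h2 := ih (s - m) (by omega) (by omega)
        rw [show (s : ℤ) = ((s - m : ℕ) : ℤ) + m by omega, ← hfper, h2, ← hper _ (by omega)]
        congr 1; omega
  have hq : ∀ (d : ℕ), d ≤ 2 → d ≤ m + 1 → ∀ a, nd (f a) (f (a + d)) = d := by
    intro d hd hd'
    refine PLine.int_periodic 0 h0 (fun c hc1 hc2 => ?_) fun c => ?_
    · lift c to ℕ using hc1
      rw [show (c : ℤ) + d = ((c + d : ℕ) : ℤ) by push_cast; ring, hf1 c (by omega),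
        hf1 (c + d) (by omega), hdist c (c + d) (by omega) (by omega)]
      omega
    · rw [show c + (m : ℤ) + d = c + d + m by ring, ← hfper, ← hfper, nd_mul]
  refine ⟨⟨f, e, m, h0, iso_of_local f (fun a => by simpa using hq 1 (by omega) (by omega) a)
    (fun a => by simpa using hq 2 (by omega) (by omega) a), hfper⟩, rfl, rfl, ?_⟩
  have := hf0 0 h0
  rw [g0] at this; exact_mod_cast this

theorem sq_ne_one {s : F} (hs : s ≠ 1) : s * s ≠ 1 := by
  intro h
  exact (not_isOfFinOrder_of_isMulTorsionFree hs)
    (isOfFinOrder_iff_pow_eq_one.2 ⟨2, by norm_num, by rw [sq, h]⟩)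

/-- A point of minimal displacement lies on the axis. -/
theorem min_disp {s p : F} (hs : s ≠ 1) (hp : ∀ q, nd p (s * p) ≤ nd q (s * q)) :
    nd p (s * (s * p)) = 2 * nd p (s * p) := by
  obtain ⟨o, h1, h2, h3⟩ := exists_median (s * p) p (s * (s * p))
  have hm : nd p (s * p) ≠ 0 := fun h => hs (by
    have := nd_eq_zero.1 h
    exact (mul_eq_right.1 this.symm))
  have e1 : nd (s * p) (s * (s * p)) = nd p (s * p) := nd_mul _ _ _
  have e2 := nd_comm (s * p) p
  by_cases hr : nd (s * p) o = 0
  · have := nd_eq_zero.1 hr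
    rw [← this] at h3
    omega
  exfalso
  obtain ⟨u, hu1, hu2⟩ := exists_btw (s * p) o 1 (by omega)
  have b1 : Btw (s * p) u p := Btw.trans (z := o) h1 hu2
  have b2 : Btw (s * p) u (s * (s * p)) := Btw.trans (z := o) h2 hu2
  have b3 : Btw p (s⁻¹ * u) (s * p) := by
    have := b2.mul s⁻¹; simpa using this
  have b1' := b1.symm
  have d3 : nd p (s⁻¹ * u) = 1 := by
    rw [← nd_mul s]; simpa using hu1
  have hmin := hp (s⁻¹ * u)
  rw [mul_inv_cancel_left] at hmin
  have := fourpt p (s * p) (s⁻¹ * u) u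
  have := nd_comm (s * p) u
  have := nd_comm (s * p) (s⁻¹ * u)
  unfold Btw at b3 b1'
  by_cases hm1 : nd p (s * p) = 1
  · -- displacement one: `s` swaps `p` and `s * p`
    have hu : p = u := nd_eq_zero.1 (by omega)
    have hu' : s⁻¹ * u = s * p := nd_eq_zero.1 (by omega)
    apply sq_ne_one hs
    have : u = s * (s * p) := by rw [← hu', mul_inv_cancel_left]
    rw [← hu, ← mul_assoc] at this
    exact mul_eq_right.1 this.symm
  · omega

theorem exists_min_disp (s : F) : ∃ p, ∀ q, nd p (s * p) ≤ nd q (s * q) := by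
  have hne : (Set.range fun p => nd p (s * p)).Nonempty := ⟨_, 1, rfl⟩
  obtain ⟨p, hp⟩ := Nat.sInf_mem hne
  exact ⟨p, fun b => by rw [show nd p (s * p) = _ from hp]; exact Nat.sInf_le ⟨b, rfl⟩⟩

theorem exists_axis_of_min {s p : F} (hs : s ≠ 1) (hp : ∀ q, nd p (s * p) ≤ nd q (s * q)) :
    ∃ ℓ : PLine, ℓ.w = s ∧ ℓ.τ = nd p (s * p) ∧ ℓ.f 0 = p := by
  refine exists_axis s p ?_ (min_disp hs hp)
  rw [Nat.pos_iff_ne_zero]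
  exact fun h => hs (mul_eq_right.1 (nd_eq_zero.1 h).symm)

theorem exists_axis_of_ne_one {s : F} (hs : s ≠ 1) :
    ∃ ℓ : PLine, ℓ.w = s ∧ ℓ.τ ≤ s.norm := by
  obtain ⟨p, hp⟩ := exists_min_disp s
  obtain ⟨ℓ, h1, h2, -⟩ := exists_axis_of_min hs hp
  refine ⟨ℓ, h1, ?_⟩
  have := hp 1
  rw [mul_one, nd_one] at this
  omega

theorem norm_of_zpow (k : Fin 2) (a : ℤ) : (FreeGroup.of k ^ a : F).norm = a.natAbs := by
  rcases Int.eq_nat_or_neg a with ⟨m, rfl | rfl⟩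
  · rw [zpow_natCast, FreeGroup.norm_of_pow]; simp
  · rw [zpow_neg, zpow_natCast, FreeGroup.norm_inv_eq, FreeGroup.norm_of_pow]; simp

/-- The axis through `x` of a conjugate of a generator. -/
def letterLine (x : F) (k : Fin 2) : PLine where
  f a := x * FreeGroup.of k ^ a
  w := x * FreeGroup.of k * x⁻¹
  τ := 1
  pos := one_pos
  iso a b := by
    rw [nd_mul, nd, ← zpow_neg, ← zpow_add, norm_of_zpow]; omega
  per a := by
    rw [zpow_add]; group

theorem exists_letter_step {x y : F} (h : nd x y = 1) :
    ∃ k, x ∈ Set.range (letterLine x k).f ∧ y ∈ Set.range (letterLine x k).f := by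
  obtain ⟨a, ha⟩ := List.length_eq_one_iff.1 (show (x⁻¹ * y).toWord.length = 1 from h)
  have hy : y = x * FreeGroup.mk [a] := by rw [← ha, FreeGroup.mk_toWord, mul_inv_cancel_left]
  refine ⟨a.1, ⟨0, by simp [letterLine]⟩, ?_⟩
  obtain ⟨k, b⟩ := a
  cases b
  · refine ⟨-1, ?_⟩
    rw [hy]; simp [letterLine, FreeGroup.of, FreeGroup.inv_mk, FreeGroup.invRev]
  · exact ⟨1, by rw [hy]; simp [letterLine, FreeGroup.of]⟩

end TB

/-! ### Windmills and the normal subgroup -/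

namespace TB
open PLine

variable {i n : ℕ}

/-- The normal subgroup generated by the `n`-th powers of all elements translating a line of
period at most `i`. -/
def NN (i n : ℕ) : Subgroup F :=
  Subgroup.closure {x | ∃ (ℓ : PLine) (g : F), ℓ.τ ≤ i ∧ ℓ.St g ∧ x = g ^ n}

instance NN_normal (i n : ℕ) : (NN i n).Normal := by
  refine ⟨fun x hx k => ?_⟩
  induction hx using Subgroup.closure_induction with
  | mem x hx =>
    obtain ⟨ℓ, g, h1, ⟨t, h2⟩, rfl⟩ := hx
    exact Subgroup.subset_closure ⟨ℓ.smul k, k * g * k⁻¹, h1, ⟨t, h2.conj k⟩, by rw [conj_pow]⟩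
  | one => simp [Subgroup.one_mem]
  | mul x y _ _ hx hy =>
    have := Subgroup.mul_mem _ hx hy
    rwa [show k * x * k⁻¹ * (k * y * k⁻¹) = k * (x * y) * k⁻¹ by group] at this
  | inv x _ hx =>
    have := Subgroup.inv_mem _ hx
    rwa [show (k * x * k⁻¹)⁻¹ = k * x⁻¹ * k⁻¹ by group] at this

theorem pow_mem_NN {ℓ : PLine} {g : F} (h : ℓ.τ ≤ i) (hg : ℓ.St g) : g ^ n ∈ NN i n :=
  Subgroup.subset_closure ⟨ℓ, g, h, hg, rfl⟩

/-- `h` is shortened by a rotation: some `n`-th power `g ^ n` of a translation of a line of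
period at most `i` brings the projection of `h` close to the projection of `1`. -/
def Good (i n : ℕ) (h : F) : Prop :=
  ∃ (ℓ : PLine) (g : F) (t : ℤ), ℓ.τ ≤ i ∧ ℓ.IsTr g t ∧ t ≠ 0 ∧
    (ℓ.proj h + n * t - ℓ.proj 1).natAbs ≤ 6 * i

/-- All projections of `Y` to `ℓ` are close to each other. -/
def Small (i : ℕ) (Y : Set F) (ℓ : PLine) : Prop :=
  ∀ x ∈ Y, ∀ y ∈ Y, (ℓ.proj x - ℓ.proj y).natAbs ≤ 4 * i

/-- A windmill: a convex set `Y` invariant under a subgroup `M` of `NN i n` such that each line of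
period at most `i` is either contained in `Y`, its rotations being in `M`, or has small overlap
with `Y`. -/
structure WM (i n : ℕ) (Y : Set F) (M : Subgroup F) : Prop where
  conv : ∀ x ∈ Y, ∀ y ∈ Y, ∀ z, Btw x z y → z ∈ Y
  one : (1 : F) ∈ Y
  inv : ∀ m ∈ M, ∀ y ∈ Y, m * y ∈ Y
  good : ∀ h ∈ M, h ≠ 1 → Good i n h
  dich : ∀ ℓ : PLine, ℓ.τ ≤ i →
    ((∀ g, ℓ.St g → g ^ n ∈ M) ∧ Set.range ℓ.f ⊆ Y) ∨ Small i Y ℓ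

/-- The lines meeting the windmill that have not yet been absorbed. -/
def EE (i : ℕ) (Y : Set F) (ℓ : PLine) : Prop := ℓ.τ ≤ i ∧ Small i Y ℓ ∧ ∃ c, ℓ.f c ∈ Y

/-- The enlarged subgroup. -/
def MM (i n : ℕ) (Y : Set F) (M : Subgroup F) : Subgroup F :=
  Subgroup.closure ((M : Set F) ∪ {x | ∃ ℓ g, EE i Y ℓ ∧ ℓ.St g ∧ x = g ^ n})

/-- The windmill together with the lines meeting it. -/
def BB (i : ℕ) (Y : Set F) : Set F := Y ∪ {x | ∃ ℓ, EE i Y ℓ ∧ x ∈ Set.range ℓ.f}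

/-- The enlarged windmill. -/
def YY (i n : ℕ) (Y : Set F) (M : Subgroup F) : Set F :=
  {x | ∃ h ∈ MM i n Y M, ∃ b ∈ BB i Y, x = h * b}

/-- Normal forms of points: `PN B ℓ z` says that `z` is obtained from a point of `B` by a
reduced product of rotations, the last of which is about the line `ℓ`. -/
inductive PN (i n : ℕ) (Y B : Set F) : PLine → F → Prop
  | base (ℓ : PLine) (g : F) (t : ℤ) (y : F) : EE i Y ℓ → ℓ.IsTr g t → t ≠ 0 → y ∈ B →
      (y ∈ Y ∨ ∃ ℓ', EE i Y ℓ' ∧ ¬ Same ℓ ℓ' ∧ y ∈ Set.range ℓ'.f) → PN i n Y B ℓ (g ^ n * y)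
  | cons (ℓ ℓ' : PLine) (g : F) (t : ℤ) (z : F) : EE i Y ℓ → ℓ.IsTr g t → t ≠ 0 → ¬ Same ℓ ℓ' →
      PN i n Y B ℓ' z → PN i n Y B ℓ (g ^ n * z)

theorem not_same_lt {ℓ ℓ' : PLine} (h : ℓ.τ ≤ i) (h' : ℓ'.τ ≤ i) (hs : ¬ Same ℓ ℓ') (a b : ℤ) :
    (ℓ.proj (ℓ'.f a) - ℓ.proj (ℓ'.f b)).natAbs < 2 * i := by
  by_contra hh
  exact hs (same_of_overlap ℓ ℓ' (a := a) (b := b) (by omega))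

theorem EE.line_close {Y : Set F} {ℓ ℓ' : PLine} (h : EE i Y ℓ) (h' : EE i Y ℓ')
    (hs : ¬ Same ℓ ℓ') {y : F} (hy : y ∈ Y) (a : ℤ) :
    (ℓ.proj (ℓ'.f a) - ℓ.proj y).natAbs ≤ 6 * i := by
  obtain ⟨c, hc⟩ := h'.2.2
  have h1 := not_same_lt h.1 h'.1 hs a c
  have h2 := h.2.1 _ hc _ hy
  omega

theorem PN.ee {Y B : Set F} {ℓ : PLine} {z : F} (h : PN i n Y B ℓ z) : EE i Y ℓ := by
  cases h <;> assumption

theorem PN.key (hn : 14 * i ≤ n) {Y B : Set F} {ℓ : PLine} {z : F} (h : PN i n Y B ℓ z) :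
    ∃ g t z', ℓ.IsTr g t ∧ t ≠ 0 ∧ z = g ^ n * z' ∧
      ∀ y ∈ Y, (ℓ.proj z' - ℓ.proj y).natAbs ≤ 6 * i := by
  induction h with
  | base ℓ g t y hE hg ht hyB hy =>
    refine ⟨g, t, y, hg, ht, rfl, fun y0 hy0 => ?_⟩
    rcases hy with hy | ⟨ℓ', hE', hs, ⟨a, rfl⟩⟩
    · have := hE.2.1 _ hy _ hy0; omega
    · exact hE.line_close hE' hs hy0 a
  | cons ℓ ℓ' g t z hE hg ht hs hz ih =>
    refine ⟨g, t, z, hg, ht, rfl, fun y0 hy0 => ?_⟩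
    have hE' := hz.ee
    obtain ⟨g', t', z', hg', ht', rfl, hz'⟩ := ih
    have hi : 1 ≤ i := by have := hE.1; have := ℓ.pos; omega
    rcases behrstock ℓ ℓ' (g' ^ n * z') with hb | hb
    · rw [hb]; exact hE.line_close hE' hs hy0 _
    · exfalso
      have h1 := hE'.line_close hE (fun h => hs h.symm) hy0 (ℓ.proj (g' ^ n * z'))
      rw [← hb, (hg'.pow n).proj] at h1
      have h2 := hz' y0 hy0
      have h3 : n * 1 ≤ ((n : ℤ) * t').natAbs := by
        rw [Int.natAbs_mul, Int.natAbs_natCast]; exact Nat.mul_le_mul_left _ (by omega)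
      omega

theorem EE.smul {Y : Set F} {M : Subgroup F} (hw : WM i n Y M) {ℓ : PLine} (h : EE i Y ℓ)
    {m : F} (hm : m ∈ M) : EE i Y (ℓ.smul m) := by
  obtain ⟨h1, h2, c, h3⟩ := h
  refine ⟨h1, fun x hx y hy => ?_, c, hw.inv m hm _ h3⟩
  rw [proj_smul', proj_smul']
  exact h2 _ (hw.inv _ (M.inv_mem hm) _ hx) _ (hw.inv _ (M.inv_mem hm) _ hy)

theorem not_same_smul {ℓ ℓ' : PLine} (h : ¬ Same ℓ ℓ') (g : F) :
    ¬ Same (ℓ.smul g) (ℓ'.smul g) := fun hh => h (by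
  have := same_smul_inv hh
  refine this.trans ((smul_smul_same _ _ _).trans ?_)
  unfold Same; congr 1; funext a; simp [smul_f])

theorem PN.smul {Y B : Set F} {M : Subgroup F} (hw : WM i n Y M)
    (hB : ∀ m ∈ M, ∀ b ∈ B, m * b ∈ B) {ℓ : PLine} {z : F} (h : PN i n Y B ℓ z)
    {m : F} (hm : m ∈ M) : PN i n Y B (ℓ.smul m) (m * z) := by
  induction h with
  | base ℓ g t y hE hg ht hyB hy =>
    rw [show m * (g ^ n * y) = (m * g * m⁻¹) ^ n * (m * y) by rw [conj_pow]; group]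
    refine PN.base _ _ t _ (hE.smul hw hm) (hg.conj m) ht (hB m hm _ hyB) ?_
    rcases hy with hy | ⟨ℓ', hE', hs, ⟨a, rfl⟩⟩
    · exact Or.inl (hw.inv m hm _ hy)
    · exact Or.inr ⟨ℓ'.smul m, hE'.smul hw hm, not_same_smul hs m, a, rfl⟩
  | cons ℓ ℓ' g t z hE hg ht hs hz ih =>
    rw [show m * (g ^ n * z) = (m * g * m⁻¹) ^ n * (m * z) by rw [conj_pow]; group]
    exact PN.cons _ _ _ t _ (hE.smul hw hm) (hg.conj m) ht (not_same_smul hs m) ih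

/-- Multiplying a point in normal form by a rotation. -/
theorem PN.rot {Y B : Set F} (hB : ∀ z ∈ B, z ∈ Y ∨ ∃ ℓ, EE i Y ℓ ∧ z ∈ Set.range ℓ.f ∧
    Set.range ℓ.f ⊆ B) {ℓ : PLine} {g : F} (hE : EE i Y ℓ) (hg : ℓ.St g) {z : F}
    (hz : z ∈ B ∨ ∃ ℓ', PN i n Y B ℓ' z) :
    g ^ n * z ∈ B ∨ ∃ ℓ', PN i n Y B ℓ' (g ^ n * z) := by
  obtain ⟨t, hg⟩ := hg
  by_cases ht : t = 0
  · subst ht; rw [hg.eq_one]; simpa using hz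
  rcases hz with hz | ⟨ℓ₁, hz⟩
  · rcases hB z hz with hy | ⟨ℓ₁, hE₁, hz₁, hsub⟩
    · exact Or.inr ⟨ℓ, .base ℓ g t z hE hg ht hz (Or.inl hy)⟩
    · by_cases hs : Same ℓ ℓ₁
      · left
        apply hsub
        rw [← hs] at hz₁ ⊢
        obtain ⟨a, rfl⟩ := hz₁
        exact ⟨_, ((hg.pow n) a).symm⟩
      · exact Or.inr ⟨ℓ, .base ℓ g t z hE hg ht hz (Or.inr ⟨ℓ₁, hE₁, hs, hz₁⟩)⟩
  · by_cases hs : Same ℓ ℓ₁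
    · obtain ⟨t₁, hg₁⟩ := St.of_same hs ⟨t, hg⟩
      cases hz with
      | base ℓ₁ g' t' y hE' hg' ht' hyB hy =>
        rw [← mul_assoc, ← (show Commute g g' from hg₁.comm hg').mul_pow]
        by_cases h0 : t₁ + t' = 0
        · have := hg₁.mul hg'; rw [h0] at this; rw [this.eq_one]; left; simpa using hyB
        · exact Or.inr ⟨ℓ₁, .base ℓ₁ _ _ y hE' (hg₁.mul hg') h0 hyB hy⟩
      | cons ℓ₁ ℓ₂ g' t' z' hE' hg' ht' hs' hz' =>
        rw [← mul_assoc, ← (show Commute g g' from hg₁.comm hg').mul_pow]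
        by_cases h0 : t₁ + t' = 0
        · have := hg₁.mul hg'; rw [h0] at this; rw [this.eq_one]
          exact Or.inr ⟨ℓ₂, by simpa using hz'⟩
        · exact Or.inr ⟨ℓ₁, .cons ℓ₁ ℓ₂ _ _ z' hE' (hg₁.mul hg') h0 hs' hz'⟩
    · exact Or.inr ⟨ℓ, .cons ℓ ℓ₁ g t z hE hg ht hs hz⟩

theorem PN.all {Y B : Set F} {M : Subgroup F} (hw : WM i n Y M)
    (hM : ∀ m ∈ M, ∀ b ∈ B, m * b ∈ B)
    (hB : ∀ z ∈ B, z ∈ Y ∨ ∃ ℓ, EE i Y ℓ ∧ z ∈ Set.range ℓ.f ∧ Set.range ℓ.f ⊆ B)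
    {h b : F} (hh : h ∈ MM i n Y M) (hb : b ∈ B) : h * b ∈ B ∨ ∃ ℓ, PN i n Y B ℓ (h * b) := by
  have hm : ∀ m ∈ M, ∀ z, (z ∈ B ∨ ∃ ℓ, PN i n Y B ℓ z) → (m * z ∈ B ∨ ∃ ℓ, PN i n Y B ℓ (m * z)) := by
    rintro m hm z (hz | ⟨ℓ, hz⟩)
    · exact Or.inl (hM m hm z hz)
    · exact Or.inr ⟨_, hz.smul hw hM hm⟩
  unfold MM at hh
  induction hh using Subgroup.closure_induction_left with
  | one => left; simpa using hb
  | mul_left x hx y _ ih =>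
    rw [mul_assoc]
    rcases hx with hx | ⟨ℓ, g, hE, hg, rfl⟩
    · exact hm x hx _ ih
    · exact PN.rot hB hE hg ih
  | inv_mul_cancel x hx y _ ih =>
    rw [mul_assoc]
    rcases hx with hx | ⟨ℓ, g, hE, ⟨t, hg⟩, rfl⟩
    · exact hm _ (M.inv_mem hx) _ ih
    · rw [← inv_pow]; exact PN.rot hB hE ⟨_, hg.inv⟩ ih

section step
variable {Y : Set F} {M : Subgroup F}

theorem BB_spec (z : F) (hz : z ∈ BB i Y) :
    z ∈ Y ∨ ∃ ℓ, EE i Y ℓ ∧ z ∈ Set.range ℓ.f ∧ Set.range ℓ.f ⊆ BB i Y := by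
  rcases hz with hz | ⟨ℓ, hE, hz⟩
  · exact Or.inl hz
  · exact Or.inr ⟨ℓ, hE, hz, fun x hx => Or.inr ⟨ℓ, hE, hx⟩⟩

theorem BB_inv (hw : WM i n Y M) (m : F) (hm : m ∈ M) (b : F) (hb : b ∈ BB i Y) :
    m * b ∈ BB i Y := by
  rcases hb with hb | ⟨ℓ, hE, ⟨a, rfl⟩⟩
  · exact Or.inl (hw.inv m hm b hb)
  · exact Or.inr ⟨ℓ.smul m, hE.smul hw hm, a, rfl⟩

theorem M_le_MM : M ≤ MM i n Y M := fun _ hx => Subgroup.subset_closure (Or.inl hx)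

theorem rot_mem_MM {ℓ : PLine} {g : F} (hE : EE i Y ℓ) (hg : ℓ.St g) : g ^ n ∈ MM i n Y M :=
  Subgroup.subset_closure (Or.inr ⟨ℓ, g, hE, hg, rfl⟩)

theorem YY_inv (h : F) (hh : h ∈ MM i n Y M) (y : F) (hy : y ∈ YY i n Y M) :
    h * y ∈ YY i n Y M := by
  obtain ⟨k, hk, b, hb, rfl⟩ := hy
  exact ⟨h * k, mul_mem hh hk, b, hb, by rw [mul_assoc]⟩

theorem BB_subset_YY : BB i Y ⊆ YY i n Y M := fun b hb => ⟨1, one_mem _, b, hb, by simp⟩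

theorem btw_BB_subset (hw : WM i n Y M) {o x z : F} (ho : o ∈ Y) (hx : x ∈ BB i Y)
    (hz : Btw o z x) : z ∈ BB i Y := by
  rcases hx with hx | ⟨ℓ, hE, ⟨a, rfl⟩⟩
  · exact Or.inl (hw.conv o ho x hx z hz)
  · obtain ⟨c, hc⟩ := hE.2.2
    rcases hz.split (ℓ.f c) with h | h
    · exact Or.inl (hw.conv o ho _ hc z h)
    · obtain ⟨d, rfl, -⟩ := ℓ.mem_of_btw h
      exact Or.inr ⟨ℓ, hE, d, rfl⟩

theorem PN.mem_YY {ℓ : PLine} {z : F} (h : PN i n Y (BB i Y) ℓ z) : z ∈ YY i n Y M := by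
  induction h with
  | base ℓ g t y hE hg ht hyB hy =>
    exact YY_inv _ (rot_mem_MM hE ⟨t, hg⟩) _ (BB_subset_YY hyB)
  | cons ℓ ℓ' g t z hE hg ht hs hz ih => exact YY_inv _ (rot_mem_MM hE ⟨t, hg⟩) _ ih

theorem PN.star (hw : WM i n Y M) {ℓ : PLine} {x : F} (h : PN i n Y (BB i Y) ℓ x) :
    ∀ o ∈ Y, ∀ z, Btw o z x → z ∈ YY i n Y M := by
  have aux : ∀ (ℓ : PLine) (g : F) (t : ℤ) (x : F), EE i Y ℓ → ℓ.IsTr g t →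
      (∀ o ∈ Y, ∀ z, Btw o z x → z ∈ YY i n Y M) →
      ∀ o ∈ Y, ∀ z, Btw o z (g ^ n * x) → z ∈ YY i n Y M := by
    intro ℓ g t x hE hg ih o ho z hz
    obtain ⟨c, hc⟩ := hE.2.2
    rcases hz.split (ℓ.f c) with h | h
    · exact BB_subset_YY (Or.inl (hw.conv o ho _ hc z h))
    rcases h.split (g ^ n * ℓ.f c) with h | h
    · rw [hg.pow n] at h
      obtain ⟨d, rfl, -⟩ := ℓ.mem_of_btw h
      exact BB_subset_YY (Or.inr ⟨ℓ, hE, d, rfl⟩)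
    · have h' := h.mul (g ^ n)⁻¹
      simp only [inv_mul_cancel_left] at h'
      have := YY_inv _ (rot_mem_MM (M := M) (n := n) hE ⟨t, hg⟩) _ (ih _ hc _ h')
      rwa [mul_inv_cancel_left] at this
  induction h with
  | base ℓ g t y hE hg ht hyB hy =>
    exact aux ℓ g t y hE hg fun o ho z hz => BB_subset_YY (btw_BB_subset hw ho hyB hz)
  | cons ℓ ℓ' g t z hE hg ht hs hz ih => exact aux ℓ g t z hE hg ih

theorem YY_cases (hw : WM i n Y M) {x : F} (hx : x ∈ YY i n Y M) :
    x ∈ BB i Y ∨ ∃ ℓ, PN i n Y (BB i Y) ℓ x := by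
  obtain ⟨h, hh, b, hb, rfl⟩ := hx
  exact PN.all hw (BB_inv hw) BB_spec hh hb

theorem YY_star (hw : WM i n Y M) {o x z : F} (ho : o ∈ Y) (hx : x ∈ YY i n Y M)
    (hz : Btw o z x) : z ∈ YY i n Y M := by
  rcases YY_cases hw hx with h | ⟨ℓ, h⟩
  · exact BB_subset_YY (btw_BB_subset hw ho h hz)
  · exact h.star hw o ho z hz

theorem YY_conv (hw : WM i n Y M) (x : F) (hx : x ∈ YY i n Y M) (y : F) (hy : y ∈ YY i n Y M)
    (z : F) (hz : Btw x z y) : z ∈ YY i n Y M := by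
  obtain ⟨h, hh, b, hb, rfl⟩ := hx
  have hz' := hz.mul h⁻¹
  rw [inv_mul_cancel_left] at hz'
  have hy' := YY_inv _ (inv_mem hh) _ hy
  suffices h⁻¹ * z ∈ YY i n Y M by
    have := YY_inv _ hh _ this; rwa [mul_inv_cancel_left] at this
  rcases hb with hb | ⟨ℓ, hE, ⟨a, rfl⟩⟩
  · exact YY_star hw hb hy' hz'
  · obtain ⟨c, hc⟩ := hE.2.2
    rcases hz'.split (ℓ.f c) with h1 | h1
    · obtain ⟨d, hd, -⟩ := ℓ.mem_of_btw h1
      exact BB_subset_YY (Or.inr ⟨ℓ, hE, d, hd.symm⟩)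
    · exact YY_star hw hc hy' h1

/-- A line none of whose translates meets `Y`. -/
def Away (i n : ℕ) (Y : Set F) (M : Subgroup F) (ℓ : PLine) : Prop :=
  ℓ.τ ≤ i ∧ ∀ h ∈ MM i n Y M, ∀ c, h * ℓ.f c ∉ Y

theorem Away.smul {ℓ : PLine} (h : Away i n Y M ℓ) {k : F} (hk : k ∈ MM i n Y M) :
    Away i n Y M (ℓ.smul k) :=
  ⟨h.1, fun g hg c => by rw [smul_f, ← mul_assoc]; exact h.2 _ (mul_mem hg hk) c⟩

theorem Away.not_mem {ℓ : PLine} (h : Away i n Y M ℓ) (c : ℤ) : ℓ.f c ∉ Y := by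
  have := h.2 1 (one_mem _) c; rwa [one_mul] at this

theorem Away.not_same {ℓ ℓ' : PLine} (h : Away i n Y M ℓ) (h' : EE i Y ℓ') : ¬ Same ℓ ℓ' := by
  intro hs
  obtain ⟨c, hc⟩ := h'.2.2
  obtain ⟨d, hd⟩ : ℓ'.f c ∈ Set.range ℓ.f := by rw [hs]; exact ⟨c, rfl⟩
  exact h.not_mem d (hd ▸ hc)

theorem Away.common_lt {ℓ ℓ' : PLine} (h : Away i n Y M ℓ) (h' : EE i Y ℓ') {a b : ℤ}
    (ha : ℓ.f a ∈ Set.range ℓ'.f) (hb : ℓ.f b ∈ Set.range ℓ'.f) : (a - b).natAbs < 2 * i := by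
  obtain ⟨c, hc⟩ := ha
  obtain ⟨d, hd⟩ := hb
  have := not_same_lt h.1 h'.1 (h.not_same h') c d
  rwa [hc, hd, proj_f, proj_f] at this

theorem Away.bb_bb (hw : WM i n Y M) {ℓ : PLine} (h : Away i n Y M ℓ) {a b : ℤ}
    (ha : ℓ.f a ∈ BB i Y) (hb : ℓ.f b ∈ BB i Y) (hab : a ≤ b) : (a - b).natAbs < 4 * i := by
  rcases ha with ha | ⟨ℓ₁, hE₁, ha⟩
  · exact (h.not_mem a ha).elim
  rcases hb with hb | ⟨ℓ₂, hE₂, hb⟩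
  · exact (h.not_mem b hb).elim
  by_contra hlt
  obtain ⟨c₁, hc₁⟩ := hE₁.2.2
  obtain ⟨c₂, hc₂⟩ := hE₂.2.2
  have hbt : Btw (ℓ.f a) (ℓ.f (a + 2 * i)) (ℓ.f b) := by
    unfold Btw; rw [ℓ.iso, ℓ.iso, ℓ.iso]; omega
  obtain ⟨a', ha'⟩ := ha
  obtain ⟨b', hb'⟩ := hb
  rcases hbt.split (ℓ₁.f c₁) with h1 | h1
  · rw [← ha'] at h1
    obtain ⟨d, hd, -⟩ := ℓ₁.mem_of_btw h1
    have := h.common_lt hE₁ ⟨a', ha'⟩ ⟨d, hd.symm⟩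
    omega
  rcases h1.split (ℓ₂.f c₂) with h2 | h2
  · exact h.not_mem _ (hw.conv _ hc₁ _ hc₂ _ h2)
  · rw [← hb'] at h2
    obtain ⟨d, hd, -⟩ := ℓ₂.mem_of_btw h2
    have := h.common_lt hE₂ ⟨d, hd.symm⟩ ⟨b', hb'⟩
    omega

theorem Away.bb_bb' (hw : WM i n Y M) {ℓ : PLine} (h : Away i n Y M ℓ) {a b : ℤ}
    (ha : ℓ.f a ∈ BB i Y) (hb : ℓ.f b ∈ BB i Y) : (a - b).natAbs < 4 * i := by
  rcases le_total a b with hab | hab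
  · exact h.bb_bb hw ha hb hab
  · have := h.bb_bb hw hb ha hab; omega

theorem Away.line_pn (hn : 14 * i ≤ n) (hi : 1 ≤ i) {ℓ ℓ₀ ℓ₁ : PLine} (hone : (1 : F) ∈ Y)
    (h : Away i n Y M ℓ) {a b : ℤ}
    (hE₀ : EE i Y ℓ₀) (ha : ℓ.f a ∈ Set.range ℓ₀.f) (hb : PN i n Y (BB i Y) ℓ₁ (ℓ.f b))
    (hs : ¬ Same ℓ₁ ℓ₀) : False := by
  have hE₁ := hb.ee
  obtain ⟨g, t, z, hg, ht, hz, hz'⟩ := hb.key hn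
  obtain ⟨c, hc⟩ := ha
  have h1 := hE₁.line_close hE₀ hs hone c
  have h2 := hz' 1 hone
  have h3 := (hg.pow n).proj z
  have h4 : n * 1 ≤ ((n : ℤ) * t).natAbs := by
    rw [Int.natAbs_mul, Int.natAbs_natCast]; exact Nat.mul_le_mul_left _ (by omega)
  rw [← hz] at h3
  rw [hc] at h1
  have := not_same_lt hE₁.1 h.1 (fun hs => h.not_same hE₁ hs.symm) a b
  omega

theorem Away.bound (hn : 14 * i ≤ n) (hi : 1 ≤ i) (hw : WM i n Y M) {ℓ : PLine}
    (h : Away i n Y M ℓ) {a b : ℤ} (ha : ℓ.f a ∈ YY i n Y M) (hb : ℓ.f b ∈ YY i n Y M) :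
    (a - b).natAbs < 4 * i := by
  obtain ⟨k, hk, x, hx, hax⟩ := ha
  -- move `a` into `BB`
  have hk' := inv_mem hk
  have h' := h.smul hk'
  have ha' : (ℓ.smul k⁻¹).f a ∈ BB i Y := by rw [smul_f, hax, inv_mul_cancel_left]; exact hx
  have hb' : (ℓ.smul k⁻¹).f b ∈ YY i n Y M := YY_inv _ hk' _ hb
  generalize ℓ.smul k⁻¹ = m at h' ha' hb'
  rcases YY_cases hw hb' with hb₁ | ⟨ℓ₁, hb₁⟩
  · exact h'.bb_bb' hw ha' hb₁
  rcases ha' with ha₀ | ⟨ℓ₀, hE₀, ha₀⟩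
  · exact (h'.not_mem a ha₀).elim
  by_cases hs : Same ℓ₁ ℓ₀
  swap
  · exact (h'.line_pn hn hi hw.one hE₀ ha₀ hb₁ hs).elim
  -- undo the last rotation
  have key : ∀ (g : F) (t : ℤ) (z : F), EE i Y ℓ₁ → ℓ₁.IsTr g t → m.f b = g ^ n * z →
      Away i n Y M (m.smul (g ^ n)⁻¹) ∧ (m.smul (g ^ n)⁻¹).f a ∈ Set.range ℓ₀.f ∧
      (m.smul (g ^ n)⁻¹).f b = z := by
    intro g t z hE hg hz
    refine ⟨h'.smul (inv_mem (rot_mem_MM hE ⟨t, hg⟩)), ?_, ?_⟩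
    · rw [smul_f]
      rw [← hs] at ha₀ ⊢
      obtain ⟨c, hc⟩ := ha₀
      rw [← hc]
      exact ⟨_, ((hg.pow n).inv c).symm⟩
    · rw [smul_f, hz, inv_mul_cancel_left]
  generalize hx : m.f b = q at hb₁
  cases hb₁ with
  | base _ g t y hE hg ht hyB hy =>
    obtain ⟨k1, k2, k3⟩ := key g t y hE hg hx
    exact k1.bb_bb' hw (Or.inr ⟨ℓ₀, hE₀, k2⟩) (by rw [k3]; exact hyB)
  | cons _ ℓ₂ g t z hE hg ht hs' hz =>
    obtain ⟨k1, k2, k3⟩ := key g t z hE hg hx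
    rw [← k3] at hz
    exact (k1.line_pn hn hi hw.one hE₀ k2 hz fun hh => hs' (hs.trans hh.symm)).elim

/-- A windmill may be enlarged so as to absorb all lines meeting it. -/
theorem WM.step (hn : 14 * i ≤ n) (hi : 1 ≤ i) (hw : WM i n Y M) :
    WM i n (YY i n Y M) (MM i n Y M) where
  conv := YY_conv hw
  one := BB_subset_YY (Or.inl hw.one)
  inv := YY_inv
  good := by
    intro h hh h1
    have := PN.all (B := (M : Set F)) hw (fun m hm b hb => M.mul_mem hm hb)
      (fun z hz => Or.inl (by simpa using hw.inv z hz 1 hw.one)) hh (one_mem M)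
    rw [mul_one] at this
    rcases this with h2 | ⟨ℓ, h2⟩
    · exact hw.good h h2 h1
    · obtain ⟨g, t, z, hg, ht, rfl, hz⟩ := h2.key hn
      refine ⟨ℓ, g⁻¹, -t, h2.ee.1, hg.inv, by omega, ?_⟩
      rw [(hg.pow n).proj]
      have := hz 1 hw.one
      rwa [show ℓ.proj z + (n : ℤ) * t + n * -t - ℓ.proj 1 = ℓ.proj z - ℓ.proj 1 by ring]
  dich := by
    intro ℓ hℓ
    by_cases ha : ∃ h ∈ MM i n Y M, ∃ c, h * ℓ.f c ∈ Y
    · left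
      obtain ⟨h, hh, c, hc⟩ := ha
      have key : (∀ g, (ℓ.smul h).St g → g ^ n ∈ MM i n Y M) ∧
          Set.range (ℓ.smul h).f ⊆ YY i n Y M := by
        rcases hw.dich (ℓ.smul h) hℓ with ⟨d1, d2⟩ | hs
        · exact ⟨fun g hg => M_le_MM (d1 g hg), fun x hx => BB_subset_YY (Or.inl (d2 hx))⟩
        · have hE : EE i Y (ℓ.smul h) := ⟨hℓ, hs, c, hc⟩
          exact ⟨fun g hg => rot_mem_MM hE hg, fun x hx => BB_subset_YY (Or.inr ⟨_, hE, hx⟩)⟩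
      refine ⟨?_, ?_⟩
      · rintro g ⟨t, hg⟩
        have h1 := key.1 _ ⟨t, hg.conj h⟩
        rw [conj_pow] at h1
        have := mul_mem (mul_mem (inv_mem hh) h1) hh
        rwa [show h⁻¹ * (h * g ^ n * h⁻¹) * h = g ^ n by group] at this
      · rintro _ ⟨a, rfl⟩
        have := YY_inv _ (inv_mem hh) _ (key.2 ⟨a, rfl⟩)
        rwa [smul_f, inv_mul_cancel_left] at this
    · right
      push Not at ha
      have hA : Away i n Y M ℓ := ⟨hℓ, fun h hh c => ha h hh c⟩
      intro x hx y hy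
      by_cases hp : ℓ.proj x = ℓ.proj y
      · rw [hp]; simp
      · exact (hA.bound hn hi hw (YY_conv hw x hx y hy _ (ℓ.btw_of_proj hp (by omega)))
          (YY_conv hw x hx y hy _ (ℓ.btw_of_proj hp (by omega)))).le

theorem WM.absorb (hw : WM i n Y M) {ℓ : PLine} (hℓ : ℓ.τ ≤ i) {c : ℤ} (hc : ℓ.f c ∈ Y) :
    (∀ g, ℓ.St g → g ^ n ∈ MM i n Y M) ∧ Set.range ℓ.f ⊆ YY i n Y M := by
  rcases hw.dich ℓ hℓ with ⟨d1, d2⟩ | hs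
  · exact ⟨fun g hg => M_le_MM (d1 g hg), fun x hx => BB_subset_YY (Or.inl (d2 hx))⟩
  · have hE : EE i Y ℓ := ⟨hℓ, hs, c, hc⟩
    exact ⟨fun g hg => rot_mem_MM hE hg, fun x hx => BB_subset_YY (Or.inr ⟨_, hE, hx⟩)⟩

end step

/-- The increasing sequence of windmills starting with the trivial one. -/
def wmSeq (i n : ℕ) : ℕ → Set F × Subgroup F
  | 0 => ({1}, ⊥)
  | k + 1 => (YY i n (wmSeq i n k).1 (wmSeq i n k).2, MM i n (wmSeq i n k).1 (wmSeq i n k).2)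

theorem wmSeq_wm (hn : 14 * i ≤ n) (hi : 1 ≤ i) (k : ℕ) :
    WM i n (wmSeq i n k).1 (wmSeq i n k).2 := by
  induction k with
  | zero =>
    refine ⟨?_, rfl, ?_, ?_, ?_⟩
    · rintro x rfl y rfl z hz
      have hz : nd 1 z + nd z 1 = nd 1 1 := hz
      rw [nd_self] at hz
      exact (nd_eq_zero.1 (show nd 1 z = 0 by omega)).symm
    · rintro m hm y rfl
      rw [show m = 1 from Subgroup.mem_bot.1 hm, mul_one]; rfl
    · intro h hh h1
      exact (h1 (Subgroup.mem_bot.1 hh)).elim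
    · intro ℓ hℓ
      right
      rintro x rfl y rfl
      simp
  | succ k ih => exact ih.step hn hi

theorem wmSeq_mono (k l : ℕ) (h : k ≤ l) : (wmSeq i n k).2 ≤ (wmSeq i n l).2 := by
  induction h with
  | refl => exact le_rfl
  | step _ ih => exact ih.trans M_le_MM

theorem ball_subset_wmSeq (hn : 14 * i ≤ n) (hi : 1 ≤ i) (k : ℕ) (x : F) (hx : nd 1 x = k) :
    x ∈ (wmSeq i n k).1 := by
  induction k generalizing x with
  | zero => exact (nd_eq_zero.1 hx).symm
  | succ k ih =>
    obtain ⟨z, hz1, hz2⟩ := exists_btw 1 x k (by omega)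
    obtain ⟨a, ⟨c, hc⟩, h2⟩ := exists_letter_step (x := z) (y := x) (by omega)
    exact ((wmSeq_wm hn hi k).absorb (ℓ := letterLine z a) (by exact hi)
      (c := c) (by rw [hc]; exact ih z hz1)).2 h2

/-- Every nontrivial element of `NN i n` is shortened by a rotation. -/
theorem good_of_mem_NN (hn : 14 * i ≤ n) (hi : 1 ≤ i) {h : F} (hh : h ∈ NN i n) (h1 : h ≠ 1) :
    Good i n h := by
  have key : ∃ k, h ∈ (wmSeq i n k).2 := by
    clear h1
    induction hh using Subgroup.closure_induction with
    | mem x hx =>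
      obtain ⟨ℓ, g, h1, h2, rfl⟩ := hx
      refine ⟨nd 1 (ℓ.f 0) + 1, ?_⟩
      exact ((wmSeq_wm hn hi _).absorb h1 (ball_subset_wmSeq hn hi _ (ℓ.f 0) rfl)).1 g h2
    | one => exact ⟨0, one_mem _⟩
    | mul x y _ _ hx hy =>
      obtain ⟨k, hk⟩ := hx
      obtain ⟨l, hl⟩ := hy
      exact ⟨max k l, mul_mem (wmSeq_mono k _ (le_max_left _ _) hk)
        (wmSeq_mono l _ (le_max_right _ _) hl)⟩
    | inv x _ hx => exact ⟨hx.choose, inv_mem hx.choose_spec⟩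
  obtain ⟨k, hk⟩ := key
  exact (wmSeq_wm hn hi k).good h hk h1

end TB

/-! ### The coned-off metric on the free group -/

namespace TB
open PLine

/-- The truncated logarithmic cost of a step of length `s` along a line. -/
def lam (i L s : ℕ) : ℕ := if s = 0 then 0 else min L (1 + Nat.log 2 (s / i + 1))

variable {i L : ℕ}

theorem lam_zero : lam i L 0 = 0 := by simp [lam]
theorem lam_le (s : ℕ) : lam i L s ≤ L := by
  unfold lam; split_ifs <;> simp
theorem lam_pos (hL : 1 ≤ L) {s : ℕ} (hs : s ≠ 0) : 1 ≤ lam i L s := by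
  unfold lam; rw [if_neg hs]; omega
theorem lam_mono {s t : ℕ} (h : s ≤ t) : lam i L s ≤ lam i L t := by
  unfold lam
  by_cases hs : s = 0
  · simp [hs]
  rw [if_neg hs, if_neg (by omega)]
  have : Nat.log 2 (s / i + 1) ≤ Nat.log 2 (t / i + 1) :=
    Nat.log_mono_right (Nat.succ_le_succ (Nat.div_le_div_right h))
  omega
theorem lam_ultra (hi : 1 ≤ i) (s t : ℕ) :
    lam i L (s + t) ≤ lam i L s + 1 ∨ lam i L (s + t) ≤ lam i L t + 1 := by
  have key : ∀ a : ℕ, lam i L (a + a) ≤ lam i L a + 1 := by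
    intro a
    by_cases ha : a = 0
    · simp [ha, lam_zero]
    unfold lam
    rw [if_neg ha, if_neg (by omega)]
    have h1 : (a + a) / i + 1 ≤ (a / i + 1) * 2 := by
      have h2 : (a + a) / i < 2 * (a / i) + 2 := by
        rw [Nat.div_lt_iff_lt_mul hi]
        have := Nat.div_add_mod a i
        have := Nat.mod_lt a hi
        nlinarith
      omega
    have h3 : Nat.log 2 ((a + a) / i + 1) ≤ Nat.log 2 (a / i + 1) + 1 := by
      rw [← Nat.log_mul_base (by norm_num) (Nat.succ_ne_zero _)]
      exact Nat.log_mono_right h1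
    omega
  rcases le_total s t with h | h
  · right; exact (lam_mono (by omega)).trans (key t)
  · left; exact (lam_mono (by omega)).trans (key s)
theorem lam_subadd (hi : 1 ≤ i) (hL : 1 ≤ L) (s t : ℕ) :
    lam i L (s + t) ≤ lam i L s + lam i L t := by
  by_cases hs : s = 0
  · simp [hs]
  by_cases ht : t = 0
  · simp [ht]
  have := lam_pos (i := i) hL hs
  have := lam_pos (i := i) hL ht
  rcases lam_ultra (L := L) hi s t with h | h <;> omega
theorem lam_sat (hi : 1 ≤ i) {s : ℕ} (h : i * 2 ^ L ≤ s) : lam i L s = L := by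
  have h0 : 0 < i * 2 ^ L := by positivity
  unfold lam
  rw [if_neg (by omega)]
  have h1 : 2 ^ L ≤ s / i := by
    rw [Nat.le_div_iff_mul_le hi]; rw [mul_comm]; exact h
  have h2 : L ≤ Nat.log 2 (s / i + 1) := Nat.le_log_of_pow_le (by norm_num) (by omega)
  omega
theorem lam_bound (hi : 1 ≤ i) {s D : ℕ} (hD : D < L) (h : lam i L s ≤ D) : s ≤ i * 2 ^ D := by
  by_cases hs : s = 0
  · simp [hs]
  unfold lam at h
  rw [if_neg hs] at h
  have h1 : Nat.log 2 (s / i + 1) < D := by omega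
  have h2 := (Nat.log_lt_iff_lt_pow (by norm_num) (Nat.succ_ne_zero _)).1 h1
  have h3 : s / i < 2 ^ D := by omega
  rw [Nat.div_lt_iff_lt_mul hi] at h3
  nlinarith
theorem lam_const (hi : 1 ≤ i) (c : ℕ) : lam i L (c * i) ≤ 1 + Nat.log 2 (c + 1) := by
  unfold lam
  split_ifs
  · omega
  · rw [Nat.mul_div_cancel _ hi]; omega
theorem lam16 (hi : 1 ≤ i) : lam i L (16 * i) ≤ 5 := by
  have := lam_const (L := L) hi 16
  have h : Nat.log 2 (16 + 1) = 4 := by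
    rw [Nat.log_eq_iff] <;> norm_num
  omega

/-- `Cost i L x y k`: there is a path from `x` to `y` consisting of steps along lines of period at
most `i`, of total cost `k`. -/
inductive Cost (i L : ℕ) (x : F) : F → ℕ → Prop
  | refl : Cost i L x x 0
  | step (y : F) (k : ℕ) (ℓ : PLine) (a b : ℤ) : Cost i L x y k → ℓ.τ ≤ i → ℓ.f a = y →
      Cost i L x (ℓ.f b) (k + lam i L (a - b).natAbs)

theorem Cost.trans {x y z : F} {k l : ℕ} (h : Cost i L x y k) (h' : Cost i L y z l) :
    Cost i L x z (k + l) := by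
  induction h' with
  | refl => exact h
  | step y' k' ℓ a b _ hτ ha ih => rw [← add_assoc]; exact .step _ _ ℓ a b ih hτ ha

theorem Cost.single {ℓ : PLine} (hτ : ℓ.τ ≤ i) (a b : ℤ) :
    Cost i L (ℓ.f a) (ℓ.f b) (lam i L (a - b).natAbs) := by
  simpa using Cost.step (i := i) (L := L) _ _ ℓ a b .refl hτ rfl

theorem Cost.symm {x y : F} {k : ℕ} (h : Cost i L x y k) : Cost i L y x k := by
  induction h with
  | refl => exact .refl
  | step y' k' ℓ a b _ hτ ha ih =>
    have := (Cost.single (L := L) hτ b a)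
    rw [ha] at this
    rw [add_comm, show (a - b).natAbs = (b - a).natAbs by omega]
    exact this.trans ih

theorem Cost.mul {x y : F} {k : ℕ} (h : Cost i L x y k) (g : F) : Cost i L (g * x) (g * y) k := by
  induction h with
  | refl => exact .refl
  | step y' k' ℓ a b _ hτ ha ih => exact .step _ _ (ℓ.smul g) a b ih hτ (by rw [smul_f, ha])

theorem exists_cost (hi : 1 ≤ i) (x y : F) : ∃ k, Cost i L x y k := by
  induction hk : nd x y generalizing y with
  | zero => exact ⟨0, by rw [nd_eq_zero.1 hk]; exact .refl⟩
  | succ k ih =>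
    obtain ⟨z, hz1, hz2⟩ := exists_btw x y k (by omega)
    obtain ⟨l, hl⟩ := ih z hz1
    obtain ⟨e, ⟨a, ha⟩, ⟨b, hb⟩⟩ := exists_letter_step (x := z) (y := y) (by omega)
    exact ⟨_, hb ▸ hl.step z l (letterLine z e) a b hi ha⟩

/-- The coned-off metric on the free group. -/
def dd (i L : ℕ) (x y : F) : ℕ := sInf {k | Cost i L x y k}

theorem dd_spec (hi : 1 ≤ i) (x y : F) : Cost i L x y (dd i L x y) :=
  Nat.sInf_mem (exists_cost hi x y)
theorem dd_le {x y : F} {k : ℕ} (h : Cost i L x y k) : dd i L x y ≤ k := Nat.sInf_le h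
theorem dd_self (x : F) : dd i L x x = 0 := Nat.le_zero.1 (dd_le .refl)
theorem dd_comm (x y : F) : dd i L x y = dd i L y x := by
  unfold dd; congr 1; ext k; exact ⟨Cost.symm, Cost.symm⟩
theorem dd_tri (hi : 1 ≤ i) (x y z : F) : dd i L x z ≤ dd i L x y + dd i L y z :=
  dd_le ((dd_spec hi x y).trans (dd_spec hi y z))
theorem dd_mul (g x y : F) : dd i L (g * x) (g * y) = dd i L x y := by
  unfold dd; congr 1; ext k
  refine ⟨fun h => ?_, fun h => h.mul g⟩
  have := Cost.mul h g⁻¹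
  rwa [inv_mul_cancel_left, inv_mul_cancel_left] at this
theorem dd_line {ℓ : PLine} (hτ : ℓ.τ ≤ i) (a b : ℤ) :
    dd i L (ℓ.f a) (ℓ.f b) ≤ lam i L (a - b).natAbs := dd_le (Cost.single hτ a b)

/-- Each syllable of a path of cost at most `D` smaller than the truncation level is short. -/
theorem Cost.nd_le (hi : 1 ≤ i) (hL : 1 ≤ L) {D : ℕ} (hD : D < L) {x y : F} {k : ℕ}
    (h : Cost i L x y k) (hk : k ≤ D) : nd x y ≤ k * (i * 2 ^ D) := by
  induction h with
  | refl => simp [nd_self]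
  | step y' k' ℓ a b _ hτ ha ih =>
    have h1 := ih (by omega)
    have h2 := nd_tri x y' (ℓ.f b)
    have h3 : nd y' (ℓ.f b) = (a - b).natAbs := by rw [← ha, ℓ.iso]
    by_cases h0 : (a - b).natAbs = 0
    · rw [h0, lam_zero, add_zero]; omega
    · have h4 := lam_pos (i := i) hL h0
      have h5 := lam_bound (s := (a - b).natAbs) hi hD (by omega)
      calc nd x (ℓ.f b) ≤ k' * (i * 2 ^ D) + 1 * (i * 2 ^ D) := by omega
        _ = (k' + 1) * (i * 2 ^ D) := by ring
        _ ≤ _ := Nat.mul_le_mul_right _ (by omega)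

theorem nd_le_of_dd (hi : 1 ≤ i) (hL : 1 ≤ L) {D : ℕ} (hD : D < L) {x y : F}
    (h : dd i L x y ≤ D) : nd x y ≤ D * (i * 2 ^ D) :=
  ((dd_spec hi x y).nd_le hi hL hD h).trans (Nat.mul_le_mul_right _ h)

theorem dd_eq_zero (hi : 1 ≤ i) (hL : 1 ≤ L) {x y : F} (h : dd i L x y = 0) : x = y := by
  have := nd_le_of_dd hi hL (D := 0) (by omega) h.le
  exact nd_eq_zero.1 (by omega)

/-- A path from `x` to `y` passes over each vertex of the geodesic `[x, y]`. -/
theorem Cost.split (hi : 1 ≤ i) {x y : F} {k : ℕ} (h : Cost i L x y k) {z : F} (hz : Btw x z y) :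
    ∃ (ℓ : PLine) (a b c : ℤ) (k₁ k₂ : ℕ), ℓ.τ ≤ i ∧ Cost i L x (ℓ.f a) k₁ ∧
      Cost i L (ℓ.f b) y k₂ ∧ k = k₁ + lam i L (a - b).natAbs + k₂ ∧ z = ℓ.f c ∧
      (a - c).natAbs + (c - b).natAbs = (a - b).natAbs := by
  induction h with
  | refl =>
    have : z = x := by
      unfold Btw at hz; rw [nd_self] at hz
      exact (nd_eq_zero.1 (show nd x z = 0 by omega)).symm
    subst this
    have e : (letterLine z 0).f 0 = z := by simp [letterLine]
    refine ⟨letterLine z 0, 0, 0, 0, 0, 0, hi, ?_, ?_, ?_, e.symm, by simp⟩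
    · rw [e]; exact .refl
    · rw [e]; exact .refl
    · simp [lam_zero]
  | step y' k' ℓ a b hc hτ ha ih =>
    rcases hz.split y' with h1 | h1
    · obtain ⟨ℓ₁, a₁, b₁, c₁, k₁, k₂, e1, e2, e3, e4, e5, e6⟩ := ih h1
      exact ⟨ℓ₁, a₁, b₁, c₁, k₁, k₂ + lam i L (a - b).natAbs, e1, e2,
        .step _ _ ℓ a b e3 hτ ha, by omega, e5, e6⟩
    · rw [← ha] at h1
      obtain ⟨c, rfl, hc'⟩ := ℓ.mem_of_btw h1
      exact ⟨ℓ, a, b, c, k', 0, hτ, by rw [ha]; exact hc, .refl, by omega, rfl, hc'⟩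

theorem dd_mono_right (hi : 1 ≤ i) {x y z : F} (hz : Btw x z y) : dd i L z y ≤ dd i L x y := by
  obtain ⟨ℓ, a, b, c, k₁, k₂, h1, h2, h3, h4, rfl, h6⟩ := (dd_spec (L := L) hi x y).split hi hz
  have e1 := dd_le ((Cost.single (L := L) h1 c b).trans h3)
  have e2 : lam i L (c - b).natAbs ≤ lam i L (a - b).natAbs := lam_mono (by omega)
  omega

theorem dd_mono_left (hi : 1 ≤ i) {x y z : F} (hz : Btw x z y) : dd i L x z ≤ dd i L x y := by
  rw [dd_comm, dd_comm x y]; exact dd_mono_right hi hz.symm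

theorem dd_split_le (hi : 1 ≤ i) {x y z : F} (hz : Btw x z y) :
    dd i L x z + dd i L z y ≤ dd i L x y + L := by
  obtain ⟨ℓ, a, b, c, k₁, k₂, h1, h2, h3, h4, rfl, h6⟩ := (dd_spec (L := L) hi x y).split hi hz
  have e1 := dd_le ((Cost.single (L := L) h1 c b).trans h3)
  have e2 := dd_le (h2.trans (Cost.single (L := L) h1 a c))
  have e3 : lam i L (c - b).natAbs ≤ lam i L (a - b).natAbs := lam_mono (by omega)
  have := lam_le (i := i) (L := L) (a - c).natAbs
  omega

theorem btw_proj (ℓ : PLine) (x : F) (b : ℤ) : Btw x (ℓ.f (ℓ.proj x)) (ℓ.f b) := by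
  unfold Btw; rw [ℓ.proj_spec x b, ℓ.iso]; omega

/-- No line through `m` has long overlaps with both `[m, x]` and `[m, y]`. -/
def Shal (i T : ℕ) (m x y : F) : Prop := ∀ ℓ : PLine, ℓ.τ ≤ i → ∀ c, m = ℓ.f c →
  (ℓ.proj x - c).natAbs ≤ T ∨ (ℓ.proj y - c).natAbs ≤ T

theorem dd_cut (hi : 1 ≤ i) {T : ℕ} {x y m : F} (hm : Btw x m y) (hs : Shal i T m x y) :
    dd i L x m + dd i L m y ≤ dd i L x y + lam i L T := by
  obtain ⟨ℓ, a, b, c, k₁, k₂, h1, h2, h3, h4, rfl, h6⟩ := (dd_spec (L := L) hi x y).split hi hm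
  have e1 := dd_le ((Cost.single (L := L) h1 c b).trans h3)
  have e2 := dd_le (h2.trans (Cost.single (L := L) h1 a c))
  have e3 : lam i L (c - b).natAbs ≤ lam i L (a - b).natAbs := lam_mono (by omega)
  have e4 : lam i L (a - c).natAbs ≤ lam i L (a - b).natAbs := lam_mono (by omega)
  rcases hs ℓ h1 c rfl with h | h
  · have f1 := dd_mono_left (L := L) hi (btw_proj ℓ x a)
    have f2 := dd_le h2
    have f3 := dd_tri (L := L) hi x (ℓ.f (ℓ.proj x)) (ℓ.f c)
    have f4 := dd_line (L := L) h1 (ℓ.proj x) c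
    have f5 := lam_mono (i := i) (L := L) h
    omega
  · have f1 := dd_mono_left (L := L) hi (btw_proj ℓ y b)
    have f2 := dd_le h3.symm
    have f3 := dd_tri (L := L) hi (ℓ.f c) (ℓ.f (ℓ.proj y)) y
    have f4 := dd_line (L := L) h1 c (ℓ.proj y)
    have f5 : lam i L (c - ℓ.proj y).natAbs ≤ lam i L T := lam_mono (by omega)
    have f6 := dd_comm (i := i) (L := L) y (ℓ.f (ℓ.proj y))
    omega

theorem lam_tri (hi : 1 ≤ i) (hL : 1 ≤ L) (a b c : ℤ) :
    lam i L (a - c).natAbs ≤ lam i L (a - b).natAbs + lam i L (b - c).natAbs :=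
  (lam_mono (by omega)).trans (lam_subadd hi hL _ _)

theorem lam_ultra3 (hi : 1 ≤ i) (a b c : ℤ) :
    lam i L (a - c).natAbs ≤ lam i L (a - b).natAbs + 1 ∨
    lam i L (a - c).natAbs ≤ lam i L (b - c).natAbs + 1 := by
  have h1 : lam i L (a - c).natAbs ≤ lam i L ((a - b).natAbs + (b - c).natAbs) :=
    lam_mono (by omega)
  rcases lam_ultra (L := L) hi (a - b).natAbs (b - c).natAbs with h | h <;> omega

/-- A path leaving `x` along the line `ℓ` pays for reaching the line and for the progress made
along it. -/
theorem Cost.line_left (hi : 1 ≤ i) (hL : 1 ≤ L) (ℓ : PLine) (hℓ : ℓ.τ ≤ i) {x y : F} {k : ℕ}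
    (h : Cost i L x y k) (hne : ℓ.proj x ≠ ℓ.proj y) : ∃ α, (α - ℓ.proj x).natAbs ≤ 2 * i ∧
      dd i L x (ℓ.f (ℓ.proj x)) + lam i L (α - ℓ.proj y).natAbs ≤ k := by
  induction h with
  | refl => exact (hne rfl).elim
  | step y' k' ℓ₁ a b hc hτ ha ih =>
    have hlip := ℓ.proj_lip (ℓ₁.f a) (ℓ₁.f b)
    rw [ℓ₁.iso, ha] at hlip
    have hm := lam_mono (i := i) (L := L) hlip
    by_cases hpy : ℓ.proj x = ℓ.proj y'
    · by_cases hs : Same ℓ ℓ₁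
      · obtain ⟨a', ha'⟩ : y' ∈ Set.range ℓ.f := by rw [hs]; exact ⟨a, ha⟩
        have e : ℓ.proj y' = a' := by rw [← ha', proj_f]
        refine ⟨ℓ.proj x, by simp, ?_⟩
        have := dd_le hc
        rw [hpy, e, ha']
        rw [e] at hm
        omega
      · refine ⟨ℓ.proj (ℓ₁.f b), ?_, ?_⟩
        · have := not_same_lt hℓ hτ hs a b
          rw [ha] at this
          omega
        · have e1 := dd_mono_left (L := L) hi (ℓ.btw_of_proj hne (c := ℓ.proj x) (by omega))
          have e2 := dd_le (hc.step _ _ ℓ₁ a b hτ ha)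
          rw [sub_self, Int.natAbs_zero, lam_zero]
          omega
    · obtain ⟨α, h1, h2⟩ := ih hpy
      refine ⟨α, h1, ?_⟩
      have := lam_tri (L := L) hi hL α (ℓ.proj y') (ℓ.proj (ℓ₁.f b))
      omega

theorem Cost.line (hi : 1 ≤ i) (hL : 1 ≤ L) (ℓ : PLine) (hℓ : ℓ.τ ≤ i) {x y : F} {k : ℕ}
    (h : Cost i L x y k) (hne : 2 * i < (ℓ.proj x - ℓ.proj y).natAbs) :
    ∃ α β, (α - ℓ.proj x).natAbs ≤ 2 * i ∧ (β - ℓ.proj y).natAbs ≤ 2 * i ∧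
      dd i L x (ℓ.f (ℓ.proj x)) + lam i L (α - β).natAbs + dd i L (ℓ.f (ℓ.proj y)) y ≤ k := by
  induction h with
  | refl => simp at hne
  | step y' k' ℓ₁ a b hc hτ ha ih =>
    by_cases hs : Same ℓ ℓ₁
    · obtain ⟨b', hb'⟩ : ℓ₁.f b ∈ Set.range ℓ.f := by rw [hs]; exact ⟨b, rfl⟩
      have e : ℓ.proj (ℓ₁.f b) = b' := by rw [← hb', proj_f]
      obtain ⟨α, h1, h2⟩ := (hc.step _ _ ℓ₁ a b hτ ha).line_left hi hL ℓ hℓ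
        (fun h => by rw [h] at hne; simp at hne)
      refine ⟨α, ℓ.proj (ℓ₁.f b), h1, by simp, ?_⟩
      rw [← e] at hb'
      rw [hb', dd_self]
      exact h2
    · have hlt := not_same_lt hℓ hτ hs a b
      rw [ha] at hlt
      by_cases hpy : ℓ.proj y' = ℓ.proj (ℓ₁.f b)
      · obtain ⟨α, β, h1, h2, h3⟩ := ih (by rw [hpy]; exact hne)
        rw [hpy] at h2 h3
        refine ⟨α, β, h1, h2, ?_⟩
        have e1 := dd_tri (L := L) hi (ℓ.f (ℓ.proj (ℓ₁.f b))) y' (ℓ₁.f b)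
        have e2 := dd_line (L := L) hτ a b
        rw [ha] at e2
        omega
      · obtain ⟨α, h1, h2⟩ := hc.line_left hi hL ℓ hℓ (fun h => by rw [h] at hne; omega)
        refine ⟨α, ℓ.proj y', h1, by omega, ?_⟩
        have hb := ℓ.btw_of_proj hpy (c := ℓ.proj (ℓ₁.f b)) (by omega)
        rw [← ha] at hb
        obtain ⟨c, hc1, hc2⟩ := ℓ₁.mem_of_btw hb
        have e1 := dd_line (L := L) hτ c b
        have e2 : lam i L (c - b).natAbs ≤ lam i L (a - b).natAbs := lam_mono (by omega)
        rw [← hc1] at e1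
        omega

theorem dd_line_ge (hi : 1 ≤ i) (hL : 1 ≤ L) (ℓ : PLine) (hℓ : ℓ.τ ≤ i) {x y : F}
    (hne : 2 * i < (ℓ.proj x - ℓ.proj y).natAbs) :
    dd i L x (ℓ.f (ℓ.proj x)) + lam i L ((ℓ.proj x - ℓ.proj y).natAbs - 4 * i)
      + dd i L (ℓ.f (ℓ.proj y)) y ≤ dd i L x y := by
  obtain ⟨α, β, h1, h2, h3⟩ := (dd_spec (L := L) hi x y).line hi hL ℓ hℓ hne
  have : lam i L ((ℓ.proj x - ℓ.proj y).natAbs - 4 * i) ≤ lam i L (α - β).natAbs :=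
    lam_mono (by omega)
  omega

theorem dd_line_le (hi : 1 ≤ i) (ℓ : PLine) (hℓ : ℓ.τ ≤ i) (x y : F) :
    dd i L x y ≤ dd i L x (ℓ.f (ℓ.proj x)) + lam i L (ℓ.proj x - ℓ.proj y).natAbs
      + dd i L (ℓ.f (ℓ.proj y)) y := by
  have := dd_tri (L := L) hi x (ℓ.f (ℓ.proj x)) y
  have := dd_tri (L := L) hi (ℓ.f (ℓ.proj x)) (ℓ.f (ℓ.proj y)) y
  have := dd_line (L := L) hℓ (ℓ.proj x) (ℓ.proj y)
  omega

/-- If `[x, y]` overlaps `ℓ` so much that the cost saturates, bending along `ℓ` does not increase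
the distance. -/
theorem dd_bend (hi : 1 ≤ i) (hL : 1 ≤ L) (ℓ : PLine) (hℓ : ℓ.τ ≤ i) {x y g : F}
    (hne : i * 2 ^ L + 4 * i ≤ (ℓ.proj x - ℓ.proj y).natAbs) (hg : ℓ.St g) :
    dd i L x (g * y) ≤ dd i L x y := by
  have h0 : 0 < i * 2 ^ L := by positivity
  have h1 := dd_line_ge hi hL ℓ hℓ (x := x) (y := y) (by omega)
  rw [lam_sat (s := _ - 4 * i) hi (by omega)] at h1
  obtain ⟨t, ht⟩ := hg
  have h2 := dd_line_le (L := L) hi ℓ hℓ x (g * y)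
  rw [ht.proj, ← ht, dd_mul] at h2
  have := lam_le (i := i) (L := L) (ℓ.proj x - (ℓ.proj y + t)).natAbs
  omega

/-- The four point inequality for the three ways of pairing up four points. -/
def Hyp4 (i L : ℕ) (x y z t : F) : Prop :=
  (dd i L x y + dd i L z t ≤ dd i L x z + dd i L y t + 10 ∨
    dd i L x y + dd i L z t ≤ dd i L x t + dd i L y z + 10) ∧
  (dd i L x z + dd i L y t ≤ dd i L x y + dd i L z t + 10 ∨
    dd i L x z + dd i L y t ≤ dd i L x t + dd i L y z + 10) ∧
  (dd i L x t + dd i L y z ≤ dd i L x y + dd i L z t + 10 ∨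
    dd i L x t + dd i L y z ≤ dd i L x z + dd i L y t + 10)

theorem Hyp4.swap₁₂ {x y z t : F} (h : Hyp4 i L x y z t) : Hyp4 i L y x z t := by
  unfold Hyp4 at *
  rw [dd_comm y x, add_comm (dd i L y z), add_comm (dd i L y t)]; tauto

theorem Hyp4.swap₃₄ {x y z t : F} (h : Hyp4 i L x y z t) : Hyp4 i L x y t z := by
  unfold Hyp4 at *
  rw [dd_comm t z]; tauto

theorem Hyp4.swap₂₃ {x y z t : F} (h : Hyp4 i L x y z t) : Hyp4 i L x z y t := by
  unfold Hyp4 at *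
  rw [dd_comm z y]; tauto

theorem Hyp4.swap₂₄ {x y z t : F} (h : Hyp4 i L x y z t) : Hyp4 i L x t z y :=
  h.swap₃₄.swap₂₃.swap₃₄

/-- The four point inequality when a common point of the crossing geodesics is shallow. -/
theorem hyp4_of_shal (hi : 1 ≤ i) {x y z t m : F}
    (h1 : Btw x m z) (h2 : Btw x m t) (h3 : Btw y m z) (h4 : Btw y m t)
    (s1 : Shal i (16 * i) m x z) (s2 : Shal i (16 * i) m x t)
    (s3 : Shal i (16 * i) m y z) (s4 : Shal i (16 * i) m y t) : Hyp4 i L x y z t := by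
  have e1 := dd_cut (L := L) hi h1 s1
  have e2 := dd_cut (L := L) hi h2 s2
  have e3 := dd_cut (L := L) hi h3 s3
  have e4 := dd_cut (L := L) hi h4 s4
  have e5 := lam16 (L := L) hi
  have t1 := dd_tri (L := L) hi x m y
  have t2 := dd_tri (L := L) hi z m t
  have t3 := dd_tri (L := L) hi x m z
  have t4 := dd_tri (L := L) hi y m t
  have t5 := dd_tri (L := L) hi x m t
  have t6 := dd_tri (L := L) hi y m z
  have c1 := dd_comm (i := i) (L := L) y m
  have c2 := dd_comm (i := i) (L := L) z m
  unfold Hyp4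
  refine ⟨?_, ?_, ?_⟩ <;> omega

theorem dd_approx (hi : 1 ≤ i) (hL : 1 ≤ L) (ℓ : PLine) (hℓ : ℓ.τ ≤ i) {x y : F}
    (hne : 8 * i ≤ (ℓ.proj x - ℓ.proj y).natAbs) :
    dd i L x (ℓ.f (ℓ.proj x)) + lam i L (ℓ.proj x - ℓ.proj y).natAbs
      + dd i L y (ℓ.f (ℓ.proj y)) ≤ dd i L x y + 1 := by
  have h1 := dd_line_ge hi hL ℓ hℓ (x := x) (y := y) (by omega)
  set u := (ℓ.proj x - ℓ.proj y).natAbs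
  have h2 : lam i L u ≤ lam i L ((u - 4 * i) + (u - 4 * i)) := lam_mono (by omega)
  have h3 := lam_ultra (L := L) hi (u - 4 * i) (u - 4 * i)
  rw [dd_comm (ℓ.f (ℓ.proj y)) y] at h1
  omega

theorem dd_approx_le (hi : 1 ≤ i) (ℓ : PLine) (hℓ : ℓ.τ ≤ i) (x y : F) :
    dd i L x y ≤ dd i L x (ℓ.f (ℓ.proj x)) + lam i L (ℓ.proj x - ℓ.proj y).natAbs
      + dd i L y (ℓ.f (ℓ.proj y)) := by
  rw [dd_comm y]; exact dd_line_le hi ℓ hℓ x y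

/-- A point `f μ` of `ℓ` such that `[x, f μ]` follows `ℓ` for a while at the end, whereas
`[f μ, y]` leaves `ℓ` quickly, is shallow. -/
theorem shal_of_line (ℓ : PLine) (hℓ : ℓ.τ ≤ i) {x y : F} {μ : ℤ}
    (h1 : 2 * i ≤ (ℓ.proj x - μ).natAbs) (h2 : (ℓ.proj y - μ).natAbs ≤ 16 * i) :
    Shal i (16 * i) (ℓ.f μ) x y := by
  intro ℓ' hℓ' c hc
  by_cases hs : Same ℓ ℓ'
  · right
    rcases hs.cases with ⟨s, hs⟩ | ⟨s, hs⟩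
    · have e : ℓ'.proj y = s + ℓ.proj y := ℓ'.proj_unique fun b => by
        have h := ℓ.proj_spec y (b - s)
        rw [hs, hs, show s + (b - s) = b by ring] at h
        rw [h]; omega
      have e2 : c = s + μ := ℓ'.inj (by rw [← hc, hs])
      omega
    · have e : ℓ'.proj y = s - ℓ.proj y := ℓ'.proj_unique fun b => by
        have h := ℓ.proj_spec y (s - b)
        rw [hs, hs, show s - (s - b) = b by ring] at h
        rw [h]; omega
      have e2 : c = s - μ := ℓ'.inj (by rw [← hc, hs])
      omega
  · left
    by_contra hlt
    have hpos := ℓ'.pos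
    -- the point of `ℓ'` at distance `2 i` from the common point towards `x` lies on `ℓ`
    obtain ⟨d, hd1, hd2⟩ : ∃ d : ℤ, (ℓ'.proj x - d).natAbs + (d - c).natAbs = (ℓ'.proj x - c).natAbs
        ∧ (d - c).natAbs = 2 * i := by
      rcases le_total (ℓ'.proj x) c with h | h
      · exact ⟨c - 2 * i, by omega, by omega⟩
      · exact ⟨c + 2 * i, by omega, by omega⟩
    have hb : Btw x (ℓ'.f d) (ℓ'.f c) := by
      unfold Btw; rw [ℓ'.proj_spec x d, ℓ'.proj_spec x c, ℓ'.iso]; omega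
    have hμ : Btw x (ℓ.f (ℓ.proj x)) (ℓ'.f c) := by rw [← hc]; exact btw_proj ℓ x μ
    have hin : ∃ e, ℓ'.f d = ℓ.f e := by
      rcases hb.split (ℓ.f (ℓ.proj x)) with h | h
      · -- distances force the two points to agree
        have e1 := ℓ.iso (ℓ.proj x) μ
        rw [hc] at e1
        have e2 := ℓ'.iso d c
        have e3 : nd x (ℓ'.f d) = nd x (ℓ.f (ℓ.proj x)) := by
          unfold Btw at h hμ hb; omega
        exact ⟨_, hb.uniq hμ e3⟩
      · rw [← hc] at h
        obtain ⟨e, he, -⟩ := ℓ.mem_of_btw h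
        exact ⟨e, he⟩
    obtain ⟨e, he⟩ := hin
    have := not_same_lt hℓ hℓ' hs d c
    rw [he, ← hc, proj_f, proj_f] at this
    have e2 := ℓ'.iso d c
    rw [he, ← hc, ℓ.iso] at e2
    omega

theorem Shal.symm {T : ℕ} {m x y : F} (h : Shal i T m x y) : Shal i T m y x :=
  fun ℓ hℓ c hc => (h ℓ hℓ c hc).symm

theorem btw_line {ℓ : PLine} {x z : F} {μ : ℤ} (h : ℓ.proj x < ℓ.proj z)
    (h1 : ℓ.proj x ≤ μ) (h2 : μ ≤ ℓ.proj z) : Btw x (ℓ.f μ) z :=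
  ℓ.btw_of_proj h.ne (by omega)

theorem hyp4_deep (hi : 1 ≤ i) (hL : 1 ≤ L) (ℓ : PLine) (hℓ : ℓ.τ ≤ i) {x y z t : F} {c : ℤ}
    (hx : ℓ.proj x + 16 * i < c) (hy : ℓ.proj y = c) (hz : c + 16 * i < ℓ.proj z)
    (ht : c ≤ ℓ.proj t) : Hyp4 i L x y z t := by
  by_cases hzt : (ℓ.proj z - ℓ.proj t).natAbs < 8 * i
  · -- the point of `ℓ` where `z` or `t` branches off first is shallow
    obtain ⟨μ, m1, m2, m3⟩ : ∃ μ, μ ≤ ℓ.proj z ∧ μ ≤ ℓ.proj t ∧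
        (μ = ℓ.proj z ∨ μ = ℓ.proj t) := by
      rcases le_total (ℓ.proj z) (ℓ.proj t) with h | h
      · exact ⟨_, le_rfl, h, Or.inl rfl⟩
      · exact ⟨_, h, le_rfl, Or.inr rfl⟩
    refine hyp4_of_shal (m := ℓ.f μ) hi (btw_line ?_ ?_ ?_) (btw_line ?_ ?_ ?_)
      (btw_line ?_ ?_ ?_) (btw_line ?_ ?_ ?_) (shal_of_line ℓ hℓ ?_ ?_)
      (shal_of_line ℓ hℓ ?_ ?_) (shal_of_line ℓ hℓ ?_ ?_) (shal_of_line ℓ hℓ ?_ ?_) <;> omega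
  have a1 := dd_approx hi hL ℓ hℓ (x := x) (y := y) (by omega)
  have a2 := dd_approx hi hL ℓ hℓ (x := x) (y := z) (by omega)
  have a3 := dd_approx hi hL ℓ hℓ (x := x) (y := t) (by omega)
  have a4 := dd_approx hi hL ℓ hℓ (x := y) (y := z) (by omega)
  have a5 := dd_approx hi hL ℓ hℓ (x := z) (y := t) (by omega)
  have b1 := dd_approx_le (L := L) hi ℓ hℓ x y
  have b2 := dd_approx_le (L := L) hi ℓ hℓ x z
  have b3 := dd_approx_le (L := L) hi ℓ hℓ x t
  have b4 := dd_approx_le (L := L) hi ℓ hℓ y z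
  have b5 := dd_approx_le (L := L) hi ℓ hℓ z t
  have b6 := dd_approx_le (L := L) hi ℓ hℓ y t
  have a6 := fun h => dd_approx hi hL ℓ hℓ (x := y) (y := t) h
  rw [hy] at a1 a4 b1 b4 b6 a6
  clear hy
  generalize ℓ.proj x = X at *
  generalize ℓ.proj z = Z at *
  generalize ℓ.proj t = T at *
  rw [dd_comm t] at *
  have sums : ∀ Z T : ℤ, c ≤ T → T ≤ Z →
      lam i L (X - Z).natAbs + lam i L (c - T).natAbs
        ≤ lam i L (X - T).natAbs + lam i L (c - Z).natAbs + 1 ∧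
      lam i L (X - c).natAbs + lam i L (Z - T).natAbs
        ≤ lam i L (X - T).natAbs + lam i L (c - Z).natAbs ∧
      (lam i L (X - T).natAbs + lam i L (c - Z).natAbs
        ≤ lam i L (X - Z).natAbs + lam i L (c - T).natAbs + 2 ∨
       lam i L (X - T).natAbs + lam i L (c - Z).natAbs
        ≤ lam i L (X - c).natAbs + lam i L (Z - T).natAbs + 2) := by
    intro Z T h1 h2
    have m1 : lam i L (X - c).natAbs ≤ lam i L (X - T).natAbs := lam_mono (by omega)
    have m2 : lam i L (Z - T).natAbs ≤ lam i L (c - Z).natAbs := lam_mono (by omega)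
    have m3 : lam i L (c - T).natAbs ≤ lam i L (X - T).natAbs := lam_mono (by omega)
    have m4 : lam i L (c - Z).natAbs ≤ lam i L (X - Z).natAbs := lam_mono (by omega)
    have m5 : lam i L (c - T).natAbs ≤ lam i L (c - Z).natAbs := lam_mono (by omega)
    have m6 : lam i L (X - T).natAbs ≤ lam i L (X - Z).natAbs := lam_mono (by omega)
    have u1 := lam_ultra3 (L := L) hi X T Z
    have u2 := lam_ultra3 (L := L) hi c T Z
    have u3 := lam_ultra3 (L := L) hi X c T
    rw [show (T - Z).natAbs = (Z - T).natAbs by omega] at u1 u2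
    refine ⟨?_, ?_, ?_⟩ <;> omega
  unfold Hyp4
  by_cases hyt : 8 * i ≤ (c - T).natAbs
  · have a6 := a6 hyt
    rcases le_total T Z with h | h
    · obtain ⟨s1, s2, s3⟩ := sums Z T ht h
      refine ⟨?_, ?_, ?_⟩ <;> omega
    · obtain ⟨s1, s2, s3⟩ := sums T Z (by omega) h
      rw [show (T - Z).natAbs = (Z - T).natAbs by omega] at s2 s3
      refine ⟨?_, ?_, ?_⟩ <;> omega
  · obtain ⟨s1, s2, -⟩ := sums Z T ht (by omega)
    have m1 : lam i L (c - T).natAbs ≤ lam i L (X - c).natAbs := lam_mono (by omega)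
    have m2 : lam i L (c - T).natAbs ≤ lam i L (T - Z).natAbs := lam_mono (by omega)
    have u2 := lam_ultra3 (L := L) hi c T Z
    have u3 := lam_ultra3 (L := L) hi X c T
    rw [show (T - Z).natAbs = (Z - T).natAbs by omega] at m2 u2
    refine ⟨?_, ?_, ?_⟩ <;> omega

/-- One of the four crossing sides is deep at the common point `m` of the crossing geodesics. -/
theorem hyp4_side (hi : 1 ≤ i) (hL : 1 ≤ L) {x y z t m : F} (h0 : Btw x m y)
    (h1 : Btw x m z) (h2 : Btw x m t) (h3 : Btw y m z) (h4 : Btw y m t)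
    (s : ¬ Shal i (16 * i) m x z) : Hyp4 i L x y z t := by
  unfold Shal at s
  push Not at s
  obtain ⟨ℓ, hℓ, c, rfl, e1, e2⟩ := s
  have q0 := ℓ.proj_btw h0
  have q1 := ℓ.proj_btw h1
  have q2 := ℓ.proj_btw h2
  have q3 := ℓ.proj_btw h3
  rw [proj_f] at q0 q1 q2 q3
  rcases le_total (ℓ.proj x) c with h | h
  · exact hyp4_deep (c := c) hi hL ℓ hℓ (by omega) (by omega) (by omega) (by omega)
  · have r := ℓ.proj_rev
    refine hyp4_deep (c := -c) hi hL ℓ.rev hℓ ?_ ?_ ?_ ?_ <;> simp only [r] <;> omega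

theorem hyp4_tree (hi : 1 ≤ i) (hL : 1 ≤ L) {x y z t : F}
    (h1 : nd x y + nd z t ≤ nd x z + nd y t) (h2 : nd x y + nd z t ≤ nd x t + nd y z) :
    Hyp4 i L x y z t := by
  obtain ⟨m, m1, m2, m3⟩ := exists_median x y z
  have b1 : Btw x m t ∧ Btw y m t := by
    unfold Btw
    have f1 := fourpt x z y t
    have f2 := fourpt x t y z
    have f3 := fourpt m t x z
    have f4 := fourpt m t y z
    have f5 := fourpt m t x y
    have := nd_comm y z; have := nd_comm y m; have := nd_comm x m; have := nd_comm z m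
    have := nd_comm z t; have := nd_comm y t; have := nd_comm t x
    have := nd_comm z y; have := nd_comm m y; have := nd_comm m x; have := nd_comm m z
    have := nd_comm t z; have := nd_comm t y; have := nd_comm x t
    have := nd_comm z x; have := nd_comm y x
    have := nd_tri x m t; have := nd_tri y m t
    constructor <;> omega
  obtain ⟨m4, m5⟩ := b1
  by_cases s1 : Shal i (16 * i) m x z
  swap
  · exact hyp4_side hi hL m1 m2 m4 m3 m5 s1
  by_cases s2 : Shal i (16 * i) m x t
  swap
  · exact (hyp4_side hi hL m1 m4 m2 m5 m3 s2).swap₃₄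
  by_cases s3 : Shal i (16 * i) m y z
  swap
  · exact (hyp4_side hi hL (Btw.symm m1) m3 m5 m2 m4 s3).swap₁₂
  by_cases s4 : Shal i (16 * i) m y t
  swap
  · exact (hyp4_side hi hL (Btw.symm m1) m5 m3 m4 m2 s4).swap₁₂.swap₃₄
  exact hyp4_of_shal hi m2 m4 m3 m5 s1 s2 s3 s4

theorem hyp4 (hi : 1 ≤ i) (hL : 1 ≤ L) (x y z t : F) : Hyp4 i L x y z t := by
  by_cases h1 : nd x y + nd z t ≤ nd x z + nd y t
  · by_cases h2 : nd x y + nd z t ≤ nd x t + nd y z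
    · exact hyp4_tree hi hL h1 h2
    · refine (hyp4_tree hi hL (x := x) (y := t) (z := z) (t := y) ?_ ?_).swap₂₄
      all_goals
      have := nd_comm t z
      have := nd_comm t y
      have := nd_comm y z
      omega
  · by_cases h2 : nd x z + nd y t ≤ nd x t + nd y z
    · refine (hyp4_tree hi hL (x := x) (y := z) (z := y) (t := t) ?_ ?_).swap₂₃
      all_goals
      have := nd_comm y z
      omega
    · refine (hyp4_tree hi hL (x := x) (y := t) (z := z) (t := y) ?_ ?_).swap₂₄
      all_goals
      have := nd_comm t z
      have := nd_comm t y
      have := nd_comm y z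
      omega
end TB

/-! ### The quotient group and its metric -/

namespace TB
open PLine

variable {i L n : ℕ}

/-- `S` is preserved when its second argument is rotated about a line along which the two
arguments are at least `D` apart. -/
def Bend (i D : ℕ) (S : F → F → Prop) : Prop := ∀ ℓ : PLine, ℓ.τ ≤ i → ∀ g, ℓ.St g → ∀ x y,
  D ≤ (ℓ.proj x - ℓ.proj y).natAbs → S x y → S x (g * y)

/-- Left invariance of a binary relation. -/
def Inv (S : F → F → Prop) : Prop := ∀ g x y, S x y → S (g * x) (g * y)

theorem exists_long_side (ℓ : PLine) (D m : ℕ) (x : ℕ → F)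
    (h : m * D < (ℓ.proj (x 0) - ℓ.proj (x m)).natAbs) :
    ∃ j < m, D ≤ (ℓ.proj (x j) - ℓ.proj (x (j + 1))).natAbs := by
  induction m with
  | zero => simp at h
  | succ m ih =>
    by_cases h' : D ≤ (ℓ.proj (x m) - ℓ.proj (x (m + 1))).natAbs
    · exact ⟨m, by omega, h'⟩
    · obtain ⟨j, hj, hj'⟩ := ih (by rw [Nat.succ_mul] at h; omega)
      exact ⟨j, by omega, hj'⟩

/-- A polygon that closes up modulo `N` can be bent, modulo `N`, until it closes up in the free
group, preserving any invariant side conditions that survive bending. -/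
theorem lift_polygon (hi : 1 ≤ i) (D m : ℕ) (hn : m * D + 14 * i ≤ n)
    (S : ℕ → F → F → Prop) (hS : ∀ j, Inv (S j)) (hB : ∀ j, Bend i D (S j)) (x : ℕ → F)
    (hx : ∀ j < m, S j (x j) (x (j + 1))) (hN : (x 0)⁻¹ * x m ∈ NN i n) :
    ∃ x' : ℕ → F, x' 0 = x 0 ∧ x' m = x 0 ∧ (∀ j, (x j)⁻¹ * x' j ∈ NN i n) ∧
      ∀ j < m, S j (x' j) (x' (j + 1)) := by
  induction hk : nd (x 0) (x m) using Nat.strong_induction_on generalizing x with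
  | _ k ih =>
  by_cases h1 : (x 0)⁻¹ * x m = 1
  · exact ⟨x, rfl, (inv_mul_eq_one.1 h1).symm, fun j => by simp, hx⟩
  obtain ⟨ℓ₀, g₀, t, hτ, hg₀, ht, hclose⟩ := good_of_mem_NN (by omega) hi hN h1
  -- move the line to the base point of the polygon
  obtain ⟨ℓ, hℓτ, g, hg, hcl⟩ : ∃ ℓ : PLine, ℓ.τ ≤ i ∧ ∃ g, ℓ.IsTr g t ∧
      (ℓ.proj (x m) + n * t - ℓ.proj (x 0)).natAbs ≤ 6 * i := by
    refine ⟨ℓ₀.smul (x 0), hτ, _, hg₀.conj (x 0), ?_⟩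
    have e1 := ℓ₀.proj_smul (x 0) 1
    have e2 := ℓ₀.proj_smul (x 0) ((x 0)⁻¹ * x m)
    rw [mul_one] at e1
    rw [mul_inv_cancel_left] at e2
    rw [e1, e2]; exact hclose
  have hnt : (n : ℤ) ≤ (n * t).natAbs := by
    rw [Int.natAbs_mul]
    have : 1 ≤ t.natAbs := by omega
    have : n * 1 ≤ n * t.natAbs := Nat.mul_le_mul_left _ this
    simp only [Int.natAbs_natCast]; omega
  obtain ⟨j, hj, hlong⟩ := exists_long_side ℓ D m x (by omega)
  have hgn : ℓ.IsTr (g ^ n) (n * t) := hg.pow n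
  set ρ := g ^ n with hρ
  have hρN : ρ ∈ NN i n := pow_mem_NN hℓτ ⟨_, hg⟩
  set y : ℕ → F := fun l => if l ≤ j then x l else ρ * x l with hy
  have hNy : ∀ l, (x l)⁻¹ * y l ∈ NN i n := by
    intro l
    simp only [hy]
    split_ifs
    · simp
    · have := (NN_normal i n).conj_mem ρ hρN (x l)⁻¹
      simpa [mul_assoc] using this
  have hy0 : y 0 = x 0 := by simp [hy]
  have hym : y m = ρ * x m := by simp only [hy]; rw [if_neg (by omega)]
  have hyS : ∀ l < m, S l (y l) (y (l + 1)) := by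
    intro l hl
    simp only [hy]
    rcases lt_trichotomy l j with h | h | h
    · rw [if_pos (by omega), if_pos (by omega)]; exact hx l hl
    · subst h
      rw [if_pos le_rfl, if_neg (by omega)]
      exact hB _ ℓ hℓτ ρ ⟨_, hgn⟩ _ _ hlong (hx l hl)
    · rw [if_neg (by omega), if_neg (by omega)]; exact hS _ _ _ _ (hx l hl)
  have hlt : nd (y 0) (y m) < k := by
    rw [hy0, hym, ← hk, ℓ.nd_of_proj_ne (x := x 0) (y := x m) (by omega)]
    have e1 := ℓ.nd_le_proj (x 0) (ρ * x m)
    have e2 : nd (ℓ.f (ℓ.proj (ρ * x m))) (ρ * x m) = nd (ℓ.f (ℓ.proj (x m))) (x m) := by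
      rw [hgn.proj, ← hgn, nd_mul]
    rw [e2, hgn.proj] at e1
    omega
  obtain ⟨x', a1, a2, a3, a4⟩ := ih _ hlt y hyS (by
    rw [hy0, hym]
    have := (NN i n).mul_mem hN (by simpa [hym] using hNy m)
    simpa [mul_assoc] using this) rfl
  refine ⟨x', by rw [a1, hy0], by rw [a2, hy0], fun l => ?_, a4⟩
  have := (NN i n).mul_mem (hNy l) (a3 l)
  simpa [mul_assoc] using this

/-- The quotient group. -/
abbrev HH (i n : ℕ) := F ⧸ NN i n

theorem inv_dd (k : ℕ) : Inv (fun x y => dd i L x y ≤ k) := fun _ _ _ h => by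
  simpa only [dd_mul] using h

theorem bend_dd (hi : 1 ≤ i) (hL : 1 ≤ L) (k : ℕ) :
    Bend i (i * 2 ^ L + 4 * i) (fun x y => dd i L x y ≤ k) := fun ℓ hℓ g hg x y h hk =>
  (dd_bend hi hL ℓ hℓ h hg).trans hk

theorem side_dd (hi : 1 ≤ i) (hL : 1 ≤ L) (k : ℕ) : Inv (fun x y => dd i L x y ≤ k) ∧
    Bend i (i * 2 ^ L + 4 * i) (fun x y => dd i L x y ≤ k) := ⟨inv_dd k, bend_dd hi hL k⟩

/-- The quotient metric. -/
def dH (i L n : ℕ) (a b : HH i n) : ℕ := sInf {k | ∃ x y : F, (x : HH i n) = a ∧ (y : HH i n) = b ∧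
  dd i L x y = k}

theorem mk_eq {x y : F} : (x : HH i n) = y ↔ x⁻¹ * y ∈ NN i n := QuotientGroup.eq

theorem exists_mul_of_mk_eq {x y : F} (h : (x : HH i n) = y) : ∃ m ∈ NN i n, y = m * x := by
  refine ⟨y * x⁻¹, ?_, by simp⟩
  have := (NN_normal i n).conj_mem _ (mk_eq.1 h) x
  simpa [mul_assoc] using this

theorem mk_mul_mem {m : F} (h : m ∈ NN i n) (x : F) : ((m * x : F) : HH i n) = x := by
  rw [QuotientGroup.mk_mul, (QuotientGroup.eq_one_iff m).2 h, one_mul]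

theorem dH_le (x y : F) : dH i L n x y ≤ dd i L x y := Nat.sInf_le ⟨x, y, rfl, rfl, rfl⟩

theorem dH_spec (x : F) (b : HH i n) : ∃ y : F, (y : HH i n) = b ∧ dd i L x y = dH i L n x b := by
  have hne : {k | ∃ x' y : F, (x' : HH i n) = x ∧ (y : HH i n) = b ∧ dd i L x' y = k}.Nonempty := by
    obtain ⟨y, rfl⟩ := QuotientGroup.mk_surjective b
    exact ⟨_, x, y, rfl, rfl, rfl⟩
  obtain ⟨x', y, h1, h2, h3⟩ := Nat.sInf_mem hne
  obtain ⟨m, hm, rfl⟩ := exists_mul_of_mk_eq h1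
  refine ⟨m * y, by rw [mk_mul_mem hm, h2], ?_⟩
  rw [dd_mul]; exact h3

theorem dH_self (a : HH i n) : dH i L n a a = 0 := by
  obtain ⟨x, rfl⟩ := QuotientGroup.mk_surjective a
  have := dH_le (i := i) (L := L) (n := n) x x
  rw [dd_self] at this; omega

theorem dH_comm (a b : HH i n) : dH i L n a b = dH i L n b a := by
  unfold dH; congr 1; ext k
  constructor <;> rintro ⟨x, y, h1, h2, h3⟩ <;> exact ⟨y, x, h2, h1, by rw [dd_comm, h3]⟩

theorem dH_tri (hi : 1 ≤ i) (a b c : HH i n) : dH i L n a c ≤ dH i L n a b + dH i L n b c := by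
  obtain ⟨x, rfl⟩ := QuotientGroup.mk_surjective a
  obtain ⟨y, rfl, hy⟩ := dH_spec (i := i) (L := L) (n := n) x b
  obtain ⟨z, rfl, hz⟩ := dH_spec (i := i) (L := L) (n := n) y c
  rw [← hy, ← hz]
  exact (dH_le x z).trans (dd_tri hi x y z)

theorem dH_mul (g a b : HH i n) : dH i L n (g * a) (g * b) = dH i L n a b := by
  have key : ∀ g a b : HH i n, dH i L n (g * a) (g * b) ≤ dH i L n a b := by
    intro g a b
    obtain ⟨x, rfl⟩ := QuotientGroup.mk_surjective a
    obtain ⟨g, rfl⟩ := QuotientGroup.mk_surjective g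
    obtain ⟨y, rfl, hy⟩ := dH_spec (i := i) (L := L) (n := n) x b
    rw [← hy, ← dd_mul g]
    exact dH_le _ _
  refine le_antisymm (key g a b) ?_
  have := key g⁻¹ (g * a) (g * b)
  rwa [inv_mul_cancel_left, inv_mul_cancel_left] at this

theorem dH_eq_zero (hi : 1 ≤ i) (hL : 1 ≤ L) {a b : HH i n} (h : dH i L n a b = 0) : a = b := by
  obtain ⟨x, rfl⟩ := QuotientGroup.mk_surjective a
  obtain ⟨y, rfl, hy⟩ := dH_spec (i := i) (L := L) (n := n) x b
  rw [dd_eq_zero hi hL (hy.trans h)]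

/-- A closed quadrilateral in the quotient, with bend-invariant side conditions, lifts. -/
theorem lift_quad (hi : 1 ≤ i) (D : ℕ) (hn : 4 * D + 14 * i ≤ n)
    (S₀ S₁ S₂ S₃ : F → F → Prop) (h₀ : Inv S₀ ∧ Bend i D S₀) (h₁ : Inv S₁ ∧ Bend i D S₁)
    (h₂ : Inv S₂ ∧ Bend i D S₂) (h₃ : Inv S₃ ∧ Bend i D S₃) {x₀ x₁ x₂ x₃ x₄ : F}
    (s₀ : S₀ x₀ x₁) (s₁ : S₁ x₁ x₂) (s₂ : S₂ x₂ x₃) (s₃ : S₃ x₃ x₄)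
    (hN : (x₀ : HH i n) = x₄) : ∃ y₁ y₂ y₃ : F, (y₁ : HH i n) = x₁ ∧ (y₂ : HH i n) = x₂ ∧
      (y₃ : HH i n) = x₃ ∧ S₀ x₀ y₁ ∧ S₁ y₁ y₂ ∧ S₂ y₂ y₃ ∧ S₃ y₃ x₀ := by
  let x : ℕ → F := fun j => match j with
    | 0 => x₀ | 1 => x₁ | 2 => x₂ | 3 => x₃ | _ => x₄
  let S : ℕ → F → F → Prop := fun j => match j with
    | 0 => S₀ | 1 => S₁ | 2 => S₂ | _ => S₃
  have hS : ∀ j, Inv (S j) ∧ Bend i D (S j) := by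
    intro j
    match j with
    | 0 => exact h₀
    | 1 => exact h₁
    | 2 => exact h₂
    | (_ + 3) => exact h₃
  obtain ⟨x', a1, a2, a3, a4⟩ := lift_polygon (n := n) hi D 4 hn S
    (fun j => (hS j).1) (fun j => (hS j).2) x (fun j hj => by
      match j, hj with
      | 0, _ => exact s₀
      | 1, _ => exact s₁
      | 2, _ => exact s₂
      | 3, _ => exact s₃) (mk_eq.1 hN)
  refine ⟨x' 1, x' 2, x' 3, (mk_eq.2 (a3 1)).symm, (mk_eq.2 (a3 2)).symm, (mk_eq.2 (a3 3)).symm,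
    ?_, a4 1 (by norm_num), a4 2 (by norm_num), ?_⟩
  · have := a4 0 (by norm_num)
    rw [a1] at this; exact this
  · have := a4 3 (by norm_num)
    rw [a2] at this; exact this

theorem dH_hyp (hi : 1 ≤ i) (hL : 1 ≤ L) (hn : 4 * (i * 2 ^ L + 4 * i) + 14 * i ≤ n)
    (a b c e : HH i n) :
    dH i L n a c + dH i L n b e ≤ dH i L n a b + dH i L n c e + 10 ∨
    dH i L n a c + dH i L n b e ≤ dH i L n a e + dH i L n b c + 10 := by
  obtain ⟨x₀, rfl⟩ := QuotientGroup.mk_surjective a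
  obtain ⟨x₁, rfl, h1⟩ := dH_spec (i := i) (L := L) (n := n) x₀ b
  obtain ⟨x₂, rfl, h2⟩ := dH_spec (i := i) (L := L) (n := n) x₁ c
  obtain ⟨x₃, rfl, h3⟩ := dH_spec (i := i) (L := L) (n := n) x₂ e
  obtain ⟨x₄, h4', h4⟩ := dH_spec (i := i) (L := L) (n := n) x₃ (x₀ : HH i n)
  have hd := side_dd hi hL
  obtain ⟨y₁, y₂, y₃, e1, e2, e3, f0, f1, f2, f3⟩ := lift_quad (n := n) hi _ hn _ _ _ _ (hd _)
    (hd _) (hd _) (hd _) h1.le h2.le h3.le h4.le h4'.symm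
  have H := (hyp4 hi hL x₀ y₁ y₂ y₃).2.1
  rw [← e1, ← e2, ← e3] at *
  have g1 := dH_le (i := i) (L := L) (n := n) x₀ y₂
  have g2 := dH_le (i := i) (L := L) (n := n) y₁ y₃
  rw [dH_comm (y₃ : HH i n) (x₀ : HH i n)] at f3
  rw [dd_comm] at f3
  omega

end TB

/-! ### Injective hulls -/

namespace TB

/-- A left invariant pseudometric on a group. -/
structure GMet (H : Type) [Group H] where
  d : H → H → ℝ
  self : ∀ x, d x x = 0
  comm : ∀ x y, d x y = d y x
  tri : ∀ x y z, d x z ≤ d x y + d y z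
  inv : ∀ g x y, d (g * x) (g * y) = d x y

variable {H : Type} [Group H]

theorem GMet.nonneg (m : GMet H) (x y : H) : 0 ≤ m.d x y := by
  have := m.tri x y x; have := m.comm x y; have := m.self x; linarith

/-- The injective hull (space of extremal functions) of a pseudometric. -/
structure Hull (m : GMet H) where
  f : H → ℝ
  le : ∀ x y, m.d x y ≤ f x + f y
  tight : ∀ x, ∀ ε > 0, ∃ y, f x + f y ≤ m.d x y + ε

namespace Hull
variable {m : GMet H}

theorem ext' {a b : Hull m} (h : ∀ x, a.f x = b.f x) : a = b := by
  cases a; cases b; congr; exact funext h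

theorem nonneg (a : Hull m) (x : H) : 0 ≤ a.f x := by
  have := a.le x x; rw [m.self] at this; linarith

theorem lip (a : Hull m) (x y : H) : a.f x ≤ a.f y + m.d x y := by
  refine le_of_forall_pos_le_add fun ε hε => ?_
  obtain ⟨z, hz⟩ := a.tight x ε hε
  have := m.tri x y z; have := a.le y z; linarith

theorem one_sided {a b : Hull m} {r : ℝ} (h : ∀ x, a.f x - b.f x ≤ r) (x : H) :
    |a.f x - b.f x| ≤ r := by
  refine abs_le.2 ⟨?_, h x⟩
  refine le_of_forall_pos_le_add fun ε hε => ?_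
  obtain ⟨z, hz⟩ := b.tight x ε hε
  have := a.le x z; have := h z; linarith

theorem bdd (a b : Hull m) : BddAbove (Set.range fun x => |a.f x - b.f x|) := by
  refine ⟨a.f 1 + b.f 1, ?_⟩
  rintro _ ⟨x, rfl⟩
  refine one_sided (fun x => ?_) x
  have := a.lip x 1; have := b.le x 1; linarith

instance : Dist (Hull m) := ⟨fun a b => ⨆ x, |a.f x - b.f x|⟩

theorem abs_le_dist (a b : Hull m) (x : H) : |a.f x - b.f x| ≤ dist a b := le_ciSup (bdd a b) x
theorem le_add_dist (a b : Hull m) (x : H) : a.f x ≤ b.f x + dist a b := by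
  have := (abs_le.1 (abs_le_dist a b x)).2; linarith
theorem dist_le' {a b : Hull m} {r : ℝ} (h : ∀ x, a.f x - b.f x ≤ r) : dist a b ≤ r :=
  ciSup_le fun x => one_sided h x

instance : MetricSpace (Hull m) where
  dist_self a := le_antisymm (dist_le' fun x => by simp) (by
    have := abs_le_dist a a 1; simpa using this)
  dist_comm a b := by
    refine le_antisymm (dist_le' fun x => ?_) (dist_le' fun x => ?_)
    · have := (abs_le.1 (abs_le_dist b a x)).1; linarith
    · have := (abs_le.1 (abs_le_dist a b x)).1; linarith
  dist_triangle a b c := dist_le' fun x => by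
    have := le_add_dist a b x; have := le_add_dist b c x; linarith
  eq_of_dist_eq_zero {a b} h := ext' fun x => by
    have := abs_le_dist a b x; rw [h] at this
    have := abs_nonpos_iff.1 this; linarith

/-- The point of the hull given by an element of the group. -/
def pt (m : GMet H) (x : H) : Hull m where
  f := m.d x
  le y z := by have := m.tri y x z; rw [m.comm y x] at this; exact this
  tight y ε hε := ⟨x, by rw [m.self, m.comm]; linarith⟩

theorem dist_pt (a : Hull m) (x : H) : dist (pt m x) a = a.f x := by
  refine le_antisymm (dist_le' fun y => ?_) ?_
  · have := a.le x y; simp only [pt]; linarith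
  · have := le_add_dist a (pt m x) x
    rw [dist_comm] at this
    have e : (pt m x).f x = 0 := m.self x
    rw [e] at this; linarith

theorem dist_pt_pt (x y : H) : dist (pt m x) (pt m y) = m.d x y := by
  rw [dist_pt]; exact m.comm y x

theorem d_le (a b : Hull m) (x y : H) : m.d x y ≤ a.f x + dist a b + b.f y := by
  have := b.le x y; have := le_add_dist b a x; rw [dist_comm] at this; linarith

theorem exists_d_ge (a b : Hull m) {ε : ℝ} (hε : 0 < ε) :
    ∃ x y, a.f x + dist a b + b.f y ≤ m.d x y + ε := by
  obtain ⟨x, hx⟩ : ∃ x, dist a b - ε / 2 < b.f x - a.f x := by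
    by_contra! h
    have := dist_le' h
    rw [dist_comm] at this; linarith
  obtain ⟨y, hy⟩ := b.tight x (ε / 2) (by linarith)
  exact ⟨x, y, by linarith⟩

/-- The four point inequality passes to the hull. -/
theorem four (c : ℝ) (hm : ∀ x y z w, m.d x y + m.d z w ≤ max (m.d x z + m.d y w)
    (m.d x w + m.d y z) + c) (a b e k : Hull m) :
    dist a b + dist e k ≤ max (dist a e + dist b k) (dist a k + dist b e) + c := by
  refine le_of_forall_pos_le_add fun ε hε => ?_
  obtain ⟨x, y, h1⟩ := exists_d_ge a b (ε := ε / 2) (by linarith)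
  obtain ⟨z, w, h2⟩ := exists_d_ge e k (ε := ε / 2) (by linarith)
  have h3 := hm x y z w
  have := d_le a e x z; have := d_le b k y w
  have := d_le a k x w; have := d_le b e y z
  rcases max_cases (m.d x z + m.d y w) (m.d x w + m.d y z) with ⟨h, -⟩ | ⟨h, -⟩ <;> rw [h] at h3
  · have := le_max_left (dist a e + dist b k) (dist a k + dist b e); linarith
  · have := le_max_right (dist a e + dist b k) (dist a k + dist b e); linarith

theorem hyperbolic {c : ℝ} (hm : ∀ x y z w, m.d x y + m.d z w ≤ max (m.d x z + m.d y w)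
    (m.d x w + m.d y z) + 2 * c) {δ : ℝ} (hδ : c ≤ δ) : IsDeltaHyperbolic (Hull m) δ := by
  intro x y z t
  have := four _ hm x z y t
  unfold gromov
  rw [dist_comm z t, dist_comm z y] at this
  rw [dist_comm z t]
  rcases max_cases (dist x y + dist t z) (dist x t + dist y z) with ⟨h, -⟩ | ⟨h, -⟩ <;>
    rw [h] at this
  · have := min_le_left ((dist x t + dist y t - dist x y) / 2) ((dist y t + dist t z - dist y z) / 2)
    linarith
  · have := min_le_right ((dist x t + dist y t - dist x y) / 2) ((dist y t + dist t z - dist y z) / 2)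
    linarith

/-! ### Geodesics in the hull -/

/-- Functions dominating the metric; the hull consists of the minimal ones. -/
def Dom (m : GMet H) (f : H → ℝ) : Prop := ∀ x y, m.d x y ≤ f x + f y

/-- The conjugate function `f* x = sup (d x y - f y)`. -/
def star (m : GMet H) (f : H → ℝ) (x : H) : ℝ := ⨆ y, (m.d x y - f y)

theorem star_bdd {f : H → ℝ} (hf : Dom m f) (x : H) :
    BddAbove (Set.range fun y => m.d x y - f y) :=
  ⟨f x, by rintro _ ⟨y, rfl⟩; have := hf x y; simp only; linarith⟩

theorem star_le {f : H → ℝ} (hf : Dom m f) (x : H) : star m f x ≤ f x :=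
  ciSup_le fun y => by have := hf x y; linarith
theorem le_star {f : H → ℝ} (hf : Dom m f) (x y : H) : m.d x y - f y ≤ star m f x :=
  le_ciSup (star_bdd hf x) y

theorem star_lip {f g : H → ℝ} (hf : Dom m f) {r : ℝ} (h : ∀ x, f x ≤ g x + r)
    (x : H) : star m g x ≤ star m f x + r := ciSup_le fun y => by
  have := le_star hf x y; have := h y; linarith

/-- Averaging a function with its conjugate. -/
def avg (m : GMet H) (f : H → ℝ) (x : H) : ℝ := (f x + star m f x) / 2

theorem avg_dom {f : H → ℝ} (hf : Dom m f) : Dom m (avg m f) := fun x y => by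
  have := le_star hf x y; have := le_star hf y x; have := m.comm x y
  unfold avg; linarith

theorem avg_le {f : H → ℝ} (hf : Dom m f) (x : H) : avg m f x ≤ f x := by
  have := star_le hf x; unfold avg; linarith

theorem avg_lip {f g : H → ℝ} (hf : Dom m f) (hg : Dom m g) {r : ℝ} (h : ∀ x, |f x - g x| ≤ r)
    (x : H) : |avg m f x - avg m g x| ≤ r := by
  have h1 := star_lip hf (g := g) (r := r) (fun x => by have := (abs_le.1 (h x)).2; linarith) x
  have h2 := star_lip hg (g := f) (r := r) (fun x => by have := (abs_le.1 (h x)).1; linarith) x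
  have := abs_le.1 (h x)
  unfold avg
  refine abs_le.2 ⟨?_, ?_⟩ <;> linarith

theorem avg_gap {f : H → ℝ} (hf : Dom m f) (x : H) :
    avg m f x - star m (avg m f) x ≤ (f x - star m f x) / 2 := by
  have := star_lip (avg_dom hf) (g := f) (r := 0) (fun x => by have := avg_le hf x; linarith) x
  unfold avg at *; linarith

theorem iter_dom {f : H → ℝ} (hf : Dom m f) (k : ℕ) : Dom m ((avg m)^[k] f) := by
  induction k with
  | zero => exact hf
  | succ k ih => rw [Function.iterate_succ_apply']; exact avg_dom ih

theorem iter_gap {f : H → ℝ} (hf : Dom m f) (k : ℕ) (x : H) :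
    (avg m)^[k] f x - star m ((avg m)^[k] f) x ≤ (f x - star m f x) * (1 / 2) ^ k := by
  induction k with
  | zero => simp
  | succ k ih =>
    rw [Function.iterate_succ_apply', pow_succ]
    have := avg_gap (iter_dom hf k) x
    linarith

theorem iter_anti {f : H → ℝ} (hf : Dom m f) (x : H) : Antitone fun k => (avg m)^[k] f x :=
  antitone_nat_of_succ_le fun k => by
    rw [Function.iterate_succ_apply']; exact avg_le (iter_dom hf k) x

/-- The limit of iterated averaging. -/
def lim (m : GMet H) (f : H → ℝ) (x : H) : ℝ := ⨅ k, (avg m)^[k] f x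

theorem lim_tendsto {f : H → ℝ} (hf : Dom m f) (x : H) :
    Tendsto (fun k => (avg m)^[k] f x) atTop (nhds (lim m f x)) := by
  refine tendsto_atTop_ciInf (iter_anti hf x) ⟨0, ?_⟩
  rintro _ ⟨k, rfl⟩
  have := iter_dom hf k x x
  rw [m.self] at this; simp only; linarith

/-- The retraction of the dominating functions onto the hull. -/
def retr (f : H → ℝ) (hf : Dom m f) : Hull m where
  f := lim m f
  le x y := ge_of_tendsto' ((lim_tendsto hf x).add (lim_tendsto hf y)) fun k => iter_dom hf k x y
  tight x ε hε := by
    obtain ⟨k, hk⟩ : ∃ k : ℕ, (f x - star m f x) * (1 / 2) ^ k < ε / 2 := by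
      have h : Tendsto (fun k : ℕ => (f x - star m f x) * (1 / 2) ^ k) atTop
          (nhds ((f x - star m f x) * 0)) :=
        (tendsto_pow_atTop_nhds_zero_of_lt_one (by norm_num) (by norm_num)).const_mul _
      rw [mul_zero] at h
      exact (h.eventually (gt_mem_nhds (by linarith : 0 < ε / 2))).exists
    have h1 := iter_gap hf k x
    obtain ⟨y, hy⟩ : ∃ y, star m ((avg m)^[k] f) x - ε / 2 < m.d x y - (avg m)^[k] f y :=
      exists_lt_of_lt_ciSup (by unfold star; linarith)
    have hx := (iter_anti hf x).le_of_tendsto (lim_tendsto hf x) k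
    have hy' := (iter_anti hf y).le_of_tendsto (lim_tendsto hf y) k
    exact ⟨y, by linarith⟩

theorem retr_lip {f g : H → ℝ} (hf : Dom m f) (hg : Dom m g) {r : ℝ}
    (h : ∀ x, |f x - g x| ≤ r) : dist (retr f hf) (retr g hg) ≤ r := by
  refine dist_le' fun x => ?_
  have key : ∀ k, ∀ x, |(avg m)^[k] f x - (avg m)^[k] g x| ≤ r := by
    intro k
    induction k with
    | zero => exact h
    | succ k ih =>
      simp only [Function.iterate_succ_apply']
      exact avg_lip (iter_dom hf k) (iter_dom hg k) ih
  exact le_of_tendsto' ((lim_tendsto hf x).sub (lim_tendsto hg x)) fun k =>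
    (abs_le.1 (key k x)).2

theorem retr_self (a : Hull m) (ha : Dom m a.f) : retr a.f ha = a := by
  have h : avg m a.f = a.f := by
    funext x
    refine le_antisymm (avg_le ha x) ?_
    have : a.f x ≤ star m a.f x := le_of_forall_pos_le_add fun ε hε => by
      obtain ⟨y, hy⟩ := a.tight x ε hε
      have := le_star ha x y; linarith
    unfold avg; linarith
  refine ext' fun x => ?_
  have h' : ∀ k, (avg m)^[k] a.f = a.f := fun k => Function.iterate_fixed h k
  simp [retr, lim, h']

theorem geodesic : IsGeodesicSpace (Hull m) := by
  intro a b
  by_cases hab : dist a b = 0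
  · refine ⟨fun _ => a, rfl, dist_eq_zero.1 hab, ?_⟩
    rintro s ⟨hs1, hs2⟩ t ⟨ht1, ht2⟩
    rw [dist_self, show s = t by linarith]; simp
  have hpos : 0 < dist a b := lt_of_le_of_ne dist_nonneg (Ne.symm hab)
  set D := dist a b
  let seg : ℝ → H → ℝ := fun s x => (1 - s / D) * a.f x + s / D * b.f x
  have hdom : ∀ s, 0 ≤ s → s ≤ D → Dom m (seg s) := by
    intro s h0 h1 x y
    have e0 : 0 ≤ s / D := by positivity
    have e1 : s / D ≤ 1 := (div_le_one hpos).2 h1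
    have := a.le x y; have := b.le x y
    simp only [seg]; nlinarith
  let γ : ℝ → Hull m := fun s => if h : 0 ≤ s ∧ s ≤ D then retr (seg s) (hdom s h.1 h.2) else a
  have hγ : ∀ s (h : 0 ≤ s ∧ s ≤ D), γ s = retr (seg s) (hdom s h.1 h.2) := fun s h => dif_pos h
  have g0 : γ 0 = a := by
    rw [hγ 0 ⟨le_rfl, hpos.le⟩]
    have : seg 0 = a.f := by funext x; simp [seg]
    simp only [this]; exact retr_self a _
  have g1 : γ D = b := by
    rw [hγ D ⟨hpos.le, le_rfl⟩]
    have : seg D = b.f := by funext x; simp [seg, div_self hab]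
    simp only [this]; exact retr_self b _
  have lip : ∀ s, 0 ≤ s ∧ s ≤ D → ∀ t, 0 ≤ t ∧ t ≤ D → dist (γ s) (γ t) ≤ |s - t| := by
    intro s hs t ht
    rw [hγ s hs, hγ t ht]
    refine retr_lip _ _ fun x => ?_
    have e : seg s x - seg t x = (s - t) * ((b.f x - a.f x) / D) := by
      simp only [seg]; field_simp; ring
    rw [e, abs_mul]
    have : |(b.f x - a.f x) / D| ≤ 1 := by
      rw [abs_div, abs_of_pos hpos, div_le_one hpos, abs_sub_comm]; exact abs_le_dist a b x
    nlinarith [abs_nonneg (s - t)]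
  refine ⟨γ, g0, g1, ?_⟩
  have key : ∀ s, 0 ≤ s ∧ s ≤ D → ∀ t, 0 ≤ t ∧ t ≤ D → s ≤ t → t - s ≤ dist (γ s) (γ t) := by
    intro s hs t ht hst
    have h1 := lip 0 ⟨le_rfl, hpos.le⟩ s hs
    have h2 := lip t ht D ⟨hpos.le, le_rfl⟩
    rw [g0, zero_sub, abs_neg, abs_of_nonneg hs.1] at h1
    rw [g1, abs_sub_comm, abs_of_nonneg (by linarith [ht.2])] at h2
    have := dist_triangle4 a (γ s) (γ t) b
    linarith
  rintro s ⟨hs1, hs2⟩ t ⟨ht1, ht2⟩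
  refine le_antisymm (lip s ⟨hs1, hs2⟩ t ⟨ht1, ht2⟩) ?_
  rcases le_total s t with h | h
  · rw [abs_sub_comm, abs_of_nonneg (by linarith)]; exact key s ⟨hs1, hs2⟩ t ⟨ht1, ht2⟩ h
  · rw [abs_of_nonneg (by linarith), dist_comm]; exact key t ⟨ht1, ht2⟩ s ⟨hs1, hs2⟩ h

/-! ### The action on the hull -/

instance : MulAction H (Hull m) where
  smul h a :=
    { f := fun x => a.f (h⁻¹ * x)
      le := fun x y => by rw [← m.inv h⁻¹]; exact a.le _ _
      tight := fun x ε hε => by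
        obtain ⟨y, hy⟩ := a.tight (h⁻¹ * x) ε hε
        refine ⟨h * y, ?_⟩
        rw [inv_mul_cancel_left, ← m.inv h⁻¹ x, inv_mul_cancel_left]; exact hy }
  one_smul a := ext' fun x => by change a.f (1⁻¹ * x) = _; simp
  mul_smul g h a := ext' fun x => by
    change a.f ((g * h)⁻¹ * x) = a.f (h⁻¹ * (g⁻¹ * x)); simp [mul_assoc]

theorem smul_f (h : H) (a : Hull m) (x : H) : (h • a).f x = a.f (h⁻¹ * x) := rfl

theorem dist_smul (h : H) (a b : Hull m) : dist (h • a) (h • b) = dist a b := by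
  refine le_antisymm (dist_le' fun x => ?_) (dist_le' fun x => ?_)
  · have := le_add_dist a b (h⁻¹ * x); rw [smul_f, smul_f]; linarith
  · have := le_add_dist (h • a) (h • b) (h * x)
    rw [smul_f, smul_f, inv_mul_cancel_left] at this; linarith

theorem isometric : IsometricAction H (Hull m) := fun h =>
  Isometry.of_dist_eq fun a b => dist_smul h a b

theorem smul_pt (h x : H) : h • pt m x = pt m (h * x) := ext' fun y => by
  rw [smul_f]; simp only [pt]; rw [← m.inv h, mul_inv_cancel_left]

end Hull
end TB

/-! ### Torsion and virtually cyclic subgroups -/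

namespace TB
open PLine

variable {i n : ℕ}

/-- A geodesic `[x, y]` runs along `ℓ` for `|ℓ.proj x - ℓ.proj y|` steps; this gives the points. -/
theorem mem_line_of_btw (ℓ : PLine) {x y z : F} (h : Btw x z y)
    (h0 : nd y (ℓ.f (ℓ.proj y)) ≤ nd y z)
    (h1 : nd y z ≤ nd y (ℓ.f (ℓ.proj y)) + (ℓ.proj x - ℓ.proj y).natAbs)
    (hne : ℓ.proj x ≠ ℓ.proj y) :
    ∃ c, z = ℓ.f c ∧ (c - ℓ.proj y).natAbs = nd y z - nd y (ℓ.f (ℓ.proj y)) := by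
  obtain ⟨c, hc, hc'⟩ : ∃ c : ℤ, (c - ℓ.proj y).natAbs = nd y z - nd y (ℓ.f (ℓ.proj y)) ∧
      (ℓ.proj x - c).natAbs + (c - ℓ.proj y).natAbs = (ℓ.proj x - ℓ.proj y).natAbs := by
    rcases le_total (ℓ.proj x) (ℓ.proj y) with hl | hl
    · exact ⟨ℓ.proj y - (nd y z - nd y (ℓ.f (ℓ.proj y)) : ℕ), by omega, by omega⟩
    · exact ⟨ℓ.proj y + (nd y z - nd y (ℓ.f (ℓ.proj y)) : ℕ), by omega, by omega⟩
  refine ⟨c, ?_, hc⟩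
  refine h.symm.uniq (ℓ.btw_of_proj hne hc').symm ?_
  rw [ℓ.proj_spec y c]; omega

/-- Two lines fellow travelling a geodesic `[x, y]` along a long common piece coincide. -/
theorem same_of_fellow {ℓ₁ ℓ₂ : PLine} (h1 : ℓ₁.τ ≤ i) (h2 : ℓ₂.τ ≤ i) (hi : 1 ≤ i) {x y : F}
    {r : ℕ} (e1 : nd y (ℓ₁.f (ℓ₁.proj y)) ≤ r) (e2 : nd y (ℓ₂.f (ℓ₂.proj y)) ≤ r)
    (a1 : r + 2 * i ≤ nd y (ℓ₁.f (ℓ₁.proj y)) + (ℓ₁.proj x - ℓ₁.proj y).natAbs)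
    (a2 : r + 2 * i ≤ nd y (ℓ₂.f (ℓ₂.proj y)) + (ℓ₂.proj x - ℓ₂.proj y).natAbs) :
    Same ℓ₁ ℓ₂ := by
  have n1 : ℓ₁.proj x ≠ ℓ₁.proj y := fun h => by rw [h] at a1; simp at a1; omega
  have n2 : ℓ₂.proj x ≠ ℓ₂.proj y := fun h => by rw [h] at a2; simp at a2; omega
  have hd := ℓ₁.nd_of_proj_ne n1
  rw [nd_comm (ℓ₁.f _) y] at hd
  obtain ⟨z, hz, hz'⟩ := exists_btw y x r (by rw [nd_comm]; omega)
  obtain ⟨z', hy, hy'⟩ := exists_btw y x (r + 2 * i) (by rw [nd_comm]; omega)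
  have bz : Btw x z y := Btw.symm hz'
  have bz' : Btw x z' y := Btw.symm hy'
  obtain ⟨c, rfl, hc⟩ := mem_line_of_btw ℓ₁ bz (by omega) (by omega) n1
  obtain ⟨c', rfl, hc'⟩ := mem_line_of_btw ℓ₁ bz' (by omega) (by omega) n1
  obtain ⟨d, hd1, -⟩ := mem_line_of_btw ℓ₂ bz (by omega) (by omega) n2
  obtain ⟨d', hd2, -⟩ := mem_line_of_btw ℓ₂ bz' (by omega) (by omega) n2
  have hcc : 2 * i ≤ (c - c').natAbs := by omega
  rcases le_total c c' with h | h
  · exact same_of_common ℓ₁ ℓ₂ (c₀ := c) (c₁ := c') (by omega) ⟨d, hd1.symm⟩ ⟨d', hd2.symm⟩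
  · exact same_of_common ℓ₁ ℓ₂ (c₀ := c') (c₁ := c) (by omega) ⟨d', hd2.symm⟩ ⟨d, hd1.symm⟩

/-- Bending along `ℓ` by `g ^ n` shortens a geodesic that follows `ℓ` for more than half of the
translation length of `g ^ n`. -/
theorem exists_bend {ℓ : PLine} (hℓ : ℓ.τ ≤ i) {g : F} {t : ℤ} (hg : ℓ.IsTr g t) {x y : F}
    (h : n * t.natAbs < 2 * (ℓ.proj x - ℓ.proj y).natAbs) (ht : t ≠ 0) (hn : 0 < n) :
    ∃ m ∈ NN i n, nd x (m * y) < nd x y := by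
  have key : ∀ (g : F) (t : ℤ), ℓ.IsTr g t → t ≠ 0 →
      n * t.natAbs < 2 * (ℓ.proj x - ℓ.proj y).natAbs → 0 ≤ t * (ℓ.proj x - ℓ.proj y) →
      ∃ m ∈ NN i n, nd x (m * y) < nd x y := by
    intro g t hg ht h hs
    refine ⟨g ^ n, pow_mem_NN hℓ ⟨t, hg⟩, ?_⟩
    have hp := (hg.pow n).proj y
    have hq : nd (ℓ.f (ℓ.proj (g ^ n * y))) (g ^ n * y) = nd (ℓ.f (ℓ.proj y)) y := by
      rw [hp, ← hg.pow n, nd_mul]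
    have hne : ℓ.proj x ≠ ℓ.proj y := fun e => by rw [e] at h; simp at h
    have := ℓ.nd_of_proj_ne hne
    have h2 := ℓ.nd_le_proj x (g ^ n * y)
    rw [hq] at h2
    suffices (ℓ.proj x - ℓ.proj (g ^ n * y)).natAbs < (ℓ.proj x - ℓ.proj y).natAbs by omega
    rw [hp]
    have e : ((n * t : ℤ)).natAbs = n * t.natAbs := by rw [Int.natAbs_mul]; simp
    have hnt : (0 : ℤ) ≤ n * t * (ℓ.proj x - ℓ.proj y) := by
      rw [mul_assoc]; positivity
    have hnz : (n * t : ℤ) ≠ 0 := by positivity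
    rw [← e] at h
    generalize (n * t : ℤ) = T at *
    rcases lt_or_gt_of_ne hnz with hT | hT
    · have : ℓ.proj x - ℓ.proj y ≤ 0 := by nlinarith
      omega
    · have : 0 ≤ ℓ.proj x - ℓ.proj y := by nlinarith
      omega
  rcases le_total 0 (t * (ℓ.proj x - ℓ.proj y)) with hs | hs
  · exact key g t hg ht h hs
  · exact key g⁻¹ (-t) hg.inv (by simpa using ht) (by rwa [Int.natAbs_neg])
      (by rw [neg_mul]; linarith)

/-- `a` makes no detour along a line: it is as short as its class modulo `NN i n` permits. -/
def Short (i n : ℕ) (a : F) : Prop := ∀ ℓ : PLine, ℓ.τ ≤ i → ∀ g t, ℓ.IsTr g t → t ≠ 0 →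
  2 * (ℓ.proj 1 - ℓ.proj a).natAbs ≤ n * t.natAbs

theorem exists_short (hn : 0 < n) (z : HH i n) : ∃ a : F, (a : HH i n) = z ∧ Short i n a := by
  obtain ⟨a0, ha0⟩ := QuotientGroup.mk_surjective z
  have hex : ∃ k, ∃ a : F, (a : HH i n) = z ∧ nd 1 a = k := ⟨_, a0, ha0, rfl⟩
  classical
  obtain ⟨a, ha, hk⟩ := Nat.find_spec hex
  refine ⟨a, ha, fun ℓ hℓ g t hg ht => ?_⟩
  by_contra! hc
  obtain ⟨m, hm, hlt⟩ := exists_bend hℓ hg hc ht hn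
  exact Nat.find_min hex (by rw [← hk]; exact hlt) ⟨m * a, by rw [mk_mul_mem hm, ha], rfl⟩

theorem strip_arith (hi : 1 ≤ i) {P0 Pg Pga Pgak Ph T : ℤ} {M : ℕ} (h1 : (Ph + T - P0).natAbs ≤ 6 * i)
    (h2 : 2 * (Pg - Pga).natAbs ≤ T.natAbs) (h3 : 2 * (Ph - Pgak).natAbs ≤ T.natAbs)
    (h4 : (P0 - Pg).natAbs ≤ M) (h5 : (Pga - Pgak).natAbs ≤ M)
    (h6 : 12 * M + 28 * i ≤ T.natAbs) : 4 * M + 8 * i ≤ (Pg - Pga).natAbs ∧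
      4 * M + 8 * i ≤ (Ph - Pgak).natAbs ∧ Pg - Pga ≠ Ph - Pgak := by
  rcases le_total 0 T with h | h
  · refine ⟨by omega, by omega, fun h7 => ?_⟩; omega
  · refine ⟨by omega, by omega, fun h7 => ?_⟩; omega

/-- A thin strip in the quotient lifts: if `g`, `k` are short and `a` is a shortest lift, then
`g a = a k` in the quotient only if it holds in the free group. -/
theorem strip (hi : 1 ≤ i) {M : ℕ} (hn : 12 * M + 28 * i ≤ n) {g k a : F} (hg : nd 1 g ≤ M)
    (hk : nd 1 k ≤ M) (ha : Short i n a) (hN : g * a * k⁻¹ * a⁻¹ ∈ NN i n) :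
    g * a * k⁻¹ * a⁻¹ = 1 := by
  by_contra hne
  obtain ⟨ℓ, w, t, hℓ, hw, ht, hgood⟩ := good_of_mem_NN (by omega) hi hN hne
  set h := g * a * k⁻¹ * a⁻¹ with hh
  have hT : 1 ≤ t.natAbs := by omega
  have hnt : n ≤ n * t.natAbs := Nat.le_mul_of_pos_right _ hT
  have e : ((n * t : ℤ)).natAbs = n * t.natAbs := by rw [Int.natAbs_mul]; simp
  -- the two copies of the geodesic from `1` to `a`
  have s1 := ha (ℓ.smul g⁻¹) hℓ (g⁻¹ * w * g⁻¹⁻¹) t (hw.conj _) ht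
  have s2 := ha (ℓ.smul h⁻¹) hℓ (h⁻¹ * w * h⁻¹⁻¹) t (hw.conj _) ht
  have hha : h * a = g * a * k⁻¹ := by rw [hh]; group
  simp only [proj_smul', inv_inv, mul_one, hha] at s1 s2
  have d1 := (ℓ.proj_lip 1 g).trans hg
  have hk2 : nd (g * a) (g * a * k⁻¹) ≤ M := by
    have := nd_mul (g * a) 1 k⁻¹
    rw [mul_one] at this; rw [this, ← nd_mul k, nd_comm]; simpa using hk
  have d2 := (ℓ.proj_lip _ _).trans hk2
  generalize hT' : (n * t : ℤ) = T at *
  rw [← e] at s1 s2 hnt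
  have A : ((ℓ.smul g⁻¹).proj 1 - (ℓ.smul g⁻¹).proj a) = ℓ.proj g - ℓ.proj (g * a) := by
    simp [proj_smul']
  have B : ((ℓ.smul h⁻¹).proj 1 - (ℓ.smul h⁻¹).proj a) = ℓ.proj h - ℓ.proj (g * a * k⁻¹) := by
    simp [proj_smul', hha]
  have e1 : nd a ((ℓ.smul g⁻¹).f ((ℓ.smul g⁻¹).proj a)) = nd (g * a) (ℓ.f (ℓ.proj (g * a))) := by
    rw [proj_smul', smul_f, inv_inv, ← nd_mul g]; simp
  have e2 : nd a ((ℓ.smul h⁻¹).f ((ℓ.smul h⁻¹).proj a)) =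
      nd (g * a * k⁻¹) (ℓ.f (ℓ.proj (g * a * k⁻¹))) := by
    rw [proj_smul', smul_f, inv_inv, ← nd_mul h, ← hha]; simp
  have c1 := nd_tri (g * a) (g * a * k⁻¹) (ℓ.f (ℓ.proj (g * a * k⁻¹)))
  have c2 := nd_tri (g * a * k⁻¹) (g * a) (ℓ.f (ℓ.proj (g * a)))
  rw [ℓ.proj_spec] at c1 c2
  rw [nd_comm (g * a * k⁻¹) (g * a)] at c2
  obtain ⟨ar1, ar2, ar3⟩ := strip_arith hi hgood s1 s2 d1 d2 (hn.trans hnt)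
  clear hgood s1 s2 hnt hT hT' e ht
  have hsame : Same (ℓ.smul g⁻¹) (ℓ.smul h⁻¹) := by
    refine same_of_fellow (i := i) hℓ hℓ hi (x := 1) (y := a)
      (r := max (nd (g * a) (ℓ.f (ℓ.proj (g * a))))
        (nd (g * a * k⁻¹) (ℓ.f (ℓ.proj (g * a * k⁻¹))))) ?_ ?_ ?_ ?_
    · rw [e1]; exact le_max_left _ _
    · rw [e2]; exact le_max_right _ _
    · rw [e1, A]
      have := max_le_iff.2 ⟨(by omega : nd (g * a) (ℓ.f (ℓ.proj (g * a))) ≤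
        nd (g * a) (ℓ.f (ℓ.proj (g * a))) + 2 * M), (by omega :
        nd (g * a * k⁻¹) (ℓ.f (ℓ.proj (g * a * k⁻¹))) ≤
        nd (g * a) (ℓ.f (ℓ.proj (g * a))) + 2 * M)⟩
      linarith
    · rw [e2, B]
      have := max_le_iff.2 ⟨(by omega : nd (g * a) (ℓ.f (ℓ.proj (g * a))) ≤
        nd (g * a * k⁻¹) (ℓ.f (ℓ.proj (g * a * k⁻¹))) + 2 * M), (by omega :
        nd (g * a * k⁻¹) (ℓ.f (ℓ.proj (g * a * k⁻¹))) ≤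
        nd (g * a * k⁻¹) (ℓ.f (ℓ.proj (g * a * k⁻¹))) + 2 * M)⟩
      linarith
  rcases hsame.cases with ⟨s, hs⟩ | ⟨s, hs⟩
  · -- translations preserve the direction, but the two copies run in opposite directions
    have hp : ∀ x, (ℓ.smul h⁻¹).proj x = s + (ℓ.smul g⁻¹).proj x := fun x =>
      proj_unique _ fun b => by
        have := (ℓ.smul g⁻¹).proj_spec x (b - s)
        rw [hs, hs] at this
        rw [show s + (b - s) = b by ring] at this
        rw [this]; congr 2; ring
    rw [hp, hp] at B
    exact ar3 (by rw [← A, ← B]; ring)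
  · refine not_reversing ℓ (g := h * g⁻¹) (s := s) fun c => ?_
    have := hs c
    rw [smul_f, smul_f] at this
    rw [mul_assoc, this]; group

theorem same_of_isTr {ℓ ℓ' : PLine} {g : F} {t t' : ℤ} (h : ℓ.IsTr g t) (h' : ℓ'.IsTr g t')
    (ht : t ≠ 0) : Same ℓ ℓ' := by
  have key := (h.pow (ℓ.τ + ℓ'.τ)).proj (ℓ'.f 0)
  rw [h'.pow] at key
  refine same_of_overlap ℓ ℓ' (a := 0 + ((ℓ.τ + ℓ'.τ : ℕ) : ℤ) * t') (b := 0) ?_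
  rw [key, add_sub_cancel_left, Int.natAbs_mul, Int.natAbs_natCast]
  exact Nat.le_mul_of_pos_right _ (by omega)

/-- Torsion in the quotient comes from the lines. -/
theorem torsion_lift (hi : 1 ≤ i) (hn : 16 * i ≤ n) {s : HH i n} (hs : IsOfFinOrder s) (h1 : s ≠ 1) :
    ∃ (ℓ : PLine) (g : F), ℓ.τ ≤ i ∧ ℓ.St g ∧ (g : HH i n) = s := by
  classical
  obtain ⟨a0, ha0⟩ := QuotientGroup.mk_surjective s
  have hex : ∃ k, ∃ a p : F, (a : HH i n) = s ∧ nd p (a * p) = k := ⟨_, a0, 1, ha0, rfl⟩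
  obtain ⟨a, p, ha, hk⟩ := Nat.find_spec hex
  have hmin : ∀ a' p' : F, (a' : HH i n) = s → nd p (a * p) ≤ nd p' (a' * p') := by
    intro a' p' h
    rw [hk]; exact Nat.find_min' hex ⟨a', p', h, rfl⟩
  have ha1 : a ≠ 1 := fun h => h1 (by rw [← ha, h]; rfl)
  obtain ⟨A, hw, hτ, hf0⟩ := exists_axis_of_min ha1 (fun q => hmin a q ha)
  obtain ⟨r, hr, hsr⟩ := isOfFinOrder_iff_pow_eq_one.1 hs
  have hA : A.IsTr a A.τ := by rw [← hw]; exact A.isTr_w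
  have hN : p⁻¹ * a ^ r * p ∈ NN i n := by
    have h0 : a ^ r ∈ NN i n := by
      rw [← QuotientGroup.eq_one_iff, QuotientGroup.mk_pow, ha, hsr]
    simpa using (NN_normal i n).conj_mem _ h0 p⁻¹
  have hne : p⁻¹ * a ^ r * p ≠ 1 := by
    intro h
    have h2 : a ^ r = 1 := by
      have := congrArg (fun x => p * x * p⁻¹) h
      simpa [mul_assoc] using this
    have := (hA.pow r).unique (t' := 0) (by rw [h2]; exact A.isTr_one)
    have := A.pos
    rcases mul_eq_zero.1 ‹_› with h | h <;> omega
  obtain ⟨ℓ₀, w, t, hℓ, hw', ht, hgood⟩ := good_of_mem_NN (by omega) hi hN hne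
  have hT : 1 ≤ t.natAbs := by omega
  have hnt : n ≤ n * t.natAbs := Nat.le_mul_of_pos_right _ hT
  have e : ((n * t : ℤ)).natAbs = n * t.natAbs := by rw [Int.natAbs_mul]; simp
  set ℓ := ℓ₀.smul p with hℓdef
  have hg' : (ℓ.proj (a ^ r * p) + n * t - ℓ.proj p).natAbs ≤ 6 * i := by
    rw [hℓdef, proj_smul', proj_smul']; simpa [mul_assoc] using hgood
  have hwt : ℓ.IsTr (p * w * p⁻¹) t := hw'.conj p
  have hp0 : p = A.f 0 := hf0.symm
  have hpr : a ^ r * p = A.f (r * A.τ) := by rw [hp0, hA.pow r]; simp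
  rw [hpr, hp0] at hg'
  set K := (ℓ.proj (A.f (r * A.τ)) - ℓ.proj (A.f 0)).natAbs with hK
  have hKn : n * t.natAbs ≤ K + 6 * i := by rw [← e]; omega
  by_cases hbig : i + A.τ ≤ K
  · have hs : Same ℓ A := same_of_overlap ℓ A (a := r * A.τ) (b := 0)
      ((Nat.add_le_add_right (by exact hℓ) _).trans hbig)
    exact ⟨ℓ, a, hℓ, St.of_same hs.symm ⟨_, hA⟩, ha⟩
  · exfalso
    have hpne : ℓ.proj (A.f 0) ≠ ℓ.proj (A.f (r * A.τ)) := by omega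
    obtain ⟨c0, hc0⟩ := ℓ.mem_range_of_proj A hpne (c := ℓ.proj (A.f 0)) (by omega)
    obtain ⟨c1, hc1⟩ := ℓ.mem_range_of_proj A hpne (c := ℓ.proj (A.f (r * A.τ))) (by omega)
    have hd := ℓ.nd_of_proj_ne hpne
    rw [hc0, hc1, A.iso, A.iso, A.iso] at hd
    have hcc := ℓ.iso (ℓ.proj (A.f 0)) (ℓ.proj (A.f (r * A.τ)))
    rw [hc0, hc1, A.iso] at hcc
    have hrτ : (0 : ℤ) ≤ r * A.τ := by positivity
    have hc01 : c1 = c0 + K := by omega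
    -- the endpoints of one period of the axis, starting where it meets `ℓ`
    have hx : ℓ.proj (A.f c0) = ℓ.proj (A.f 0) := by rw [← hc0, proj_f]
    have hy1 : ℓ.proj (A.f c1) = ℓ.proj (A.f (r * A.τ)) := by rw [← hc1, proj_f]
    have hy : K ≤ (ℓ.proj (A.f c0) - ℓ.proj (A.f (c0 + A.τ))).natAbs + i := by
      rcases le_total (K : ℤ) A.τ with h | h
      · have hb : Btw (A.f c0) (A.f c1) (A.f (c0 + A.τ)) := by
          unfold Btw; rw [A.iso, A.iso, A.iso]; omega
        have := ℓ.proj_btw hb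
        omega
      · have := ℓ.proj_lip (A.f c1) (A.f (c0 + A.τ))
        rw [A.iso] at this
        omega
    obtain ⟨m, hm, hlt⟩ := exists_bend (n := n) (i := i) (show ℓ.τ ≤ i from hℓ) hwt (x := A.f c0)
      (y := A.f (c0 + A.τ)) (by omega) ht (by omega)
    have h2 := hmin (m * a) (A.f c0) (by
      rw [mk_mul_mem hm, ha])
    rw [mul_assoc, hA, ← hτ] at h2
    have h3 : nd (A.f c0) (A.f (c0 + A.τ)) = A.τ := by rw [A.iso]; omega
    omega

/-- The element of `St ℓ` with the least positive translation. -/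
theorem exists_gen (ℓ : PLine) : ∃ (g : F) (t : ℤ), ℓ.IsTr g t ∧ 0 < t ∧ t ≤ ℓ.τ ∧
    ∀ h, ℓ.St h → ∃ k : ℤ, h = g ^ k := by
  classical
  have hex : ∃ k : ℕ, 0 < k ∧ ∃ g, ℓ.IsTr g k := ⟨ℓ.τ, ℓ.pos, ℓ.w, ℓ.isTr_w⟩
  obtain ⟨h0, g, hg⟩ := Nat.find_spec hex
  set t := Nat.find hex
  refine ⟨g, t, hg, by exact_mod_cast h0, by
    exact_mod_cast Nat.find_min' hex ⟨ℓ.pos, ℓ.w, ℓ.isTr_w⟩, ?_⟩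
  rintro h ⟨u, hu⟩
  refine ⟨u / t, ?_⟩
  have h1 := hu.mul (hg.zpow (u / t)).inv
  have h2 : u + -(u / t * t) = u % t := by rw [Int.emod_def]; ring
  rw [h2] at h1
  by_cases hz : u % t = 0
  · rw [hz] at h1; exact mul_inv_eq_one.1 h1.eq_one
  · exfalso
    have hpos := Int.emod_nonneg u (show (t : ℤ) ≠ 0 by omega)
    have hlt := Int.emod_lt_of_pos u (show (0 : ℤ) < t by omega)
    obtain ⟨v, hv⟩ := Int.eq_ofNat_of_zero_le hpos
    rw [hv] at h1 hz hlt
    exact Nat.find_min hex (by exact_mod_cast hlt) ⟨by omega, _, h1⟩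

theorem torsion_pow (hi : 1 ≤ i) (hn : 16 * i ≤ n) {s : HH i n} (hs : IsOfFinOrder s) :
    s ^ n = 1 := by
  by_cases h1 : s = 1
  · rw [h1, one_pow]
  obtain ⟨ℓ, g, hℓ, hg, rfl⟩ := torsion_lift hi hn hs h1
  rw [← QuotientGroup.mk_pow, QuotientGroup.eq_one_iff]
  exact pow_mem_NN hℓ hg

/-- Centralizers of nontrivial torsion elements are torsion. -/
theorem torsion_centralizer (hi : 1 ≤ i) (hn : 40 * i ≤ n) (hp : n.Prime) {s z : HH i n}
    (hs : IsOfFinOrder s) (h1 : s ≠ 1) (hz : Commute s z) : z ^ n = 1 := by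
  obtain ⟨ℓ, g, hℓ, hg, rfl⟩ := torsion_lift hi (by omega) hs h1
  obtain ⟨g₀, t, hg₀, ht, htτ, hgen⟩ := exists_gen ℓ
  obtain ⟨k, rfl⟩ := hgen g hg
  have hpow : (g₀ : HH i n) ^ n = 1 := by
    rw [← QuotientGroup.mk_pow, QuotientGroup.eq_one_iff]; exact pow_mem_NN hℓ ⟨_, hg₀⟩
  have hcop : ¬ (n : ℤ) ∣ k := by
    rintro ⟨j, rfl⟩
    apply h1
    rw [QuotientGroup.mk_zpow, zpow_mul, zpow_natCast, hpow, one_zpow]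
  have hgz : Commute (g₀ : HH i n) z := by
    have hc : IsCoprime (n : ℤ) k := (Nat.prime_iff_prime_int.1 hp).coprime_iff_not_dvd.2 hcop
    obtain ⟨u, v, huv⟩ := hc
    have e : (g₀ : HH i n) = ((g₀ ^ k : F) : HH i n) ^ v := by
      rw [QuotientGroup.mk_zpow, ← zpow_mul]
      have : k * v = 1 - n * u := by linarith
      rw [this, zpow_sub, zpow_mul, zpow_natCast, hpow]; simp
    rw [e]; exact hz.zpow_left v
  -- conjugate so that the line passes through the identity
  set b := ℓ.f 0 with hb
  set g₁ := b⁻¹ * g₀ * b with hg₁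
  have hline : (ℓ.smul b⁻¹).IsTr g₁ t := by
    have := hg₀.conj b⁻¹; rwa [inv_inv] at this
  obtain ⟨a, ha, hsh⟩ := exists_short (i := i) (n := n) (by omega) ((b : HH i n)⁻¹ * z * b)
  have hnorm : nd 1 g₁ ≤ i := by
    have := nd_mul b 1 g₁
    rw [← this, hg₁, mul_one, show b * (b⁻¹ * g₀ * b) = g₀ * b by group, hb, hg₀, ℓ.iso]
    omega
  have hN : g₁ * a * g₁⁻¹ * a⁻¹ ∈ NN i n := by
    rw [← QuotientGroup.eq_one_iff, hg₁]
    simp only [QuotientGroup.mk_mul, QuotientGroup.mk_inv, ha]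
    have := hgz.eq
    have h3 : (g₀ : HH i n) * z * (g₀ : HH i n)⁻¹ * z⁻¹ = 1 := by rw [this]; group
    calc _ = (b : HH i n)⁻¹ * ((g₀ : HH i n) * z * (g₀ : HH i n)⁻¹ * z⁻¹) * b := by group
      _ = 1 := by rw [h3]; group
  have hone := strip hi (M := i) (by omega) hnorm hnorm hsh hN
  have hcomm : a * g₁ * a⁻¹ = g₁ := by
    have : g₁ * a * g₁⁻¹ * a⁻¹ = g₁ * (a * g₁ * a⁻¹)⁻¹ := by group
    rw [this, mul_inv_eq_one] at hone
    exact hone.symm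
  have hst : (ℓ.smul b⁻¹).St a := by
    refine st_of_same (same_of_isTr (g := g₁) (t := t) ?_ hline (by omega))
    have := hline.conj a
    rwa [hcomm] at this
  have hap : (a : HH i n) ^ n = 1 := by
    rw [← QuotientGroup.mk_pow, QuotientGroup.eq_one_iff]; exact pow_mem_NN (by exact hℓ) hst
  rw [ha] at hap
  have e : (b : HH i n)⁻¹ * z * b = (b : HH i n)⁻¹ * z * (b : HH i n)⁻¹⁻¹ := by group
  rw [e, conj_pow, mul_inv_eq_one] at hap
  simpa using hap

/-- A virtually cyclic group with an element of infinite order, in which torsion has odd exponent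
`n` and torsion elements have torsion centralizers, is infinite cyclic. -/
theorem cyclic_of_virtuallyCyclic {K : Type*} [Group K] {n : ℕ} (hodd : Odd n)
    (h1 : ∀ s : K, IsOfFinOrder s → s ^ n = 1)
    (h2 : ∀ s z : K, IsOfFinOrder s → s ≠ 1 → Commute s z → z ^ n = 1)
    (hv : VirtuallyCyclic K) (hinf : ∃ g : K, ¬ IsOfFinOrder g) : IsCyclic K ∧ Infinite K := by
  obtain ⟨C, hC, hfin⟩ := hv
  have hnpos : 0 < n := hodd.pos
  obtain ⟨g₀, hg₀⟩ := hinf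
  have : Infinite K := by
    by_contra h
    rw [not_infinite_iff_finite] at h
    exact hg₀ (isOfFinOrder_of_finite g₀)
  refine ⟨?_, this⟩
  set N := C.normalCore
  have hNC : N ≤ C := Subgroup.normalCore_le C
  have : N.FiniteIndex := inferInstance
  have : IsCyclic N := isCyclic_of_injective (Subgroup.inclusion hNC)
    (Subgroup.inclusion_injective hNC)
  obtain ⟨⟨c, hcN⟩, hc⟩ := IsCyclic.exists_generator (α := N)
  have hgen : ∀ x ∈ N, ∃ k : ℤ, c ^ k = x := by
    intro x hx
    obtain ⟨k, hk⟩ := hc ⟨x, hx⟩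
    exact ⟨k, congrArg Subtype.val hk⟩
  have hidx : 0 < N.index := Nat.pos_of_ne_zero Subgroup.FiniteIndex.index_ne_zero
  have hcinf : ¬ IsOfFinOrder c := by
    intro h
    apply hg₀
    obtain ⟨k, hk⟩ := hgen _ (N.pow_index_mem g₀)
    have : IsOfFinOrder (g₀ ^ N.index) := by rw [← hk]; exact h.zpow
    exact (isOfFinOrder_pow.1 this).resolve_right hidx.ne'
  have hzinj : ∀ a b : ℤ, c ^ a = c ^ b → a = b := fun a b h =>
    (injective_zpow_iff_not_isOfFinOrder.2 hcinf) h
  have hcent : ∀ z : K, z * c * z⁻¹ = c := by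
    intro z
    obtain ⟨a, ha⟩ := hgen _ ((Subgroup.normalCore_normal C).conj_mem c hcN z)
    obtain ⟨b, hb⟩ := hgen _ ((Subgroup.normalCore_normal C).conj_mem c hcN z⁻¹)
    rw [inv_inv] at hb
    have hab : c ^ (b * a) = c ^ (1 : ℤ) := by
      rw [zpow_mul, hb]
      have e : z⁻¹ * c * z = z⁻¹ * c * z⁻¹⁻¹ := by group
      rw [e, conj_zpow, ha]; group
    have := hzinj _ _ hab
    have ha' : a = 1 ∨ a = -1 := by
      rcases Int.isUnit_iff.1 (IsUnit.of_mul_eq_one_right (M := ℤ) _ this) with h | h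
      · exact .inl h
      · exact .inr h
    rcases ha' with rfl | rfl
    · simpa using ha.symm
    · exfalso
      obtain ⟨j, hj⟩ := hgen _ (N.pow_index_mem z)
      have e : z * c ^ j * z⁻¹ = c ^ j := by rw [hj]; group
      rw [← conj_zpow, ← ha, ← zpow_mul] at e
      have hj0 : j = 0 := by have := hzinj _ _ e; omega
      have hzt : IsOfFinOrder z := isOfFinOrder_iff_pow_eq_one.2
        ⟨_, hidx, by rw [← hj, hj0, zpow_zero]⟩
      have hzn := h1 z hzt
      have hconj : ∀ m : ℕ, z ^ (2 * m + 1) * c * (z ^ (2 * m + 1))⁻¹ = c⁻¹ := by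
        have h0 : z * c * z⁻¹ = c⁻¹ := by rw [← ha]; simp
        have h0' : z * c⁻¹ * z⁻¹ = c := by
          have := congrArg (·⁻¹) h0
          simpa [mul_assoc] using this
        intro m
        induction m with
        | zero => simpa using h0
        | succ m ih =>
          have e2 : z ^ (2 * (m + 1) + 1) = z * (z * z ^ (2 * m + 1)) := by
            rw [← pow_succ', ← pow_succ']; congr 1
          calc _ = z * (z * (z ^ (2 * m + 1) * c * (z ^ (2 * m + 1))⁻¹) * z⁻¹) * z⁻¹ := by
                rw [e2]; group
            _ = c⁻¹ := by rw [ih, h0', h0]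
      obtain ⟨m, rfl⟩ := hodd
      have := hconj m
      rw [hzn] at this
      have h3 : c ^ (1 : ℤ) = c ^ (-1 : ℤ) := by simpa using this
      have := hzinj _ _ h3; omega
  have htf : ∀ s : K, IsOfFinOrder s → s = 1 := by
    intro s hs
    by_contra hne
    have hcs : Commute s c := by
      have := hcent s
      exact mul_inv_eq_iff_eq_mul.1 this
    exact hcinf (isOfFinOrder_iff_pow_eq_one.2 ⟨n, hnpos, h2 s c hs hne hcs⟩)
  have hle : N ≤ Subgroup.center K := by
    intro x hx
    obtain ⟨k, rfl⟩ := hgen x hx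
    refine Subgroup.zpow_mem _ (Subgroup.mem_center_iff.2 fun z => ?_) k
    exact mul_inv_eq_iff_eq_mul.1 (hcent z)
  have : (Subgroup.center K).FiniteIndex := Subgroup.finiteIndex_of_le hle
  have hcm : ∀ x y : K, x * y = y * x := by
    intro x y
    have hz : (Subgroup.center K).index ≠ 0 := Subgroup.FiniteIndex.index_ne_zero
    have hxy : (x * y * (y * x)⁻¹) ^ (Subgroup.center K).index = 1 := by
      have e := MonoidHom.transferCenterPow_apply (x * y * (y * x)⁻¹)
      rw [← e]
      have : MonoidHom.transferCenterPow K (x * y * (y * x)⁻¹) = 1 := by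
        have hcc : ∀ a b : Subgroup.center K, a * b = b * a := fun a b =>
          Subtype.ext (Subgroup.mem_center_iff.1 b.2 a)
        rw [map_mul, map_inv, map_mul, map_mul, hcc (MonoidHom.transferCenterPow K y),
          mul_inv_cancel]
      rw [this]; rfl
    have := htf _ (isOfFinOrder_iff_pow_eq_one.2 ⟨_, Nat.pos_of_ne_zero hz, hxy⟩)
    exact mul_inv_eq_one.1 this
  let f : K →* N :=
    { toFun := fun x => ⟨x ^ N.index, N.pow_index_mem x⟩
      map_one' := by simp
      map_mul' := fun x y => Subtype.ext (by
        show (x * y) ^ N.index = x ^ N.index * y ^ N.index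
        exact (show Commute x y from hcm x y).mul_pow _) }
  refine isCyclic_of_injective f ((injective_iff_map_eq_one f).2 fun x hx => ?_)
  have : x ^ N.index = 1 := congrArg Subtype.val hx
  exact htf x (isOfFinOrder_iff_pow_eq_one.2 ⟨_, hidx, this⟩)

end TB

/-! ### Acylindricity of the quotient metric -/

namespace TB
open PLine

variable {i L n : ℕ}

/-- Many points on a geodesic that is covered by few lines: three of them lie on one line. -/
theorem Cost.three (hL : 1 ≤ L) {x y : F} {k : ℕ} (h : Cost i L x y k) (P : Finset F)
    (hP : ∀ p ∈ P, Btw x p y) (hc : 2 * k + 1 < P.card) :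
    ∃ (ℓ : PLine) (Q : Finset F), ℓ.τ ≤ i ∧ Q ⊆ P ∧ 2 < Q.card ∧ ∀ p ∈ Q, p ∈ Set.range ℓ.f := by
  classical
  induction h generalizing P with
  | refl =>
    exfalso
    have : P ⊆ {x} := fun p hp => by
      have := hP p hp
      unfold Btw at this; rw [nd_self] at this
      simp only [Finset.mem_singleton]
      exact (nd_eq_zero.1 (by omega : nd x p = 0)).symm
    have := Finset.card_le_card this
    rw [Finset.card_singleton] at this; omega
  | step y k ℓ a b h hτ hy ih =>
    by_cases hab : a = b
    · subst hab
      exact ih P (by rwa [← hy]) (by simpa [lam_zero] using hc)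
    have hl : 1 ≤ lam i L (a - b).natAbs := lam_pos hL (by omega)
    set P₂ := P.filter (fun p => p ∈ Set.range ℓ.f)
    set P₁ := P.filter (fun p => ¬ p ∈ Set.range ℓ.f)
    have hsum : P₂.card + P₁.card = P.card := Finset.card_filter_add_card_filter_not _
    by_cases h2 : 2 < P₂.card
    · exact ⟨ℓ, P₂, hτ, Finset.filter_subset _ _, h2, fun p hp => (Finset.mem_filter.1 hp).2⟩
    · obtain ⟨ℓ', Q, h1, h3, h4, h5⟩ := ih P₁ (fun p hp => by
        have hp' := Finset.mem_filter.1 hp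
        rcases (hP p hp'.1).split y with h | h
        · exact h
        · obtain ⟨c, hc, -⟩ := ℓ.mem_of_btw (hy ▸ h)
          exact absurd ⟨c, hc.symm⟩ hp'.2) (by omega)
      exact ⟨ℓ', Q, h1, h3.trans (Finset.filter_subset _ _), h4, h5⟩

theorem dd_adj (hi : 1 ≤ i) {x y : F} (h : nd x y = 1) : dd i L x y ≤ 2 := by
  obtain ⟨k, ⟨a, ha⟩, ⟨b, hb⟩⟩ := exists_letter_step h
  have h1 : (letterLine x k).τ ≤ i := hi
  have h2 := dd_line (L := L) h1 a b
  have h3 := (letterLine x k).iso a b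
  rw [ha, hb] at h2 h3
  rw [h] at h3
  rw [← h3] at h2
  refine h2.trans ?_
  calc lam i L 1 ≤ lam i L (1 * i) := lam_mono (by omega)
    _ ≤ _ := lam_const hi 1
    _ = 2 := by norm_num

/-- The vertices of a geodesic segment, parametrized by arc length. -/
theorem exists_seg (a : F) : ∃ γ : ℕ → F, γ 0 = 1 ∧ γ (nd 1 a) = a ∧
    (∀ j ≤ nd 1 a, Btw 1 (γ j) a) ∧ (∀ j k, j ≤ k → k ≤ nd 1 a → nd (γ j) (γ k) = k - j) ∧
    ∀ z, Btw 1 z a → γ (nd 1 z) = z := by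
  have H : ∀ j, ∃ z, j ≤ nd 1 a → nd 1 z = j ∧ Btw 1 z a := fun j => by
    by_cases hj : j ≤ nd 1 a
    · obtain ⟨z, h1, h2⟩ := exists_btw 1 a j hj
      exact ⟨z, fun _ => ⟨h1, h2⟩⟩
    · exact ⟨1, fun h => absurd h hj⟩
  choose γ hγ using H
  have hz : ∀ z, Btw 1 z a → γ (nd 1 z) = z := fun z hz => by
    have h1 : nd 1 z ≤ nd 1 a := by unfold Btw at hz; omega
    exact (hγ _ h1).2.uniq hz (hγ _ h1).1
  refine ⟨γ, ?_, hz a (btw_right _ _), fun j hj => (hγ j hj).2, fun j k hjk hk => ?_, hz⟩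
  · have := hz 1 (btw_left _ _); rwa [nd_self] at this
  · obtain ⟨h1, h2⟩ := hγ j (by omega)
    obtain ⟨h3, h4⟩ := hγ k hk
    rcases h2.split (γ k) with h | h
    · unfold Btw at h; omega
    · have := nd_comm (γ k) (γ j)
      unfold Btw at h h2 h4; omega

/-- A geodesic segment on which `E` acts as a shift by `ρ` lies on a line of period `ρ`. -/
theorem shift_line {γ : ℕ → F} {s t ρ : ℕ} {E : F} (hρ : 0 < ρ) (hst : s + 2 * ρ ≤ t)
    (hγ : ∀ j k, s ≤ j → j ≤ k → k ≤ t → nd (γ j) (γ k) = k - j)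
    (hE : ∀ m, s ≤ m → m + ρ ≤ t → E * γ m = γ (m + ρ)) :
    ∃ ℓ : PLine, ℓ.τ = ρ ∧ ∀ m, s ≤ m → m ≤ t → γ m ∈ Set.range ℓ.f := by
  have e1 := hE s le_rfl (by omega)
  have e2 := hE (s + ρ) (by omega) (by omega)
  have d1 : nd (γ s) (E * γ s) = ρ := by
    rw [e1, hγ s (s + ρ) le_rfl (by omega) (by omega)]; omega
  obtain ⟨ℓ, h1, h2, h3⟩ := exists_axis E (γ s) (by omega) (by
    rw [e1, e2, hγ s _ le_rfl (by omega) (by omega), hγ s _ le_rfl (by omega) (by omega)]; omega)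
  rw [d1] at h2
  have h4 : ℓ.f (0 + ρ) = γ (s + ρ) := by
    have := ℓ.per 0
    rw [h1, h3, e1, h2] at this; exact this.symm
  refine ⟨ℓ, h2, fun m => ?_⟩
  induction m using Nat.strong_induction_on with
  | _ m ih =>
    intro hs ht
    by_cases hm : m ≤ s + ρ
    · obtain ⟨c, hc, -⟩ := ℓ.mem_of_btw (a := 0) (b := 0 + ρ) (z := γ m) (by
        rw [h3, h4]; unfold Btw
        rw [hγ s m le_rfl hs ht, hγ m _ hs hm (by omega), hγ s _ le_rfl (by omega) (by omega)]
        omega)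
      exact ⟨c, hc.symm⟩
    · obtain ⟨c, hc⟩ := ih (m - ρ) (by omega) (by omega) (by omega)
      refine ⟨c + ℓ.τ, ?_⟩
      rw [← ℓ.per, hc, h1, hE (m - ρ) (by omega) (by omega)]
      congr 1; omega

/-- An element with small displacement at both ends of a long segment shifts its middle part. -/
theorem seg_shift (hi : 1 ≤ i) {a g : F} {D : ℕ} {γ : ℕ → F} {R : ℕ} (hR : R = nd 1 a)
    (hb : ∀ j ≤ R, Btw 1 (γ j) a) (hγ : ∀ j k, j ≤ k → k ≤ R → nd (γ j) (γ k) = k - j)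
    (h0 : γ 0 = 1)
    (hz : ∀ z, Btw 1 z a → γ (nd 1 z) = z)
    (hg1 : dd i L 1 g ≤ D) (hg2 : dd i L a (g * a) ≤ D) :
    (∀ j ≤ R, D < dd i L 1 (γ j) → D < dd i L (γ j) a →
      nd g (γ j) ≤ R ∧ γ (nd g (γ j)) = g⁻¹ * γ j) ∧
    ∀ j k, j ≤ k → k ≤ R → D < dd i L 1 (γ j) → D < dd i L (γ k) a →
      nd g (γ k) = nd g (γ j) + (k - j) := by
  have hmid : ∀ j ≤ R, D < dd i L 1 (γ j) → D < dd i L (γ j) a → Btw g (γ j) (g * a) := by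
    intro j hj h1 h2
    rcases (hb j hj).split (g * a) with h | h
    · rcases h.split g with h' | h'
      · have := dd_mono_left (L := L) hi h'; omega
      · exact h'
    · have := dd_mono_right (L := L) hi h
      rw [dd_comm (g * a) a] at this; omega
  have hmono : ∀ j k, j ≤ k → k ≤ R → dd i L 1 (γ j) ≤ dd i L 1 (γ k) := fun j k hjk hk => by
    refine dd_mono_left hi ?_
    unfold Btw
    rw [← h0, hγ 0 j (by omega) (by omega), hγ j k hjk hk, hγ 0 k (by omega) hk]; omega
  have hmono' : ∀ j k, j ≤ k → k ≤ R → dd i L (γ k) a ≤ dd i L (γ j) a := fun j k hjk hk => by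
    have e : γ R = a := by rw [hR]; exact hz a (btw_right _ _)
    refine dd_mono_right hi ?_
    unfold Btw
    rw [← e, hγ j k hjk hk, hγ k R hk le_rfl, hγ j R (by omega) le_rfl]; omega
  refine ⟨fun j hj h1 h2 => ?_, fun j k hjk hk h1 h2 => ?_⟩
  · have h3 := (hmid j hj h1 h2).mul g⁻¹
    rw [inv_mul_cancel, inv_mul_cancel_left] at h3
    have h4 : nd 1 (g⁻¹ * γ j) = nd g (γ j) := by
      rw [← nd_mul g 1, mul_one, mul_inv_cancel_left]
    rw [← h4]
    refine ⟨?_, hz _ h3⟩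
    unfold Btw at h3; omega
  · have hj := hmid j (by omega) h1 (by have := hmono' j k hjk hk; omega)
    have hk' := hmid k hk (by have := hmono j k hjk hk; omega) h2
    have e := hγ j k hjk hk
    rcases hj.split (γ k) with h | h
    · unfold Btw at h; omega
    · rcases hk'.split (γ j) with h' | h'
      · -- the reversed order would place `γ j` between `1` and `g`
        by_cases hne : γ j = γ k
        · rw [hne, nd_self] at e
          rw [hne]; omega
        · exfalso
          have h5 : Btw 1 (γ j) (γ k) := by
            unfold Btw
            rw [← h0, hγ 0 j (by omega) (by omega), hγ j k hjk hk, hγ 0 k (by omega) hk]; omega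
          have := btw_local_global h5 h'.symm hne
          have h6 : Btw 1 (γ j) g := by
            have := h'.symm
            unfold Btw at this ⊢; omega
          have := dd_mono_left (L := L) hi h6; omega
      · have := nd_comm (γ j) (γ k)
        unfold Btw at h h' hj hk'
        omega

theorem dd_ivt (hi : 1 ≤ i) {γ : ℕ → F} {R : ℕ}
    (hγ : ∀ j k, j ≤ k → k ≤ R → nd (γ j) (γ k) = k - j) {A : ℕ} (hA : 0 < A)
    (h : A ≤ dd i L (γ 0) (γ R)) : ∃ j ≤ R, A ≤ dd i L (γ 0) (γ j) ∧ dd i L (γ 0) (γ j) ≤ A + 1 := by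
  classical
  have hex : ∃ j, A ≤ dd i L (γ 0) (γ j) := ⟨R, h⟩
  have h1 := Nat.find_spec hex
  have h2 : Nat.find hex ≤ R := Nat.find_le h
  refine ⟨Nat.find hex, h2, h1, ?_⟩
  have h3 : Nat.find hex ≠ 0 := fun h0 => by
    rw [h0, dd_self] at h1; omega
  have h4 := Nat.find_min hex (m := Nat.find hex - 1) (by omega)
  have h5 := dd_tri (L := L) hi (γ 0) (γ (Nat.find hex - 1)) (γ (Nat.find hex))
  have h6 := dd_adj (L := L) hi (x := γ (Nat.find hex - 1)) (y := γ (Nat.find hex))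
    (by rw [hγ _ _ (by omega) h2]; omega)
  omega

/-- Acylindricity on the level of the free group: few elements move both ends of a long segment
by at most `D`. Otherwise three translates of a middle point lie on a common line of period at
most `i`, and then so does the middle part of the segment, whose length is bounded by `L`. -/
theorem acyl_F (hi : 1 ≤ i) (hL : 1 ≤ L) {a : F} {D : ℕ} (T : Finset F)
    (hT : ∀ g ∈ T, dd i L 1 g ≤ D ∧ dd i L a (g * a) ≤ D)
    (ha : 6 * D + 10 + L ≤ dd i L 1 a) : T.card ≤ 2 * (2 * D + L) + 1 := by
  classical
  by_contra! hcard
  obtain ⟨γ, h0, hRa, hb, hγ, hz⟩ := exists_seg a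
  obtain ⟨R, hR⟩ : ∃ R, R = nd 1 a := ⟨_, rfl⟩
  rw [← hR] at hRa hb hγ
  have hlen : 6 * D + 10 + L ≤ dd i L (γ 0) (γ R) := by rwa [h0, hRa]
  have hmono : ∀ j k, j ≤ k → k ≤ R → dd i L 1 (γ j) ≤ dd i L 1 (γ k) := fun j k hjk hk => by
    refine dd_mono_left hi ?_
    unfold Btw
    rw [← h0, hγ 0 j (by omega) (by omega), hγ j k hjk hk, hγ 0 k (by omega) hk]; omega
  have hmono' : ∀ j k, j ≤ k → k ≤ R → dd i L (γ k) a ≤ dd i L (γ j) a := fun j k hjk hk => by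
    refine dd_mono_right hi ?_
    unfold Btw
    rw [← hRa, hγ j k hjk hk, hγ k R hk le_rfl, hγ j R (by omega) le_rfl]; omega
  obtain ⟨j0, hj0, hj0a, hj0b⟩ := dd_ivt (L := L) hi hγ (A := D + 1) (by omega) (by omega)
  obtain ⟨js, hjs, hjsa, hjsb⟩ := dd_ivt (L := L) hi hγ (A := 3 * D + 4) (by omega) (by omega)
  obtain ⟨j1', hj1', hj1a, hj1b⟩ := dd_ivt (L := L) hi (γ := fun j => γ (R - j)) (R := R)
    (fun j k hjk hk => by
      rw [nd_comm, hγ (R - k) (R - j) (by omega) (by omega)]; omega) (A := D + 1) (by omega) (by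
      simp only [Nat.sub_zero, Nat.sub_self]; rw [dd_comm]; omega)
  simp only [Nat.sub_zero] at hj1a hj1b
  obtain ⟨j1, hj1⟩ : ∃ j1, j1 = R - j1' := ⟨_, rfl⟩
  rw [← hj1, hRa, dd_comm] at hj1a hj1b
  rw [h0] at hj0a hj0b hjsa hjsb
  have hj1R : j1 ≤ R := by omega
  have e1 := dd_tri (L := L) hi 1 (γ j1) a
  have e0 := dd_tri (L := L) hi (γ j0) (γ j1) a
  have e0' := dd_tri (L := L) hi 1 (γ j0) a
  have o1 : j0 ≤ js := by
    by_contra! h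
    have := hmono js j0 h.le hj0; omega
  have o2 : js ≤ j1 := by
    by_contra! h
    have := hmono j1 js h.le hjs; omega
  -- every `g` in `T` shifts the part of the segment between `γ j0` and `γ j1`
  have hJ : ∀ j, j0 ≤ j → j ≤ j1 → D < dd i L 1 (γ j) ∧ D < dd i L (γ j) a := fun j h1 h2 => by
    have := hmono j0 j h1 (by omega)
    have := hmono' j j1 h2 hj1R
    omega
  have hsh : ∀ g ∈ T, (∀ j, j0 ≤ j → j ≤ j1 → nd g (γ j) ≤ R ∧ γ (nd g (γ j)) = g⁻¹ * γ j) ∧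
      ∀ j, j0 ≤ j → j ≤ j1 → nd g (γ j) = nd g (γ j0) + (j - j0) := fun g hg => by
    obtain ⟨h1, h2⟩ := seg_shift (L := L) hi hR hb hγ h0 hz (hT g hg).1 (hT g hg).2
    refine ⟨fun j h3 h4 => h1 j (by omega) (hJ j h3 h4).1 (hJ j h3 h4).2, fun j h3 h4 => ?_⟩
    exact h2 j0 j h3 (by omega) (hJ j0 le_rfl (by omega)).1 (hJ j h3 h4).2
  have hdg : ∀ g ∈ T, ∀ x, dd i L 1 (g⁻¹ * x) ≤ dd i L 1 x + D ∧
      dd i L 1 x ≤ dd i L 1 (g⁻¹ * x) + D := fun g hg x => by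
    have h1 := (hT g hg).1
    have h2 : dd i L 1 (g⁻¹ * x) = dd i L g x := by
      rw [← dd_mul g 1, mul_one, mul_inv_cancel_left]
    have h3 := dd_tri (L := L) hi 1 g x
    have h4 := dd_tri (L := L) hi g 1 x
    rw [dd_comm g 1] at h4
    omega
  obtain ⟨c, hc⟩ : ∃ c : F → ℕ, ∀ g, c g = nd g (γ js) := ⟨_, fun _ => rfl⟩
  have hcR : ∀ g ∈ T, c g ≤ R := fun g hg => by rw [hc]; exact ((hsh g hg).1 js o1 o2).1
  have hcp : ∀ g ∈ T, γ (c g) = g⁻¹ * γ js := fun g hg => by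
    rw [hc]; exact ((hsh g hg).1 js o1 o2).2
  have hcd : ∀ g ∈ T, dd i L 1 (γ (c g)) ≤ dd i L 1 (γ js) + D ∧
      dd i L 1 (γ js) ≤ dd i L 1 (γ (c g)) + D := fun g hg => by
    rw [hcp g hg]; exact hdg g hg _
  have hcinj : ∀ g ∈ T, ∀ h ∈ T, c g = c h → g = h := fun g hg h hh e => by
    have := hcp g hg
    rw [e, hcp h hh] at this
    exact (inv_injective (mul_right_cancel this)).symm
  have hin : ∀ g ∈ T, ∀ h ∈ T, nd h (γ j0) ≤ c g ∧ c g ≤ nd h (γ j1) := fun g hg h hh => by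
    have a0 := (hsh h hh).1 j0 le_rfl (by omega)
    have a1 := (hsh h hh).1 j1 (by omega) le_rfl
    have b0 := hdg h hh (γ j0)
    have b1 := hdg h hh (γ j1)
    have := hcd g hg
    constructor
    · by_contra! hlt
      have := hmono _ _ hlt.le a0.1
      rw [a0.2] at this; omega
    · by_contra! hlt
      have := hmono _ _ hlt.le (hcR g hg)
      rw [a1.2] at this; omega
  have hTne : T.Nonempty := Finset.card_pos.1 (by omega)
  obtain ⟨gm, hgm, hmin⟩ := T.exists_min_image c hTne
  obtain ⟨gM, hgM, hmax⟩ := T.exists_max_image c hTne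
  have hcost : dd i L (γ (c gm)) (γ (c gM)) ≤ 2 * D + L := by
    have := dd_split_le (L := L) hi (x := 1) (z := γ (c gm)) (y := γ (c gM)) (by
      unfold Btw
      rw [← h0, hγ 0 _ (by omega) (hcR _ hgm), hγ _ _ (hmin _ hgM) (hcR _ hgM),
        hγ 0 _ (by omega) (hcR _ hgM)]
      have := hmin _ hgM; omega)
    have := hcd gm hgm; have := hcd gM hgM; omega
  obtain ⟨ℓ, Q, hτ, hQ, hQc, hQℓ⟩ := (dd_spec (L := L) hi (γ (c gm)) (γ (c gM))).three hL
    (T.image fun g => γ (c g)) (fun p hp => by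
      obtain ⟨g, hg, rfl⟩ := Finset.mem_image.1 hp
      have := hmin g hg; have := hmax g hg
      unfold Btw
      rw [hγ _ _ (hmin g hg) (hcR g hg), hγ _ _ (hmax g hg) (hcR _ hgM),
        hγ _ _ (hmin _ hgM) (hcR _ hgM)]
      omega) (by
      rw [Finset.card_image_of_injOn]
      · omega
      · intro g hg h hh e
        rw [Finset.mem_coe] at hg hh
        simp only [hcp g hg, hcp h hh] at e
        exact inv_injective (mul_right_cancel e))
  -- three elements of `T`, ordered by their shifts
  have hthree : ∃ g₁ ∈ T, ∃ g₂ ∈ T, ∃ g₃ ∈ T, c g₁ < c g₂ ∧ c g₂ < c g₃ ∧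
      γ (c g₁) ∈ Set.range ℓ.f ∧ γ (c g₃) ∈ Set.range ℓ.f := by
    obtain ⟨p, q, r, hp, hq, hr, hpq, hpr, hqr⟩ := Finset.two_lt_card_iff.1 hQc
    obtain ⟨x, hx, rfl⟩ := Finset.mem_image.1 (hQ hp)
    obtain ⟨y, hy, rfl⟩ := Finset.mem_image.1 (hQ hq)
    obtain ⟨z, hz, rfl⟩ := Finset.mem_image.1 (hQ hr)
    have n1 : c x ≠ c y := fun h => hpq (by rw [h])
    have n2 : c x ≠ c z := fun h => hpr (by rw [h])
    have n3 : c y ≠ c z := fun h => hqr (by rw [h])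
    have mx := hQℓ _ hp; have my := hQℓ _ hq; have mz := hQℓ _ hr
    rcases n1.lt_or_gt with h1 | h1 <;> rcases n2.lt_or_gt with h2 | h2 <;>
      rcases n3.lt_or_gt with h3 | h3
    · exact ⟨x, hx, y, hy, z, hz, h1, h3, mx, mz⟩
    · exact ⟨x, hx, z, hz, y, hy, h2, h3, mx, my⟩
    · omega
    · exact ⟨z, hz, x, hx, y, hy, h2, h1, mz, my⟩
    · exact ⟨y, hy, x, hx, z, hz, h1, h2, my, mz⟩
    · omega
    · exact ⟨y, hy, z, hz, x, hx, h3, h2, my, mx⟩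
    · exact ⟨z, hz, y, hy, x, hx, h3, h1, mz, mx⟩
  obtain ⟨g₁, hg₁, g₂, hg₂, g₃, hg₃, l12, l23, m1, m3⟩ := hthree
  -- a consecutive pair realizing the smaller gap
  obtain ⟨g, hg, h, hh, hgh, hgap⟩ : ∃ g ∈ T, ∃ h ∈ T, c g < c h ∧
      2 * (c h - c g) ≤ c g₃ - c g₁ := by
    rcases le_total (c g₂ - c g₁) (c g₃ - c g₂) with hle | hle
    · exact ⟨g₁, hg₁, g₂, hg₂, l12, by omega⟩
    · exact ⟨g₂, hg₂, g₃, hg₃, l23, by omega⟩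
  have sg := (hsh g hg).2
  have sh := (hsh h hh).2
  have sgs := sg js o1 o2; have shs := sh js o1 o2
  have sg1 := sg j1 (by omega) le_rfl; have sh1 := sh j1 (by omega) le_rfl
  rw [← hc] at sgs shs
  have := hin h hh g hg
  have hR1 := ((hsh h hh).1 j1 (by omega) le_rfl).1
  obtain ⟨ℓ', hτ', hℓ'⟩ := shift_line (γ := γ) (s := nd g (γ j0)) (t := nd h (γ j1))
    (ρ := c h - c g) (E := h⁻¹ * g) (by omega) (by omega)
    (fun j k _ h2 h3 => hγ j k h2 (h3.trans hR1)) (fun m hm1 hm2 => by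
      obtain ⟨j, hj⟩ : ∃ j, m = nd g (γ j0) + (j - j0) ∧ j0 ≤ j ∧ j ≤ j1 :=
        ⟨j0 + (m - nd g (γ j0)), by omega, by omega, by omega⟩
      have r1 := sg j hj.2.1 hj.2.2
      have r2 := sh j hj.2.1 hj.2.2
      have q1 := ((hsh g hg).1 j hj.2.1 hj.2.2).2
      have q2 := ((hsh h hh).1 j hj.2.1 hj.2.2).2
      rw [show m = nd g (γ j) by omega, q1,
        show nd g (γ j) + (c h - c g) = nd h (γ j) by omega, q2, mul_assoc, mul_inv_cancel_left])
  -- the middle part of the segment lies on a line of period at most `i`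
  have hfin : ∃ ℓ₀ : PLine, ℓ₀.τ ≤ i ∧ γ (nd g (γ j0)) ∈ Set.range ℓ₀.f ∧
      γ (nd g (γ j1)) ∈ Set.range ℓ₀.f := by
    have r0 := hℓ' (nd g (γ j0)) le_rfl (by omega)
    have r1 := hℓ' (nd g (γ j1)) (by omega) (by omega)
    by_cases hρ : c h - c g ≤ i
    · exact ⟨ℓ', by omega, r0, r1⟩
    · have i1 := hin g₁ hg₁ g hg; have i3 := hin g₃ hg₃ g hg
      have t1 := hℓ' (c g₁) i1.1 (by omega)
      have t3 := hℓ' (c g₃) i3.1 (by omega)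
      obtain ⟨u, hu⟩ := m1
      obtain ⟨v, hv⟩ := m3
      have e := ℓ.iso u v
      rw [hu, hv, hγ _ _ (by omega) (hcR _ hg₃)] at e
      have hsame : Same ℓ ℓ' := by
        rcases le_total u v with huv | huv
        · exact same_of_common ℓ ℓ' (c₀ := u) (c₁ := v) (by omega) (hu ▸ t1) (hv ▸ t3)
        · exact same_of_common ℓ ℓ' (c₀ := v) (c₁ := u) (by omega) (hv ▸ t3) (hu ▸ t1)
      exact ⟨ℓ, hτ, hsame ▸ r0, hsame ▸ r1⟩
  obtain ⟨ℓ₀, hτ₀, ⟨u, hu⟩, ⟨v, hv⟩⟩ := hfin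
  have f1 := dd_line (L := L) hτ₀ u v
  have f2 : lam i L (u - v).natAbs ≤ L := lam_le _
  rw [hu, hv, ((hsh g hg).1 j0 le_rfl (by omega)).2, ((hsh g hg).1 j1 (by omega) le_rfl).2,
    dd_mul] at f1
  omega

end TB

/-! ### Acylindricity of the action on the hull -/

namespace TB
open PLine

variable {i L n : ℕ}

theorem acyl_H (hi : 1 ≤ i) (hL : 1 ≤ L) {D : ℕ} (hD : D < L)
    (hn : 12 * (D * (i * 2 ^ D)) + 28 * i ≤ n) {p q : HH i n} (T : Finset (HH i n))
    (hT : ∀ g ∈ T, dH i L n p (g * p) ≤ D ∧ dH i L n q (g * q) ≤ D)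
    (hpq : 6 * D + 10 + L ≤ dH i L n p q) : T.card ≤ 2 * (2 * D + L) + 1 := by
  classical
  obtain ⟨a, ha, hs⟩ := exists_short (i := i) (n := n) (by omega) (p⁻¹ * q)
  have hco : ∀ r z : HH i n, dH i L n ((1 : F) : HH i n) (r⁻¹ * z) = dH i L n r z := fun r z => by
    rw [← dH_mul r, mul_inv_cancel_left, QuotientGroup.mk_one, mul_one]
  have ha' : 6 * D + 10 + L ≤ dd i L 1 a := by
    have := dH_le (i := i) (L := L) (n := n) 1 a
    rw [ha, hco] at this; omega
  have H : ∀ g : HH i n, ∃ x : F, (x : HH i n) = p⁻¹ * (g * p) ∧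
      (g ∈ T → dd i L 1 x ≤ D ∧ dd i L a (x * a) ≤ D) := fun g => by
    obtain ⟨x, hx, hdx⟩ := dH_spec (L := L) 1 (p⁻¹ * (g * p))
    obtain ⟨k, hk, hdk⟩ := dH_spec (L := L) 1 (q⁻¹ * (g * q))
    rw [hco] at hdx hdk
    refine ⟨x, hx, fun hg => ?_⟩
    have h1 : dd i L 1 x ≤ D := by rw [hdx]; exact (hT g hg).1
    have h2 : dd i L 1 k ≤ D := by rw [hdk]; exact (hT g hg).2
    have h3 := strip hi hn (nd_le_of_dd hi hL hD h1) (nd_le_of_dd hi hL hD h2) hs (by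
      rw [← QuotientGroup.eq_one_iff]
      rw [QuotientGroup.mk_mul, QuotientGroup.mk_mul, QuotientGroup.mk_mul, QuotientGroup.mk_inv,
        QuotientGroup.mk_inv, hx, hk, ha]
      group)
    have h4 : x * a = a * k := by
      rw [mul_inv_eq_one] at h3
      exact mul_inv_eq_iff_eq_mul.1 h3
    refine ⟨h1, ?_⟩
    rw [h4]
    have := dd_mul (i := i) (L := L) a 1 k
    rw [mul_one] at this; omega
  choose φ hφ hφ' using H
  have := acyl_F (L := L) hi hL (a := a) (D := D) (T.image φ) (fun x hx => by
    obtain ⟨g, hg, rfl⟩ := Finset.mem_image.1 hx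
    exact hφ' g hg) ha'
  rwa [Finset.card_image_of_injective] at this
  intro g h e
  have h1 := hφ g
  rw [e, hφ h] at h1
  exact (mul_right_cancel (mul_left_cancel h1)).symm

/-- A chain of lines can be cut near any prescribed depth. -/
theorem Cost.cut {x y : F} {k : ℕ} (h : Cost i L x y k) (r : ℕ) (hr : r ≤ k) :
    ∃ p k₁ k₂, Cost i L x p k₁ ∧ Cost i L p y k₂ ∧ k₁ + k₂ = k ∧ r ≤ k₁ ∧ k₁ ≤ r + L := by
  induction h with
  | refl => exact ⟨x, 0, 0, .refl, .refl, rfl, hr, by omega⟩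
  | step y k ℓ a b h hτ hy ih =>
    by_cases hk : r ≤ k
    · obtain ⟨p, k₁, k₂, h1, h2, h3, h4, h5⟩ := ih hk
      exact ⟨p, k₁, k₂ + _, h1, h2.step y k₂ ℓ a b hτ hy, by omega, h4, h5⟩
    · refine ⟨ℓ.f b, _, 0, h.step y k ℓ a b hτ hy, .refl, rfl, hr, ?_⟩
      have : lam i L (a - b).natAbs ≤ L := lam_le _
      omega

theorem dH_cut (hi : 1 ≤ i) (x y : HH i n) (r : ℕ) (hr : r ≤ dH i L n x y) :
    ∃ p, dH i L n x p + dH i L n p y = dH i L n x y ∧ r ≤ dH i L n x p ∧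
      dH i L n x p ≤ r + L := by
  obtain ⟨x, rfl⟩ := QuotientGroup.mk_surjective x
  obtain ⟨y, rfl, hy⟩ := dH_spec (L := L) x y
  rw [← hy] at hr
  obtain ⟨p, k₁, k₂, h1, h2, h3, h4, h5⟩ := (dd_spec (L := L) hi x y).cut r hr
  have e1 := (dH_le (i := i) (L := L) (n := n) x p).trans (dd_le h1)
  have e2 := (dH_le (i := i) (L := L) (n := n) p y).trans (dd_le h2)
  have e3 := dH_tri (L := L) hi (x : HH i n) p y
  exact ⟨p, by omega, by omega, by omega⟩

/-- The metric `dH` as a left invariant real metric on the quotient group. -/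
def mH (i L n : ℕ) (hi : 1 ≤ i) : GMet (HH i n) where
  d x y := dH i L n x y
  self x := by rw [dH_self]; simp
  comm x y := by rw [dH_comm]
  tri x y z := by exact_mod_cast dH_tri hi x y z
  inv g x y := by rw [dH_mul]

/-- The space acted upon: the injective hull of the quotient group. -/
abbrev XX (i L n : ℕ) (hi : 1 ≤ i) := Hull (mH i L n hi)

theorem mH_d (hi : 1 ≤ i) (x y : HH i n) : (mH i L n hi).d x y = dH i L n x y := rfl

theorem mH_four (hi : 1 ≤ i) (hL : 1 ≤ L) (hn : 4 * (i * 2 ^ L + 4 * i) + 14 * i ≤ n)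
    (x y z w : HH i n) : (mH i L n hi).d x y + (mH i L n hi).d z w ≤
      max ((mH i L n hi).d x z + (mH i L n hi).d y w)
        ((mH i L n hi).d x w + (mH i L n hi).d y z) + 2 * 5 := by
  simp only [mH_d]
  rcases dH_hyp hi hL hn x z y w with h | h
  · refine le_trans ?_ (add_le_add_left (le_max_left _ _) _)
    exact_mod_cast h
  · refine le_trans ?_ (add_le_add_left (le_max_right _ _) _)
    rw [dH_comm y z]
    exact_mod_cast h

theorem XX_four (hi : 1 ≤ i) (hL : 1 ≤ L) (hn : 4 * (i * 2 ^ L + 4 * i) + 14 * i ≤ n)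
    (a b c e : XX i L n hi) :
    dist a b + dist c e ≤ max (dist a c + dist b e) (dist a e + dist b c) + 10 := by
  have := Hull.four (2 * 5) (mH_four hi hL hn) a b c e
  linarith

/-- Between two far away points of the hull there is a point of the group close to the first. -/
theorem exists_near (hi : 1 ≤ i) (hL : 1 ≤ L) (hn : 4 * (i * 2 ^ L + 4 * i) + 14 * i ≤ n)
    (a b : XX i L n hi) (hab : (L : ℝ) + 20 ≤ dist a b) :
    ∃ p : HH i n, a.f p ≤ L + 12 ∧ a.f p + b.f p ≤ dist a b + 23 := by
  obtain ⟨x, y, hxy⟩ := Hull.exists_d_ge a b one_pos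
  rw [mH_d] at hxy
  have ha0 := a.nonneg x
  have hb0 := b.nonneg y
  have hd0 : 0 ≤ dist a b := dist_nonneg
  obtain ⟨p, h1, h2, h3⟩ := dH_cut (L := L) hi x y (min ⌊a.f x⌋₊ (dH i L n x y)) (min_le_right _ _)
  have h1' : (dH i L n x p : ℝ) + dH i L n p y = dH i L n x y := by exact_mod_cast h1
  have h2' : a.f x - 1 ≤ dH i L n x p := by
    rcases min_choice ⌊a.f x⌋₊ (dH i L n x y) with h | h
    · rw [h] at h2
      have := Nat.lt_floor_add_one (a.f x)
      have : (⌊a.f x⌋₊ : ℝ) ≤ dH i L n x p := by exact_mod_cast h2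
      linarith
    · rw [h] at h2
      have : (dH i L n x y : ℝ) ≤ dH i L n x p := by exact_mod_cast h2
      linarith
  have h3' : (dH i L n x p : ℝ) ≤ a.f x + L := by
    have h4 : (dH i L n x p : ℝ) ≤ (min ⌊a.f x⌋₊ (dH i L n x y) : ℕ) + L := by exact_mod_cast h3
    have h5 : ((min ⌊a.f x⌋₊ (dH i L n x y) : ℕ) : ℝ) ≤ ⌊a.f x⌋₊ := by
      exact_mod_cast min_le_left _ _
    have := Nat.floor_le ha0
    linarith
  have key : ∀ e : XX i L n hi, e.f p + dH i L n x y ≤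
      max (e.f x + dH i L n p y) (dH i L n x p + e.f y) + 10 := fun e => by
    have := XX_four hi hL hn (Hull.pt _ p) e (Hull.pt _ x) (Hull.pt _ y)
    rw [dist_comm e, dist_comm e] at this
    simp only [Hull.dist_pt_pt, mH_d] at this
    simp only [Hull.dist_pt] at this
    rw [dH_comm p x, add_comm (dH i L n p y : ℝ), max_comm] at this
    exact this
  have hA := key a
  have hB := key b
  have e1 : a.f y ≤ b.f y + dist a b := a.le_add_dist b y
  have e2 : b.f x ≤ a.f x + dist a b := by rw [dist_comm]; exact b.le_add_dist a x
  have e3 := Hull.d_le a b x y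
  rw [mH_d] at e3
  have hb0' := b.nonneg p
  have hpa : a.f p ≤ dH i L n x p - a.f x + 12 := by
    rcases max_choice (a.f x + dH i L n p y) (dH i L n x p + a.f y) with h | h <;>
      rw [h] at hA <;> linarith
  refine ⟨p, by linarith, ?_⟩
  rcases max_choice (b.f x + dH i L n p y) (dH i L n x p + b.f y) with h | h <;>
    rw [h] at hB <;> linarith

theorem finite_of_card_le {α : Type*} {s : Set α} {N : ℕ}
    (h : ∀ T : Finset α, ↑T ⊆ s → T.card ≤ N) : s.Finite ∧ s.ncard ≤ N := by
  have hf : s.Finite := by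
    by_contra hinf
    obtain ⟨T, hT, hc⟩ := Set.Infinite.exists_subset_card_eq hinf (N + 1)
    have := h T hT; omega
  refine ⟨hf, ?_⟩
  rw [Set.ncard_eq_toFinset_card s hf]
  exact h _ (by simp)

/-- Acylindricity of the action on the hull, for displacement `K`. -/
theorem acyl_X (hi : 1 ≤ i) {K D : ℕ} (hK : D = K + 33) (hL : D < L)
    (hn : 4 * (i * 2 ^ L + 4 * i) + 14 * i ≤ n) (hn' : 12 * (D * (i * 2 ^ D)) + 28 * i ≤ n)
    (a b : XX i L n hi) (hab : 3 * L + 6 * D + 50 ≤ dist a b) :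
    {g : HH i n | dist (g • a) a ≤ K ∧ dist (g • b) b ≤ K}.Finite ∧
    {g : HH i n | dist (g • a) a ≤ K ∧ dist (g • b) b ≤ K}.ncard ≤ 2 * (2 * D + L) + 1 := by
  have hL0 : (0 : ℝ) ≤ L := by positivity
  have hD0 : (0 : ℝ) ≤ D := by positivity
  have hDK : (D : ℝ) = K + 33 := by exact_mod_cast hK
  obtain ⟨p, hp1, hp2⟩ := exists_near hi (by omega) hn a b (by linarith)
  obtain ⟨q, hq1, hq2⟩ := exists_near hi (by omega) hn b a (by rw [dist_comm]; linarith)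
  have hmove : ∀ p : HH i n, a.f p + b.f p ≤ dist a b + 23 → ∀ g : HH i n,
      dist (g • a) a ≤ K → dist (g • b) b ≤ K → dH i L n p (g * p) ≤ D := by
    intro p hp g hga hgb
    have h1 := XX_four hi (by omega) hn (Hull.pt _ p) (Hull.pt _ (g * p)) a b
    simp only [Hull.dist_pt_pt, mH_d] at h1
    simp only [Hull.dist_pt] at h1
    have hg : ∀ e : XX i L n hi, e.f (g * p) ≤ e.f p + dist (g • e) e := fun e => by
      have h2 := e.le_add_dist (g • e) (g * p)
      rw [Hull.smul_f, inv_mul_cancel_left, dist_comm] at h2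
      exact h2
    have h2 := hg a; have h3 := hg b
    have : (dH i L n p (g * p) : ℝ) ≤ D := by
      rcases max_choice (a.f p + b.f (g * p)) (b.f p + a.f (g * p)) with h | h <;>
        rw [h] at h1 <;> linarith
    exact_mod_cast this
  have hpq : 6 * D + 10 + L ≤ dH i L n p q := by
    have h2 : dist a b ≤ a.f p + dH i L n p q + b.f q := by
      have e1 := dist_triangle a (Hull.pt _ p) b
      have e2 := dist_triangle (Hull.pt _ p) (Hull.pt _ q) b
      rw [dist_comm a (Hull.pt _ p), Hull.dist_pt] at e1
      rw [Hull.dist_pt_pt, Hull.dist_pt b q, mH_d] at e2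
      linarith
    have : (6 * D + 10 + L : ℝ) ≤ dH i L n p q := by linarith
    exact_mod_cast this
  exact finite_of_card_le fun T hT => acyl_H hi (by omega) hL hn' T (fun g hg => by
    obtain ⟨h1, h2⟩ := hT hg
    exact ⟨hmove p hp2 g h1 h2, hmove q (by rw [dist_comm a b]; linarith) g h1 h2⟩) hpq

end TB

/-! ### Displacement of pairs of isometries -/

namespace TB

/-- An action by isometries on a `5`-hyperbolic geodesic space. -/
structure HAct (G X : Type) [Group G] [MetricSpace X] [MulAction G X] : Prop where
  hyp : IsDeltaHyperbolic X 5
  geo : IsGeodesicSpace X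
  iso : ∀ (g : G) (x y : X), dist (g • x) (g • y) = dist x y

section
variable {X : Type} [MetricSpace X]

theorem gr_comm (a b o : X) : gromov a b o = gromov b a o := by
  unfold gromov; rw [dist_comm a b]; ring
theorem gr_nonneg (a b o : X) : 0 ≤ gromov a b o := by
  unfold gromov; have := dist_triangle_right a b o; linarith
theorem gr_le_left (a b o : X) : gromov a b o ≤ dist a o := by
  unfold gromov; have := dist_triangle b a o; rw [dist_comm b a] at this; linarith
theorem gr_le_right (a b o : X) : gromov a b o ≤ dist b o := by
  rw [gr_comm]; exact gr_le_left b a o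
theorem gr_swap (a b o : X) : gromov a b o + gromov o b a = dist a o := by
  unfold gromov; rw [dist_comm o a, dist_comm b o, dist_comm b a]; ring
theorem gr_self (a o : X) : gromov a a o = dist a o := by
  unfold gromov; rw [dist_self]; ring
theorem gr_lip (a a' b o : X) : gromov a b o ≤ gromov a' b o + dist a a' := by
  unfold gromov
  have := dist_triangle a a' o; have := dist_triangle a' a b
  rw [dist_comm a' a] at this; linarith
theorem gr_lip_base (a b o o' : X) : gromov a b o ≤ gromov a b o' + dist o o' := by
  unfold gromov
  have := dist_triangle a o' o; have := dist_triangle b o' o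
  rw [dist_comm o' o] at *; linarith

theorem four_of_hyp (h : IsDeltaHyperbolic X 5) (a b c e : X) :
    dist a b + dist c e ≤ max (dist a c + dist b e) (dist a e + dist b c) + 10 := by
  have := h a c b e
  unfold gromov at this
  rw [dist_comm c b] at this
  rcases le_total (dist a c + dist b e) (dist a e + dist b c) with h1 | h1
  · rw [max_eq_right h1]
    rcases min_choice ((dist a e + dist c e - dist a c) / 2) ((dist c e + dist b e - dist b c) / 2)
      with h2 | h2 <;> rw [h2] at this <;> linarith
  · rw [max_eq_left h1]
    rcases min_choice ((dist a e + dist c e - dist a c) / 2) ((dist c e + dist b e - dist b c) / 2)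
      with h2 | h2 <;> rw [h2] at this <;> linarith

theorem gr_ge (h : IsDeltaHyperbolic X 5) {a b c o : X} {r : ℝ} (h1 : r ≤ gromov a b o)
    (h2 : r ≤ gromov b c o) : r - 5 ≤ gromov a c o := by
  have := h a b c o
  have := le_min h1 h2
  linarith

/-- If `a` and `b` fellow travel longer than `a` and `c`, then `b` and `c` diverge early. -/
theorem gr_le (h : IsDeltaHyperbolic X 5) {a b c o : X} {r : ℝ} (h1 : gromov a c o ≤ r)
    (h2 : r + 5 < gromov a b o) : gromov b c o ≤ r + 5 := by
  by_contra! h3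
  have := h a b c o
  have := lt_min h2 h3
  linarith

/-- Two points near a geodesic from `a` to `b` are close if they are equally far from `a`. -/
theorem lemmaZ (h : IsDeltaHyperbolic X 5) {a b z w : X} {ε r : ℝ} (h1 : gromov a b z ≤ ε)
    (h2 : gromov a b w ≤ ε) (h3 : |dist a z - dist a w| ≤ r) : dist z w ≤ r + 2 * ε + 10 := by
  have := four_of_hyp h z w a b
  unfold gromov at h1 h2
  rw [abs_le] at h3
  rw [dist_comm z a, dist_comm w a, dist_comm z b, dist_comm w b] at this
  rw [dist_comm b z] at *
  rw [dist_comm b w] at *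
  rcases max_choice (dist a z + dist w b) (dist z b + dist a w) with h4 | h4 <;>
    rw [h4] at this <;> linarith

end

variable {G X : Type} [Group G] [MetricSpace X] [MulAction G X]

theorem gr_smul (A : HAct G X) (g : G) (a b o : X) :
    gromov (g • a) (g • b) (g • o) = gromov a b o := by
  unfold gromov; rw [A.iso, A.iso, A.iso]

theorem dist_smul_inv (A : HAct G X) (g : G) (a b : X) : dist (g • a) b = dist a (g⁻¹ • b) := by
  rw [← A.iso g⁻¹, inv_smul_smul]

/-- The displacement `max (d(ux,x), d(vx,x))` of a pair of elements. -/
def disp (u v : G) (x : X) : ℝ := max (dist (u • x) x) (dist (v • x) x)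

theorem dist_inv_smul (A : HAct G X) (g : G) (x : X) : dist (g⁻¹ • x) x = dist (g • x) x := by
  rw [dist_smul_inv A, inv_inv, dist_comm]

/-- The four letters `u, v` and their inverses. -/
def letters (u v : G) : Set G := {u, u⁻¹, v, v⁻¹}

theorem letters_inv {u v s : G} (h : s ∈ letters u v) : s⁻¹ ∈ letters u v := by
  simp only [letters, Set.mem_insert_iff, Set.mem_singleton_iff] at *
  rcases h with rfl | rfl | rfl | rfl <;> simp

theorem letters_disp (A : HAct G X) {u v s : G} (h : s ∈ letters u v) (x : X) :
    dist (s • x) x ≤ disp u v x := by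
  simp only [letters, Set.mem_insert_iff, Set.mem_singleton_iff] at h
  unfold disp
  rcases h with rfl | rfl | rfl | rfl <;> simp [dist_inv_smul A]

/-- At a point of almost minimal displacement, two letters of almost maximal displacement diverge:
otherwise moving the point in their common direction decreases the displacement. -/
theorem exists_diverging (A : HAct G X) {u v : G} (hC : ∀ x : X, 500 ≤ disp u v x) {x : X}
    (hx : ∀ y : X, disp u v x < disp u v y + 1) :
    ∃ s ∈ letters u v, ∃ t ∈ letters u v, disp u v x - 42 ≤ dist (s • x) x ∧
      disp u v x - 42 ≤ dist (t • x) x ∧ gromov (s • x) (t • x) x < 20 := by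
  by_contra! hno
  have hE := hC x
  obtain ⟨s₀, hs₀, hs₀d⟩ : ∃ s ∈ letters u v, dist (s • x) x = disp u v x := by
    unfold disp
    rcases max_choice (dist (u • x) x) (dist (v • x) x) with h | h <;> rw [h]
    · exact ⟨u, by simp [letters], rfl⟩
    · exact ⟨v, by simp [letters], rfl⟩
  obtain ⟨f, f0, f1, fi⟩ := A.geo x (s₀ • x)
  rw [dist_comm, hs₀d] at f1 fi
  have hm0 : (0 : ℝ) ∈ Set.Icc (0 : ℝ) (disp u v x) := ⟨le_rfl, by linarith⟩
  have hm1 : (20 : ℝ) ∈ Set.Icc (0 : ℝ) (disp u v x) := ⟨by norm_num, by linarith⟩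
  have hm2 : disp u v x ∈ Set.Icc (0 : ℝ) (disp u v x) := ⟨by linarith, le_rfl⟩
  set y := f 20 with hy
  have d1 : dist y x = 20 := by
    have := fi 20 hm1 0 hm0; rw [f0] at this; rw [this]; norm_num
  have d2 : dist y (s₀ • x) = disp u v x - 20 := by
    have := fi 20 hm1 _ hm2; rw [f1] at this
    rw [this, abs_of_nonpos (by linarith)]; ring
  have g0 : gromov y (s₀ • x) x = 20 := by
    unfold gromov; rw [d1, d2, hs₀d]; ring
  have near : ∀ s ∈ letters u v, disp u v x - 42 ≤ dist (s • x) x →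
      dist y (s • x) ≤ dist (s • x) x - 10 := fun s hs hd => by
    have h1 := hno s₀ hs₀ s hs (by linarith) hd
    have h2 := gr_ge A.hyp (g0.ge) h1
    unfold gromov at h2; linarith
  have hlt : ∀ s ∈ letters u v, dist (s • y) y ≤ disp u v x - 1 := fun s hs => by
    have hsx := letters_disp A hs x
    by_cases hd : disp u v x - 42 ≤ dist (s • x) x
    · have h1 := near s hs hd
      have h2 := near s⁻¹ (letters_inv hs) (by rwa [dist_inv_smul A])
      rw [dist_inv_smul A, dist_comm, dist_smul_inv A, inv_inv] at h2
      have h3 := four_of_hyp A.hyp (s • y) y (s • x) x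
      rw [A.iso, d1] at h3
      rw [dist_comm (s • y) x] at h3
      rcases max_choice (20 + 20) (dist x (s • y) + dist y (s • x)) with h | h <;>
        rw [h] at h3 <;> linarith
    · have h1 := dist_triangle4 (s • y) (s • x) x y
      rw [A.iso, dist_comm x y, d1] at h1
      linarith
  have h1 := hlt u (by simp [letters])
  have h2 := hlt v (by simp [letters])
  have := hx y
  have h3 : disp u v y ≤ disp u v x - 1 := max_le h1 h2
  linarith

/-- An element of word length at most two that translates a base point `x` by a definite amount,
without backtracking. -/
theorem exists_pivot (A : HAct G X) [Nonempty X] {u v : G} (hC : ∀ x : X, 500 ≤ disp u v x) :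
    ∃ (x : X) (g : G), (g ∈ letters u v ∨ ∃ s ∈ letters u v, ∃ t ∈ letters u v, g = s * t) ∧
      disp u v x - 42 ≤ dist (g • x) x ∧ gromov (g • x) (g⁻¹ • x) x ≤ 40 := by
  obtain ⟨x, hx⟩ : ∃ x : X, ∀ y, disp u v x < disp u v y + 1 := by
    have hb : BddBelow (Set.range (disp u v : X → ℝ)) :=
      ⟨500, by rintro _ ⟨x, rfl⟩; exact hC x⟩
    obtain ⟨_, ⟨x, rfl⟩, hx⟩ := exists_lt_of_csInf_lt (Set.range_nonempty (disp u v : X → ℝ))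
      (lt_add_one (sInf (Set.range (disp u v : X → ℝ))))
    exact ⟨x, fun y => by have := csInf_le hb ⟨y, rfl⟩; linarith⟩
  obtain ⟨s, hs, t, ht, hsd, htd, hst⟩ := exists_diverging A hC hx
  have hE := hC x
  refine ⟨x, ?_⟩
  by_cases h1 : gromov (s • x) (s⁻¹ • x) x ≤ 40
  · exact ⟨s, .inl hs, hsd, h1⟩
  by_cases h2 : gromov (t • x) (t⁻¹ • x) x ≤ 40
  · exact ⟨t, .inl ht, htd, h2⟩
  push Not at h1 h2
  refine ⟨s⁻¹ * t, .inr ⟨_, letters_inv hs, t, ht, rfl⟩, ?_, ?_⟩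
  · have : dist ((s⁻¹ * t) • x) x = dist (s • x) (t • x) := by
      rw [mul_smul, dist_smul_inv A, inv_inv, dist_comm]
    rw [this]; unfold gromov at hst; linarith
  -- `s⁻¹ t x` lies in the direction of `s⁻¹ x`, and its inverse in that of `t⁻¹ x`
  have e1 : ∀ a b : G, gromov (a⁻¹ • x) ((a⁻¹ * b) • x) x + gromov (a • x) (b • x) x =
      dist (a • x) x := fun a b => by
    have := gr_smul A a⁻¹ x (b • x) (a • x)
    rw [inv_smul_smul, ← mul_smul] at this
    rw [this, add_comm]; exact gr_swap _ _ _
  have f1 := e1 s t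
  have f2 := e1 t s
  rw [gr_comm (t • x)] at f2
  have k1 : gromov (s⁻¹ • x) (t • x) x ≤ 20 + 5 := gr_le A.hyp hst.le (by linarith)
  have k2 : gromov (t⁻¹ • x) (s⁻¹ • x) x ≤ 25 + 5 := by
    refine gr_le A.hyp (a := t • x) ?_ (by linarith)
    rw [gr_comm]; linarith
  have k3 : gromov ((s⁻¹ * t) • x) (t⁻¹ • x) x ≤ 30 + 5 := by
    refine gr_le A.hyp (a := s⁻¹ • x) ?_ (by linarith)
    rw [gr_comm]; linarith
  have k4 : gromov ((t⁻¹ * s) • x) ((s⁻¹ * t) • x) x ≤ 35 + 5 := by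
    refine gr_le A.hyp (a := t⁻¹ • x) ?_ (by linarith)
    rw [gr_comm]; linarith
  rw [mul_inv_rev, inv_inv, gr_comm]; linarith

end TB

/-! ### Isometries without backtracking -/

namespace TB

variable {G X : Type} [Group G] [MetricSpace X] [MulAction G X]

/-- `g` moves `x` far, without backtracking; consequently `k ↦ g ^ k x` is a quasi-geodesic. -/
structure Piv (g : G) (x : X) : Prop where
  far : 458 ≤ dist (g • x) x
  nb : gromov (g • x) (g⁻¹ • x) x ≤ 40

theorem Piv.inv (A : HAct G X) {g : G} {x : X} (h : Piv g x) : Piv g⁻¹ x :=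
  ⟨by rw [dist_inv_smul A]; exact h.far, by rw [inv_inv, gr_comm]; exact h.nb⟩

theorem Piv.conj (A : HAct G X) {g : G} {x : X} (h : Piv g x) (t : G) :
    Piv (t * g * t⁻¹) (t • x) := by
  have e : ∀ g : G, (t * g * t⁻¹) • t • x = t • g • x := fun g => by
    rw [← mul_smul, ← mul_smul]; congr 1; group
  refine ⟨?_, ?_⟩
  · rw [e, A.iso]; exact h.far
  · have : (t * g * t⁻¹)⁻¹ = t * g⁻¹ * t⁻¹ := by group
    rw [this, e, e, gr_smul A]; exact h.nb

theorem gr_base (a o : X) : gromov o a o = 0 := by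
  unfold gromov; rw [dist_self, dist_comm]; ring

theorem Piv.aux (A : HAct G X) {g : G} {x : X} (h : Piv g x) (m : ℕ) :
    gromov (g ^ (m + 1) • x) (g⁻¹ • x) x ≤ 45 ∧
      dist (g • x) x - 45 ≤ gromov (g ^ (m + 1) • x) (g • x) x := by
  have hf := h.far
  induction m with
  | zero =>
    have := h.nb
    simp only [zero_add, pow_one]
    rw [gr_self]
    constructor <;> linarith
  | succ m ih =>
    have e : gromov (g ^ (m + 2) • x) x (g • x) = gromov (g ^ (m + 1) • x) (g⁻¹ • x) x := by
      rw [← gr_smul A g (g ^ (m + 1) • x), smul_inv_smul, ← mul_smul, ← pow_succ']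
    have h1 := gr_swap (g • x) (g ^ (m + 2) • x) x
    rw [gr_comm x, e, gr_comm] at h1
    have h2 : dist (g • x) x - 45 ≤ gromov (g ^ (m + 2) • x) (g • x) x := by linarith [ih.1]
    refine ⟨?_, h2⟩
    have := gr_le A.hyp (b := g ^ (m + 2) • x) h.nb (by rw [gr_comm]; linarith)
    linarith

theorem Piv.gr_pow (A : HAct G X) {g : G} {x : X} (h : Piv g x) (m l : ℕ) :
    gromov (g ^ m • x) (g⁻¹ ^ l • x) x ≤ 50 := by
  rcases m with _ | m
  · rw [pow_zero, one_smul, gr_base]; norm_num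
  rcases l with _ | l
  · rw [pow_zero, one_smul, gr_comm, gr_base]; norm_num
  have h1 := (h.aux A m).1
  have h2 := ((h.inv A).aux A l).2
  rw [dist_inv_smul A] at h2
  have hf := h.far
  have := gr_le A.hyp (a := g⁻¹ • x) (b := g⁻¹ ^ (l + 1) • x) (c := g ^ (m + 1) • x) (o := x)
    (r := 45) (by rw [gr_comm]; exact h1) (by rw [gr_comm]; linarith)
  rw [gr_comm]; linarith

theorem dist_pow_add (A : HAct G X) (g : G) (x : X) (m l : ℕ) :
    dist (g ^ (m + l) • x) x = dist (g ^ m • x) (g⁻¹ ^ l • x) := by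
  have : g⁻¹ ^ l • x = (g ^ l)⁻¹ • x := by rw [inv_pow]
  rw [this, ← A.iso (g ^ l) (g ^ m • x), smul_inv_smul, ← mul_smul, ← pow_add, add_comm l]

theorem dist_inv_pow (A : HAct G X) (g : G) (x : X) (l : ℕ) :
    dist (g⁻¹ ^ l • x) x = dist (g ^ l • x) x := by
  rw [inv_pow, dist_inv_smul A]

theorem Piv.dist_add (A : HAct G X) {g : G} {x : X} (h : Piv g x) (m l : ℕ) :
    dist (g ^ m • x) x + dist (g ^ l • x) x - 100 ≤ dist (g ^ (m + l) • x) x := by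
  have := h.gr_pow A m l
  unfold gromov at this
  rw [dist_inv_pow A, ← dist_pow_add A] at this
  linarith

theorem dist_pow_le (A : HAct G X) (g : G) (x : X) (m : ℕ) :
    dist (g ^ m • x) x ≤ m * dist (g • x) x := by
  induction m with
  | zero => simp
  | succ m ih =>
    have := dist_triangle (g ^ (m + 1) • x) (g ^ m • x) x
    rw [pow_succ, mul_smul, A.iso] at this
    rw [pow_succ, mul_smul]
    push_cast; linarith

theorem Piv.dist_pow (A : HAct G X) {g : G} {x : X} (h : Piv g x) (m : ℕ) :
    m * (dist (g • x) x - 100) ≤ dist (g ^ m • x) x := by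
  induction m with
  | zero => simp
  | succ m ih =>
    have := h.dist_add A m 1
    rw [pow_one] at this
    push_cast; linarith

theorem Piv.infinite (A : HAct G X) {g : G} {x : X} (h : Piv g x) : ¬ IsOfFinOrder g := by
  intro hg
  obtain ⟨m, hm, hm1⟩ := isOfFinOrder_iff_pow_eq_one.1 hg
  have := h.dist_pow A m
  rw [hm1, one_smul, dist_self] at this
  have h1 := h.far
  have h2 : (0 : ℝ) < m := by exact_mod_cast hm
  nlinarith

/-- Translating a point `p` near the quasi-axis `o, f o, …, f ^ m o` by `f ^ k` moves it by about
the displacement of `f ^ k` in the direction of `f ^ m o`. -/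
theorem Piv.translate (A : HAct G X) {f : G} {o : X} (h : Piv f o) {m k : ℕ} {p : X}
    (hp : gromov o (f ^ m • o) p ≤ 10) (hk : dist o p + dist (f ^ k • o) o ≤ dist (f ^ m • o) o) :
    |dist p (f ^ k • p) - dist (f ^ k • o) o| ≤ 130 ∧ gromov p (f ^ m • o) (f ^ k • p) ≤ 180 := by
  rcases k with _ | k
  · simp only [pow_zero, one_smul, dist_self, sub_zero, abs_zero]
    exact ⟨by norm_num, by rw [gr_base]; norm_num⟩
  have hmk := h.dist_add A m (k + 1)
  have hk50 : 50 ≤ dist (f ^ (k + 1) • o) o := by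
    have h1 := h.dist_pow A (k + 1)
    have h2 := h.far
    push_cast at h1
    nlinarith [Nat.cast_nonneg (α := ℝ) k]
  set w := f ^ (k + 1) • p with hw
  set R := f ^ (m + (k + 1)) • o with hR
  set Q := f ^ m • o with hQ
  set q := f ^ (k + 1) • o with hq
  have e1 : dist q w = dist o p := A.iso _ _ _
  have e2 : dist q R = dist Q o := by
    have : R = f ^ (k + 1) • Q := by rw [hR, hQ, ← mul_smul, ← pow_add, add_comm]
    rw [this, A.iso, dist_comm]
  have e3 : dist w R = dist p Q := by
    have : R = f ^ (k + 1) • Q := by rw [hR, hQ, ← mul_smul, ← pow_add, add_comm]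
    rw [this, A.iso]
  have e4 : dist Q R = dist q o := by
    have : R = f ^ m • q := by rw [hR, hq, ← mul_smul, ← pow_add]
    rw [this, A.iso, dist_comm]
  unfold gromov at hp
  rw [dist_comm Q p, dist_comm o Q] at hp
  rw [dist_comm R o] at hmk
  have t1 := dist_triangle o w R
  have t2 := dist_triangle o q w
  have t3 := dist_triangle p Q R
  have t4 := dist_triangle o p Q
  have t5 := dist_triangle o p w
  have t6 := dist_triangle o p R
  have t7 := dist_triangle o q R
  have t8 := dist_triangle o Q R
  rw [dist_comm o q] at *
  rw [dist_comm o Q] at *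
  -- position of `w` along `[o, R]`
  have w1 : dist o p + dist q o - 120 ≤ dist o w := by linarith
  have w2 : dist o w ≤ dist o p + dist q o := by linarith
  have f1 := four_of_hyp A.hyp p w o R
  have f2 := four_of_hyp A.hyp w Q o R
  rw [dist_comm p o, dist_comm w o] at f1
  rw [dist_comm w o] at f2
  have d1 : dist p w ≤ dist q o + 130 := by
    rcases max_choice (dist o p + dist w R) (dist p R + dist o w) with hh | hh <;> rw [hh] at f1 <;>
      linarith
  have d2 : dist w Q ≤ dist Q o - dist o w + 130 := by
    rcases max_choice (dist o w + dist Q R) (dist w R + dist Q o) with hh | hh <;> rw [hh] at f2 <;>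
      linarith
  refine ⟨abs_le.2 ⟨by linarith, by linarith⟩, ?_⟩
  unfold gromov
  rw [dist_comm Q w]
  linarith

/-- Acylindricity, for displacement at most `1000`. -/
def Acyl (G X : Type) [Group G] [MetricSpace X] [MulAction G X] (κ N : ℕ) : Prop :=
  ∀ a b : X, (κ : ℝ) ≤ dist a b →
    {g : G | dist (g • a) a ≤ 1000 ∧ dist (g • b) b ≤ 1000}.Finite ∧
      {g : G | dist (g • a) a ≤ 1000 ∧ dist (g • b) b ≤ 1000}.ncard ≤ N

/-- If the quasi-axes of `g₁` and of `t g₂ t⁻¹` fellow travel for long, then the two elements have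
a common power. -/
theorem common_power (A : HAct G X) {κ N : ℕ} (hac : Acyl G X κ N) {g₁ g₂ t : G} {x : X}
    (h₁ : Piv g₁ x) (h₂ : Piv g₂ x) (he : ∀ k : ℕ, dist (g₁ ^ k • x) x = dist (g₂ ^ k • x) x)
    {m : ℕ} (hB : 2 * dist (t • x) x + 11 + κ + N * dist (g₁ • x) x ≤
      gromov (g₁ ^ m • x) ((t * g₂ ^ m) • x) x) :
    ∃ k : ℕ, 1 ≤ k ∧ g₁ ^ k = t * g₂ ^ k * t⁻¹ := by
  set P := g₁ ^ m • x with hP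
  set Q := (t * g₂ ^ m) • x with hQ
  set τ := dist (t • x) x with hτ
  have hτ0 : 0 ≤ τ := dist_nonneg
  have hPx : 2 * τ + 11 + κ + N * dist (g₁ • x) x ≤ dist x P := by
    rw [dist_comm x P]; exact hB.trans (gr_le_left _ _ _)
  have hN : 0 ≤ N * dist (g₁ • x) x := by positivity
  have hκ : (0 : ℝ) ≤ κ := Nat.cast_nonneg _
  set h := t * g₂ * t⁻¹ with hh
  have hpow : ∀ k : ℕ, h ^ k = t * g₂ ^ k * t⁻¹ := fun k => by rw [hh, conj_pow]
  have hpt : ∀ k : ℕ, h ^ k • t • x = t • g₂ ^ k • x := fun k => by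
    rw [hpow, ← mul_smul, ← mul_smul]; congr 1; group
  have hhp : Piv h (t • x) := h₂.conj A t
  have hQ' : Q = h ^ m • t • x := by rw [hpt, hQ, mul_smul]
  obtain ⟨f, f0, f1, fi⟩ := A.geo x P
  have key : ∀ s : ℝ, τ + 11 ≤ s → s ≤ τ + 11 + κ → ∀ k : ℕ, k ≤ N →
      dist (g₁ ^ k • f s) (h ^ k • f s) ≤ 1000 := by
    intro s hs1 hs2 k hk
    have hkN : dist (g₁ ^ k • x) x ≤ N * dist (g₁ • x) x :=
      (dist_pow_le A g₁ x k).trans (by gcongr)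
    have m0 : (0 : ℝ) ∈ Set.Icc (0 : ℝ) (dist x P) := ⟨le_rfl, by linarith⟩
    have ms : s ∈ Set.Icc (0 : ℝ) (dist x P) := ⟨by linarith, by linarith⟩
    have m1 : dist x P ∈ Set.Icc (0 : ℝ) (dist x P) := ⟨by linarith, le_rfl⟩
    set p := f s with hp
    have d1 : dist x p = s := by
      have := fi 0 m0 s ms
      rw [f0] at this
      rw [this, abs_of_nonpos (by linarith)]; ring
    have d2 : dist p P = dist x P - s := by
      have := fi s ms _ m1
      rw [f1] at this
      rw [this, abs_of_nonpos (by linarith)]; ring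
    have gp : gromov x P p = 0 := by
      unfold gromov; rw [dist_comm P p, d1, d2]; ring
    have gp' : gromov p P x = s := by
      have := gr_swap p P x
      rw [gp, dist_comm p x, d1] at this; linarith
    have gQ : s - 5 ≤ gromov p Q x := gr_ge A.hyp gp'.ge (by linarith)
    have gQ' : gromov x Q p ≤ 5 := by
      have := gr_swap p Q x
      rw [dist_comm p x, d1] at this; linarith
    have gt : gromov (t • x) Q p ≤ 5 + 5 := by
      refine gr_le A.hyp gQ' ?_
      have := gr_swap x (t • x) p
      have h3 := gr_le_right p (t • x) x
      rw [d1] at this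
      linarith
    have T1 := h₁.translate A (m := m) (k := k) (p := p) (by rw [← hP, gp]; norm_num)
      (by rw [← hP, d1, dist_comm P]; linarith)
    have ek : dist (h ^ k • t • x) (t • x) = dist (g₁ ^ k • x) x := by
      rw [hpt, A.iso, he]
    have em : dist (h ^ m • t • x) (t • x) = dist x P := by
      rw [hpt, A.iso, ← he, dist_comm]
    have T2 := hhp.translate A (m := m) (k := k) (p := p) (by rw [← hQ']; linarith)
      (by
        rw [ek, em]
        have := dist_triangle (t • x) x p
        linarith)
    rw [← hP] at T1
    rw [ek, ← hQ'] at T2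
    have c1 : gromov p P (h ^ k • p) ≤ 185 := by
      have s1 := gr_swap (h ^ k • p) Q p
      have s2 := gr_swap (h ^ k • p) P p
      have s3 : gromov P Q x - s ≤ gromov P Q p := by
        have := gr_lip_base P Q x p; rw [d1] at this; linarith
      have a1 := (abs_le.1 T2.1).2
      rw [dist_comm p] at a1
      have := gr_ge A.hyp (a := h ^ k • p) (b := Q) (c := P) (o := p)
        (r := dist (h ^ k • p) p - 180) (by linarith) (by rw [gr_comm Q]; linarith)
      linarith
    have := lemmaZ A.hyp (r := 260) (T1.2.trans (by norm_num)) c1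
      (by
        have := abs_le.1 T1.1
        have := abs_le.1 T2.1
        exact abs_le.2 ⟨by linarith, by linarith⟩)
    linarith
  have hpts : (κ : ℝ) ≤ dist (f (τ + 11)) (f (τ + 11 + κ)) := by
    rw [fi _ ⟨by linarith, by linarith⟩ _ ⟨by linarith, by linarith⟩, abs_of_nonpos (by linarith)]
    linarith
  obtain ⟨hfin, hcard⟩ := hac _ _ hpts
  set S := {g : G | dist (g • f (τ + 11)) (f (τ + 11)) ≤ 1000 ∧
    dist (g • f (τ + 11 + κ)) (f (τ + 11 + κ)) ≤ 1000} with hS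
  have hmaps : ∀ k ∈ Finset.range (N + 1), (g₁ ^ k)⁻¹ * h ^ k ∈ hfin.toFinset := by
    intro k hk
    have hk' : k ≤ N := by simpa [Nat.lt_succ_iff] using hk
    rw [Set.Finite.mem_toFinset]
    constructor
    · rw [mul_smul, dist_smul_inv A, inv_inv, dist_comm]
      exact key _ le_rfl (by linarith) k hk'
    · rw [mul_smul, dist_smul_inv A, inv_inv, dist_comm]
      exact key _ (by linarith) le_rfl k hk'
  have hlt : hfin.toFinset.card < (Finset.range (N + 1)).card := by
    rw [Finset.card_range, ← Set.ncard_eq_toFinset_card S hfin]; omega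
  obtain ⟨a, ha, b, hb, hab, heq⟩ := Finset.exists_ne_map_eq_of_card_lt_of_maps_to hlt hmaps
  have fin : ∀ a b : ℕ, a < b → (g₁ ^ a)⁻¹ * h ^ a = (g₁ ^ b)⁻¹ * h ^ b →
      ∃ k : ℕ, 1 ≤ k ∧ g₁ ^ k = t * g₂ ^ k * t⁻¹ := by
    intro a b hlt e
    refine ⟨b - a, by omega, ?_⟩
    obtain ⟨c, rfl⟩ := Nat.exists_eq_add_of_lt hlt
    have : a + c + 1 - a = c + 1 := by omega
    rw [this, ← hpow]
    have h1 : a + c + 1 = (c + 1) + a := by ring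
    rw [h1, pow_add h, pow_add g₁] at e
    have e2 : (g₁ ^ a)⁻¹ * h ^ a = (g₁ ^ a)⁻¹ * ((g₁ ^ (c + 1))⁻¹ * h ^ (c + 1)) * h ^ a := by
      rw [e]; group
    have e3 := mul_right_cancel e2
    have e4 : (g₁ ^ (c + 1))⁻¹ * h ^ (c + 1) = 1 := by
      have := congrArg (g₁ ^ a * ·) e3
      simpa using this.symm
    exact (inv_mul_eq_one.1 e4)
  rcases lt_or_gt_of_ne hab with h1 | h1
  · exact fin a b h1 heq
  · exact fin b a h1 heq.symm

end TB

/-! ### Free semigroups from ping-pong -/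

namespace TB

variable {G X : Type} [Group G] [MetricSpace X] [MulAction G X]

theorem Piv.gr_zpow (A : HAct G X) {g : G} {x : X} (h : Piv g x) {i j l : ℤ} (hij : i ≤ j)
    (hjl : j ≤ l) : gromov (g ^ l • x) (g ^ i • x) (g ^ j • x) ≤ 50 := by
  obtain ⟨a, rfl⟩ := Int.le.dest hij
  obtain ⟨b, rfl⟩ := Int.le.dest hjl
  have := h.gr_pow A b a
  rw [← gr_smul A (g ^ (i + a)), ← mul_smul, ← mul_smul] at this
  have e : g ^ (i + (a : ℤ)) * g⁻¹ ^ a = g ^ i := by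
    rw [zpow_add, zpow_natCast, inv_pow, mul_inv_cancel_right]
  have e' : g ^ (i + (a : ℤ)) * g ^ b = g ^ (i + a + b) := by
    rw [zpow_add _ (i + (a : ℤ)), zpow_natCast]
  rwa [e, e'] at this

/-- An element commuting with a power of `g` moves the base point close to the quasi-axis. -/
theorem Piv.on_axis (A : HAct G X) {g : G} {x : X} (h : Piv g x) {z : G} {J : ℕ}
    (hz : Commute z (g ^ J)) (hJ : dist (z • x) x + 65 < dist (g ^ J • x) x) :
    gromov (g ^ J • x) ((g ^ J)⁻¹ • x) (z • x) ≤ 60 := by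
  have h1 : gromov ((g ^ J)⁻¹ • x) (g ^ J • x) x ≤ 50 := by
    rw [gr_comm, ← inv_pow]; exact h.gr_pow A J J
  rw [← gr_smul A z] at h1
  have far : ∀ c : G, Commute z c → dist (z • x) x + 65 < dist (c • x) x →
      60 < gromov (z • c • x) (c • x) (z • x) := fun c hc hd => by
    have e : dist (z • c • x) (c • x) = dist (z • x) x := by
      rw [← mul_smul, hc.eq, mul_smul, A.iso]
    have e2 := dist_triangle (z • c • x) (c • x) (z • x)
    have e3 : dist (z • c • x) (z • x) = dist (c • x) x := A.iso _ _ _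
    unfold gromov; linarith
  have f1 := far _ hz hJ
  have f2 := far _ hz.inv_right (by rw [dist_inv_smul A]; exact hJ)
  have h2 := gr_le A.hyp (a := z • g ^ J • x) (r := 50) (by rw [gr_comm]; exact h1)
    (by linarith : (50 : ℝ) + 5 < gromov (z • g ^ J • x) (g ^ J • x) (z • x))
  have h3 := gr_le A.hyp (a := z • (g ^ J)⁻¹ • x) (r := 55) (c := g ^ J • x)
    (by rw [gr_comm]; linarith)
    (by linarith : (55 : ℝ) + 5 < gromov (z • (g ^ J)⁻¹ • x) ((g ^ J)⁻¹ • x) (z • x))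
  rw [gr_comm]; linarith

theorem Piv.exists_far (A : HAct G X) {g : G} {x : X} (h : Piv g x) {k : ℕ} (hk : 1 ≤ k) (r : ℝ) :
    ∃ J : ℕ, r < dist (g ^ (k * J) • x) x := by
  obtain ⟨J, hJ⟩ := exists_nat_gt r
  refine ⟨J, ?_⟩
  have h1 := h.dist_pow A (k * J)
  have h2 := h.far
  have h3 : (J : ℝ) ≤ ((k * J : ℕ) : ℝ) := by exact_mod_cast Nat.le_mul_of_pos_left J hk
  have h4 : (0 : ℝ) ≤ J := Nat.cast_nonneg _
  nlinarith

/-- A real sequence starting below `T` and with steps at most `s` gets `s`-close to `T` before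
exceeding it. -/
theorem discrete_ivt {D : ℕ → ℝ} {T s : ℝ} {n : ℕ} (h0 : D 0 ≤ T) (hn : T ≤ D n)
    (hs : ∀ j, D (j + 1) ≤ D j + s) (hs0 : 0 ≤ s) : ∃ j ≤ n, |D j - T| ≤ s := by
  classical
  have hex : ∃ j, T ≤ D j := ⟨n, hn⟩
  refine ⟨Nat.find hex, Nat.find_min' hex hn, ?_⟩
  have h1 := Nat.find_spec hex
  rcases hj : Nat.find hex with _ | j
  · rw [hj] at h1
    rw [abs_le]; constructor <;> linarith
  · rw [hj] at h1
    have h2 : ¬ T ≤ D j := Nat.find_min hex (by omega)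
    have := hs j
    rw [abs_le]; constructor <;> linarith

theorem Piv.near_power (A : HAct G X) {g : G} {x : X} (h : Piv g x) {k : ℕ} (hk : 1 ≤ k) {z : G}
    (hz : Commute z (g ^ k)) :
    ∃ j : ℤ, dist (z • x) ((g ^ k) ^ j • x) ≤ dist (g ^ k • x) x + 130 := by
  obtain ⟨J, hJ⟩ := h.exists_far A hk (dist (z • x) x + 200)
  have hzJ : Commute z (g ^ (k * J)) := by rw [pow_mul]; exact hz.pow_right J
  have h1 := h.on_axis A hzJ (by linarith)
  set M := (g ^ (k * J))⁻¹ • x with hM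
  have hMx : dist M x = dist (g ^ (k * J) • x) x := dist_inv_smul A _ _
  let D : ℕ → ℝ := fun j => dist M ((g ^ k) ^ j • M)
  have hD : ∀ j, D (j + 1) ≤ D j + dist (g ^ k • x) x := fun j => by
    have := dist_triangle M ((g ^ k) ^ j • M) ((g ^ k) ^ (j + 1) • M)
    have e : dist ((g ^ k) ^ j • M) ((g ^ k) ^ (j + 1) • M) = dist (g ^ k • x) x := by
      rw [pow_succ, mul_smul, A.iso, hM, ← mul_smul, pow_mul]
      have : g ^ k * ((g ^ k) ^ J)⁻¹ = ((g ^ k) ^ J)⁻¹ * g ^ k :=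
        ((Commute.refl (g ^ k)).pow_right J).inv_right.eq
      rw [this, mul_smul, A.iso, dist_comm]
    linarith
  obtain ⟨j, hj, hj2⟩ := discrete_ivt (D := D) (T := dist M (z • x)) (n := 2 * J)
    (by simp [D]) (by
      have e : (g ^ k) ^ (2 * J) • M = g ^ (k * J) • x := by
        rw [hM, ← mul_smul, two_mul, pow_add, ← pow_mul, mul_inv_cancel_right]
      simp only [D]
      rw [e]
      have h2 := h.gr_pow A (k * J) (k * J)
      have e2 : g⁻¹ ^ (k * J) • x = M := by rw [inv_pow]
      rw [e2] at h2
      unfold gromov at h2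
      have h3 := dist_triangle M x (z • x)
      rw [dist_comm x (z • x)] at h3
      rw [dist_comm _ M] at h2
      linarith) hD dist_nonneg
  refine ⟨(j : ℤ) - J, ?_⟩
  have e : (g ^ k) ^ j • M = (g ^ k) ^ ((j : ℤ) - J) • x := by
    rw [hM, ← mul_smul, pow_mul, zpow_sub, zpow_natCast, zpow_natCast]
  have h4 : gromov (g ^ (k * J) • x) M ((g ^ k) ^ ((j : ℤ) - J) • x) ≤ 50 := by
    have := h.gr_zpow A (i := -(k * J : ℕ)) (j := k * ((j : ℤ) - J)) (l := (k * J : ℕ))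
      (by push_cast; nlinarith) (by push_cast; nlinarith)
    rwa [zpow_neg, zpow_natCast, zpow_mul, zpow_natCast, ← hM] at this
  have := lemmaZ A.hyp (a := M) (b := g ^ (k * J) • x) (z := z • x)
    (w := (g ^ k) ^ ((j : ℤ) - J) • x) (ε := 60) (r := dist (g ^ k • x) x)
    (by rw [gr_comm]; exact h1) (by rw [gr_comm]; linarith)
    (by rw [abs_sub_comm, ← e]; exact hj2)
  linarith

theorem Piv.finite_commuting (A : HAct G X) {κ N : ℕ} (hac : Acyl G X κ N) {g : G} {x : X}
    (h : Piv g x) {k : ℕ} (hk : 1 ≤ k) (B : ℝ) :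
    {z : G | Commute z (g ^ k) ∧ dist (z • x) x ≤ B}.Finite := by
  obtain ⟨J, hJ⟩ := h.exists_far A hk (B + 65 + κ + |B|)
  set c := g ^ (k * J) with hc
  have hcomm : ∀ z, Commute z (g ^ k) → Commute z c := fun z hz => by
    rw [hc, pow_mul]; exact hz.pow_right J
  have hB := neg_abs_le B
  have hκ : (κ : ℝ) ≤ dist x (c • x) := by
    rw [dist_comm]; have := abs_nonneg B; linarith
  have hfin := (hac x (c • x) hκ).1
  set T := ⌈dist (c⁻¹ • x) x + B⌉ with hT
  refine Set.Finite.subset (s := ⋃ b ∈ Set.Icc (0 : ℤ) T,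
    {z : G | (Commute z (g ^ k) ∧ dist (z • x) x ≤ B) ∧ ⌊dist (c⁻¹ • x) (z • x)⌋ = b}) ?_ ?_
  · refine Set.Finite.biUnion (Set.finite_Icc _ _) fun b _ => ?_
    rcases Set.eq_empty_or_nonempty {z : G | (Commute z (g ^ k) ∧ dist (z • x) x ≤ B) ∧
      ⌊dist (c⁻¹ • x) (z • x)⌋ = b} with he | ⟨z', ⟨hz', hd'⟩, hb'⟩
    · rw [he]; exact Set.finite_empty
    refine (hfin.image (z' * ·)).subset ?_
    rintro z ⟨⟨hz, hd⟩, hb⟩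
    refine ⟨z'⁻¹ * z, ?_, by simp⟩
    have n1 := abs_nonneg B
    have n2 : (0 : ℝ) ≤ κ := Nat.cast_nonneg _
    have a1 := h.on_axis A (hcomm z hz) (by linarith)
    have a2 := h.on_axis A (hcomm z' hz') (by linarith)
    have hfl := Int.abs_sub_lt_one_of_floor_eq_floor (hb.trans hb'.symm)
    have a3 := lemmaZ A.hyp (a := c⁻¹ • x) (b := c • x) (z := z • x) (w := z' • x) (ε := 60) (r := 1)
      (by rw [gr_comm]; exact a1) (by rw [gr_comm]; exact a2) hfl.le
    have a4 : dist ((z'⁻¹ * z) • x) x ≤ 1000 := by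
      rw [mul_smul, dist_smul_inv A, inv_inv]; linarith
    refine ⟨a4, ?_⟩
    have : Commute (z'⁻¹ * z) c := ((hcomm z' hz').inv_left).mul_left (hcomm z hz)
    rw [← mul_smul, this.eq, mul_smul, A.iso]; exact a4
  · rintro z ⟨hz, hd⟩
    simp only [Set.mem_iUnion, Set.mem_setOf_eq]
    refine ⟨_, ⟨Int.floor_nonneg.2 dist_nonneg, ?_⟩, ⟨hz, hd⟩, rfl⟩
    have h1 : dist (c⁻¹ • x) (z • x) ≤ dist (c⁻¹ • x) x + B := by
      have := dist_triangle (c⁻¹ • x) x (z • x)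
      rw [dist_comm x] at this; linarith
    exact (Int.floor_le_ceil _).trans (Int.ceil_le_ceil h1)

/-- Every virtually cyclic subgroup containing an element of infinite order is cyclic. -/
def VCyc (G : Type) [Group G] : Prop :=
  ∀ K : Subgroup G, VirtuallyCyclic K → (∃ g ∈ K, ¬ IsOfFinOrder g) → IsCyclic K

/-- The centralizer of a power of `g` is virtually cyclic, hence cyclic. -/
theorem Piv.cyclic_centralizer (A : HAct G X) {κ N : ℕ} (hac : Acyl G X κ N) (hE : VCyc G) {g : G}
    {x : X} (h : Piv g x) {k : ℕ} (hk : 1 ≤ k) : IsCyclic (Subgroup.centralizer {g ^ k}) := by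
  set C := Subgroup.centralizer {g ^ k} with hC
  have memC : ∀ z : G, z ∈ C ↔ Commute z (g ^ k) := fun z => by
    rw [hC, Subgroup.mem_centralizer_singleton_iff]; exact ⟨fun h => h, fun h => h⟩
  have hc : g ^ k ∈ C := (memC _).2 (Commute.refl _)
  refine hE C ⟨Subgroup.zpowers ⟨g ^ k, hc⟩, inferInstance, ?_⟩
    ⟨g, (memC _).2 ((Commute.refl g).pow_right k), h.infinite A⟩
  have hfin := h.finite_commuting A hac hk (dist (g ^ k • x) x + 130)
  have : Finite (C ⧸ Subgroup.zpowers (⟨g ^ k, hc⟩ : C)) := by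
    have := hfin.to_subtype
    refine Finite.of_surjective (fun z : {z : G | Commute z (g ^ k) ∧ dist (z • x) x ≤
      dist (g ^ k • x) x + 130} =>
        (QuotientGroup.mk (⟨z.1, (memC _).2 z.2.1⟩ : C) :
          C ⧸ Subgroup.zpowers (⟨g ^ k, hc⟩ : C))) ?_
    intro q
    obtain ⟨z, rfl⟩ := QuotientGroup.mk_surjective q
    have hz := (memC _).1 z.2
    obtain ⟨j, hj⟩ := h.near_power A hk hz
    have hcj : Commute (z : G) ((g ^ k) ^ j) := hz.zpow_right j
    refine ⟨⟨z * ((g ^ k) ^ j)⁻¹, ?_, ?_⟩, ?_⟩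
    · exact hz.mul_left ((Commute.refl _).zpow_left j).inv_left
    · rw [hcj.inv_right.eq, mul_smul, dist_smul_inv A, inv_inv]; exact hj
    · rw [QuotientGroup.eq, Subgroup.mem_zpowers_iff]
      refine ⟨j, ?_⟩
      ext
      simp
  exact Subgroup.finiteIndex_of_finite_quotient

theorem commute_of_cyclic {K : Subgroup G} (h : IsCyclic K) {a b : G} (ha : a ∈ K) (hb : b ∈ K) :
    Commute a b := by
  have := h.commutative.is_comm.comm (⟨a, ha⟩ : K) ⟨b, hb⟩
  exact congrArg Subtype.val this

/-- An element `t` with `t g ^ k t⁻¹ = g ^ (± k)` commutes with `g`. -/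
theorem Piv.commute (A : HAct G X) {κ N : ℕ} (hac : Acyl G X κ N) (hE : VCyc G)
    (h2 : ∀ t : G, t ^ 2 = 1 → t = 1) {g : G} {x : X} (h : Piv g x) {k : ℕ} (hk : 1 ≤ k) {t : G}
    (ht : t * g ^ k * t⁻¹ = g ^ k ∨ t * g ^ k * t⁻¹ = (g ^ k)⁻¹) : Commute t g := by
  have hcyc := h.cyclic_centralizer A hac hE hk
  have memC : ∀ z : G, z ∈ Subgroup.centralizer {g ^ k} ↔ Commute z (g ^ k) := fun z => by
    rw [Subgroup.mem_centralizer_singleton_iff]; exact ⟨fun h => h, fun h => h⟩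
  have hg : g ∈ Subgroup.centralizer {g ^ k} := (memC _).2 ((Commute.refl g).pow_right k)
  set c := g ^ k with hc
  have hinf : ∀ m : ℤ, c ^ m = 1 → m = 0 := fun m hm => by
    by_contra hm0
    have : IsOfFinOrder c := isOfFinOrder_iff_zpow_eq_one.2 ⟨m, hm0, hm⟩
    exact h.infinite A ((isOfFinOrder_pow.1 this).resolve_right (by omega))
  rcases ht with ht | ht
  · have : t ∈ Subgroup.centralizer {c} := (memC _).2 (by
      rw [mul_inv_eq_iff_eq_mul] at ht; exact ht)
    exact commute_of_cyclic hcyc this hg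
  · exfalso
    have htc : t * c = c⁻¹ * t := mul_inv_eq_iff_eq_mul.1 ht
    have ht2 : t ^ 2 ∈ Subgroup.centralizer {c} := by
      rw [memC]
      show t ^ 2 * c = c * t ^ 2
      have htc' : t * c⁻¹ = c * t := by
        have : t * c⁻¹ * t⁻¹ = c := by
          have := congrArg (·⁻¹) ht
          simpa [mul_assoc] using this
        exact mul_inv_eq_iff_eq_mul.1 this
      rw [sq, mul_assoc, htc, ← mul_assoc, htc', mul_assoc]
    obtain ⟨⟨e, he⟩, hgen⟩ := hcyc.exists_generator
    obtain ⟨q, hq⟩ := hgen ⟨t ^ 2, ht2⟩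
    obtain ⟨p, hp⟩ := hgen ⟨c, (memC _).2 (Commute.refl _)⟩
    have hq' : e ^ q = t ^ 2 := congrArg Subtype.val hq
    have hp' : e ^ p = c := congrArg Subtype.val hp
    -- `c ^ q = t ^ (2 p)` commutes with `t`, which also inverts it
    have e1 : c ^ q = (t ^ 2) ^ p := by rw [← hp', ← hq', ← zpow_mul, ← zpow_mul, mul_comm]
    have e2 : t * c ^ q * t⁻¹ = c ^ q := by
      rw [e1]
      have : Commute t ((t ^ 2) ^ p) := ((Commute.refl t).pow_right 2).zpow_right p
      rw [this.eq, mul_inv_cancel_right]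
    have e3 : t * c ^ q * t⁻¹ = (c ^ q)⁻¹ := by
      rw [← conj_zpow, ht, inv_zpow]
    have e4 : c ^ (q + q) = 1 := by
      rw [zpow_add]
      nth_rewrite 2 [← e2]
      rw [e3, mul_inv_cancel]
    have := hinf _ e4
    have hq0 : q = 0 := by omega
    rw [hq0, zpow_zero] at hq'
    have ht1 := h2 t hq'.symm
    rw [ht1] at ht
    have e5 : c ^ (2 : ℤ) = 1 := by
      have e6 : c = c⁻¹ := by simpa using ht
      have : c ^ (2 : ℤ) = c * c := zpow_two c
      rw [this]; nth_rewrite 2 [e6]; exact mul_inv_cancel c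
    have := hinf _ e5
    omega

/-- The product of a positive word in two letters. -/
def wp (a b : G) (l : List Bool) : G := (l.map fun c => cond c a b).prod

@[simp] theorem wp_nil (a b : G) : wp a b [] = 1 := rfl
@[simp] theorem wp_cons (a b : G) (c : Bool) (l : List Bool) :
    wp a b (c :: l) = cond c a b * wp a b l := by simp [wp]
@[simp] theorem wp_append (a b : G) (l l' : List Bool) :
    wp a b (l ++ l') = wp a b l * wp a b l' := by simp [wp]

/-- Ping-pong: two elements moving `x` far, with pairwise diverging directions, generate a free
semigroup. -/
theorem free_of_diverging (A : HAct G X) {a b : G} {x : X} {B : ℝ}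
    (hab : gromov (a • x) (b • x) x ≤ B)
    (hinv : ∀ c c' : Bool, gromov ((cond c a b)⁻¹ • x) (cond c' a b • x) x ≤ B)
    (hfar : ∀ c : Bool, 2 * B + 11 ≤ dist (cond c a b • x) x) (l l' : List Bool)
    (hlen : l.length = l'.length) (h : wp a b l = wp a b l') : l = l' := by
  have first : ∀ (l : List Bool) (c : Bool),
      dist (cond c a b • x) x - B - 5 ≤ gromov (wp a b (c :: l) • x) (cond c a b • x) x := by
    intro l
    induction l with
    | nil =>
      intro c
      have : 0 ≤ B := (gr_nonneg _ _ _).trans hab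
      rw [wp_cons, wp_nil, mul_one, gr_self]; linarith
    | cons c' l ih =>
      intro c
      have h1 := ih c'
      have h2 := hfar c'
      have h3 := gr_le A.hyp (a := cond c' a b • x) (b := wp a b (c' :: l) • x)
        (c := (cond c a b)⁻¹ • x) (o := x) (r := B) (by rw [gr_comm]; exact hinv c c') (by rw [gr_comm]; linarith)
      have h4 := gr_swap (cond c a b • x) (wp a b (c :: c' :: l) • x) x
      have h5 : gromov x (wp a b (c :: c' :: l) • x) (cond c a b • x) =
          gromov (wp a b (c' :: l) • x) ((cond c a b)⁻¹ • x) x := by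
        rw [← gr_smul A (cond c a b) (wp a b (c' :: l) • x), smul_inv_smul, gr_comm, ← mul_smul,
          ← wp_cons]
      rw [h5] at h4
      rw [gr_comm]; linarith
  have nab : ∀ l l' : List Bool, wp a b (true :: l) ≠ wp a b (false :: l') := by
    intro l l' he
    have h1 := first l true
    have h2 := first l' false
    rw [← he] at h2
    have h3 := hfar true
    have h4 := hfar false
    simp only [cond_true, cond_false] at *
    have h5 := gr_le A.hyp (b := wp a b (true :: l) • x) hab (by rw [gr_comm]; linarith)
    linarith
  induction l generalizing l' with
  | nil => exact (List.length_eq_zero_iff.1 hlen.symm).symm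
  | cons c l ih =>
    rcases l' with _ | ⟨c', l'⟩
    · simp at hlen
    have hcc : c = c' := by
      rcases c <;> rcases c'
      · rfl
      · exact absurd h.symm (nab _ _)
      · exact absurd h (nab _ _)
      · rfl
    subst hcc
    simp only [wp_cons, mul_right_inj] at h
    rw [ih l' (by simpa using hlen) h]

theorem one_mem_pow_two {U : Set G} (hU : U⁻¹ = U) {u : G} (hu : u ∈ U) (j : ℕ) :
    (1 : G) ∈ U ^ (2 * j) := by
  have h1 : (1 : G) ∈ U ^ 2 := by
    rw [sq]
    exact ⟨u, hu, u⁻¹, by rw [← hU]; simpa using hu, by simp⟩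
  rw [pow_mul]
  have := Set.pow_mem_pow (n := j) h1
  simpa using this

theorem pad_mem {U : Set G} (hU : U⁻¹ = U) {u : G} (hu : u ∈ U) {z : G} {a : ℕ} (hz : z ∈ U ^ a)
    (j : ℕ) : z ∈ U ^ (a + 2 * j) := by
  rw [pow_add]
  exact ⟨z, hz, 1, one_mem_pow_two hU hu j, by simp⟩

/-- The number of multiplications in the generators used to produce a free semigroup. -/
def mExp (κ N : ℕ) : ℕ := 4 * (N + κ + 10)

/-- If `u, v` have no point of small displacement, then two elements of bounded word length in
`u, v` generate a free semigroup. -/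
theorem regime_two (A : HAct G X) [Nonempty X] {κ N : ℕ} (hac : Acyl G X κ N) (hE : VCyc G)
    (h2 : ∀ t : G, t ^ 2 = 1 → t = 1) {U : Set G} (hU : U⁻¹ = U) {u v : G} (hu : u ∈ U)
    (hv : v ∈ U) (huv : ¬ Commute u v) (hC : ∀ x : X, 500 ≤ disp u v x) :
    ∃ a ∈ U ^ (2 * mExp κ N + 2), ∃ b ∈ U ^ (2 * mExp κ N + 2), ∀ l l' : List Bool,
      l.length = l'.length → wp a b l = wp a b l' → l = l' := by
  obtain ⟨x, g, hg, hgd, hgn⟩ := exists_pivot A hC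
  have hEx := hC x
  have hp : Piv g x := ⟨by linarith, hgn⟩
  have hlet : ∀ s ∈ letters u v, s ∈ U := by
    intro s hs
    simp only [letters, Set.mem_insert_iff, Set.mem_singleton_iff] at hs
    rcases hs with rfl | rfl | rfl | rfl
    · exact hu
    · rw [← hU]; simpa using hu
    · exact hv
    · rw [← hU]; simpa using hv
  -- one of `u, v` does not preserve the quasi-axis of `g`
  obtain ⟨t, htl, ht⟩ : ∃ t, t ∈ letters u v ∧ ¬ Commute t g := by
    by_contra! hno
    have hcyc := hp.cyclic_centralizer A hac hE le_rfl
    rw [pow_one] at hcyc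
    have c1 := hno u (by simp [letters])
    have c2 := hno v (by simp [letters])
    refine huv (commute_of_cyclic hcyc ?_ ?_)
    · rw [Subgroup.mem_centralizer_singleton_iff]; exact c1
    · rw [Subgroup.mem_centralizer_singleton_iff]; exact c2
  have hnc : ∀ k : ℕ, 1 ≤ k → t * g ^ k * t⁻¹ ≠ g ^ k ∧ t * g ^ k * t⁻¹ ≠ (g ^ k)⁻¹ :=
    fun k hk => ⟨fun h => ht (hp.commute A hac hE h2 hk (.inl h)),
      fun h => ht (hp.commute A hac hE h2 hk (.inr h))⟩
  set τ := dist (t • x) x with hτ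
  have hτE : τ ≤ dist (g • x) x + 42 := by
    have := letters_disp A htl x; linarith
  have hτ0 : 0 ≤ τ := dist_nonneg
  set ℓ := dist (g • x) x with hℓ
  have hℓ1 : 458 ≤ ℓ := hp.far
  set m := mExp κ N with hm
  set B₀ : ℝ := 2 * τ + 11 + κ + N * ℓ with hB₀
  have hB₀0 : 0 ≤ B₀ := by positivity
  have r1 : gromov (g ^ m • x) ((t * g ^ m) • x) x < B₀ := by
    by_contra! hh
    obtain ⟨k, hk, he⟩ := common_power A hac hp hp (fun _ => rfl) hh
    exact (hnc k hk).1 he.symm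
  have r2 : gromov (g⁻¹ ^ m • x) ((t * g ^ m) • x) x < B₀ := by
    by_contra! hh
    obtain ⟨k, hk, he⟩ := common_power A hac (t := t) (hp.inv A) hp
      (fun k => dist_inv_pow A g x k)
      (by rw [dist_inv_smul A]; exact hh)
    rw [inv_pow] at he
    exact (hnc k hk).2 he.symm
  have r3 : gromov (g ^ m • x) ((t * g⁻¹ ^ m) • x) x < B₀ := by
    by_contra! hh
    obtain ⟨k, hk, he⟩ := common_power A hac hp (hp.inv A) (fun k => (dist_inv_pow A g x k).symm) hh
    refine (hnc k hk).2 ?_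
    have e := congrArg (·⁻¹) he
    simp only [inv_pow, mul_inv_rev, inv_inv] at e
    rw [e]; group
  set B : ℝ := B₀ + 3 * τ + 50 with hB
  have near : ∀ w : G, dist ((t * w * t⁻¹) • x) ((t * w) • x) ≤ τ := fun w => by
    rw [mul_smul _ t⁻¹, A.iso, dist_inv_smul A]
  have binv : (t * g ^ m * t⁻¹)⁻¹ = t * g⁻¹ ^ m * t⁻¹ := by rw [inv_pow]; group
  have hbb : gromov ((t * g ^ m * t⁻¹) • x) ((t * g⁻¹ ^ m * t⁻¹) • x) x ≤ B := by
    have e1 := gr_lip ((t * g ^ m * t⁻¹) • x) ((t * g ^ m) • x) ((t * g⁻¹ ^ m * t⁻¹) • x) x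
    have e2 := gr_lip ((t * g⁻¹ ^ m * t⁻¹) • x) ((t * g⁻¹ ^ m) • x) ((t * g ^ m) • x) x
    rw [gr_comm, gr_comm ((t * g⁻¹ ^ m) • x)] at e2
    have e3 := gr_lip_base ((t * g ^ m) • x) ((t * g⁻¹ ^ m) • x) x (t • x)
    rw [mul_smul t (g ^ m), mul_smul t (g⁻¹ ^ m), gr_smul A, dist_comm x (t • x)] at e3
    have e4 := hp.gr_pow A m m
    have n1 := near (g ^ m)
    have n2 := near (g⁻¹ ^ m)
    rw [← mul_smul, ← mul_smul] at e3
    linarith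
  have hda : m * (ℓ - 100) ≤ dist (g ^ m • x) x := hp.dist_pow A m
  have hmr : (m : ℝ) = 4 * (N + κ + 10) := by rw [hm, mExp]; push_cast; ring
  have hκ0 : (0 : ℝ) ≤ κ := Nat.cast_nonneg _
  have hN0 : (0 : ℝ) ≤ N := Nat.cast_nonneg _
  have hbig : 2 * B + 11 + 2 * τ ≤ m * (ℓ - 100) := by
    rw [hmr, hB, hB₀]
    nlinarith [mul_nonneg hN0 (by linarith : (0 : ℝ) ≤ ℓ - 458),
      mul_nonneg hκ0 (by linarith : (0 : ℝ) ≤ ℓ - 458)]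
  have gmem : g ^ m ∈ U ^ (2 * m) := by
    rcases hg with hg | ⟨s, hs, s', hs', rfl⟩
    · have h1 : g ^ m ∈ U ^ m := Set.pow_mem_pow (hlet g hg)
      have h2 : 2 * m = m + 2 * (2 * (N + κ + 10)) := by rw [hm, mExp]; ring
      rw [h2]
      exact pad_mem hU hu h1 _
    · rw [pow_mul]
      exact Set.pow_mem_pow (by rw [sq]; exact Set.mul_mem_mul (hlet s hs) (hlet s' hs'))
  refine ⟨g ^ m, pad_mem hU hu gmem 1, t * g ^ m * t⁻¹, ?_, ?_⟩
  · have : 2 * m + 2 = 1 + 2 * m + 1 := by ring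
    rw [this, pow_add, pow_add, pow_one]
    exact Set.mul_mem_mul (Set.mul_mem_mul (hlet t htl) gmem) (hlet _ (letters_inv htl))
  · refine free_of_diverging A (x := x) (B := B) ?_ ?_ ?_
    · have e1 := gr_lip ((t * g ^ m * t⁻¹) • x) ((t * g ^ m) • x) (g ^ m • x) x
      rw [gr_comm, gr_comm ((t * g ^ m) • x)] at e1
      have n1 := near (g ^ m)
      linarith
    · intro c c'
      rcases c <;> rcases c' <;> simp only [cond_true, cond_false]
      · rw [gr_comm, binv]; exact hbb
      · have e1 := gr_lip ((t * g⁻¹ ^ m * t⁻¹) • x) ((t * g⁻¹ ^ m) • x) (g ^ m • x) x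
        rw [gr_comm ((t * g⁻¹ ^ m) • x)] at e1
        rw [binv]
        have n1 := near (g⁻¹ ^ m)
        linarith
      · have e1 := gr_lip ((t * g ^ m * t⁻¹) • x) ((t * g ^ m) • x) (g⁻¹ ^ m • x) x
        rw [gr_comm, gr_comm ((t * g ^ m) • x)] at e1
        rw [← inv_pow]
        have n1 := near (g ^ m)
        linarith
      · rw [← inv_pow, gr_comm]
        have := hp.gr_pow A m m
        linarith
    · intro c
      rcases c <;> simp only [cond_true, cond_false]
      · have n1 := near (g ^ m)
        have t1 := dist_triangle4 (t • g ^ m • x) ((t * g ^ m * t⁻¹) • x) x (t • x)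
        rw [A.iso, ← mul_smul t, dist_comm ((t * g ^ m) • x), dist_comm x (t • x)] at t1
        linarith
      · linarith

end TB

namespace TB

/-! ### Growth rates from embedded words -/

theorem growth_ge {G : Type} [Group G] {U : Set G} (hfin : U.Finite) {c : ℕ} (hc : 1 ≤ c)
    (h : ∀ k : ℕ, 2 ^ k ≤ (U ^ (c * k)).ncard) : Real.log 2 / c ≤ growthRate U := by
  classical
  have hcard : ∀ n : ℕ, (U ^ n).ncard ≤ U.ncard ^ n := fun n => by
    have := Finset.card_pow_le (s := hfin.toFinset) (n := n)
    rw [← Set.ncard_coe_finset, Finset.coe_pow, hfin.coe_toFinset,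
      ← Set.ncard_eq_toFinset_card U hfin] at this
    exact this
  have hpos : ∀ n : ℕ, 0 < U.ncard := fun n => by
    have h1 := h 1
    rcases Nat.eq_zero_or_pos U.ncard with h0 | h0
    · have := hcard (c * 1)
      rw [h0, zero_pow (by omega)] at this
      omega
    · exact h0
  unfold growthRate
  refine le_limsup_of_frequently_le ?_ ?_
  · rw [frequently_atTop]
    intro a
    refine ⟨c * (a + 1), by nlinarith, ?_⟩
    have h1 : ((2 : ℝ) ^ (a + 1)) ≤ ((U ^ (c * (a + 1))).ncard : ℝ) := by exact_mod_cast h (a + 1)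
    have h2 := Real.log_le_log (by positivity) h1
    rw [Real.log_pow] at h2
    have hc' : (0 : ℝ) < c := by exact_mod_cast hc
    rw [div_le_div_iff₀ hc' (by push_cast; positivity)]
    push_cast at h2 ⊢
    nlinarith
  · refine isBoundedUnder_of ⟨Real.log U.ncard, fun n => ?_⟩
    rcases Nat.eq_zero_or_pos n with rfl | hn
    · simp only [Nat.cast_zero, div_zero]
      exact Real.log_natCast_nonneg _
    · rw [div_le_iff₀ (by exact_mod_cast hn)]
      rcases Nat.eq_zero_or_pos (U ^ n).ncard with h0 | h0
      · rw [h0, Nat.cast_zero, Real.log_zero]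
        have := Real.log_natCast_nonneg U.ncard
        positivity
      · have h1 : ((U ^ n).ncard : ℝ) ≤ (U.ncard : ℝ) ^ n := by exact_mod_cast hcard n
        have h2 := Real.log_le_log (by exact_mod_cast h0) h1
        rw [Real.log_pow] at h2
        linarith

theorem wp_mem {G : Type} [Group G] {U : Set G} {a b : G} {r : ℕ} (ha : a ∈ U ^ r)
    (hb : b ∈ U ^ r) (l : List Bool) : wp a b l ∈ U ^ (r * l.length) := by
  induction l with
  | nil => simp
  | cons c l ih =>
    rw [wp_cons, List.length_cons, mul_add, mul_one, add_comm, pow_add]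
    refine Set.mul_mem_mul ?_ ih
    rcases c
    · exact hb
    · exact ha

theorem wp_map {G G' : Type} [Group G] [Group G'] (φ : G →* G') (a b : G) (l : List Bool) :
    φ (wp a b l) = wp (φ a) (φ b) l := by
  induction l with
  | nil => simp
  | cons c l ih => rw [wp_cons, wp_cons, map_mul, ih]; rcases c <;> rfl

/-- `2 ^ k` words of length `s` in `a, b` with distinct values, spelled in `U`. -/
theorem card_of_words {G : Type} [Group G] {U : Set G} (hfin : U.Finite) {a b : G} {r s k : ℕ}
    (ha : a ∈ U ^ r) (hb : b ∈ U ^ r) (W : (Fin k → Bool) → List Bool)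
    (hlen : ∀ f, (W f).length = s) (hinj : ∀ f f', wp a b (W f) = wp a b (W f') → f = f') :
    2 ^ k ≤ (U ^ (r * s)).ncard := by
  have h1 : (Set.univ : Set (Fin k → Bool)).ncard = 2 ^ k := by
    rw [Set.ncard_univ, Nat.card_eq_fintype_card]; simp
  rw [← h1]
  refine Set.ncard_le_ncard_of_injOn (fun f => wp a b (W f)) ?_ ?_ ?_
  · intro f _
    have := wp_mem ha hb (W f)
    rwa [hlen] at this
  · intro f _ f' _ h
    exact hinj f f' h
  · have : ∀ n : ℕ, (U ^ n).Finite := fun n => by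
      induction n with
      | zero => simp
      | succ n ih => rw [pow_succ]; exact ih.mul hfin
    exact this _

/-! ### Free semigroups in the free group -/

open PLine

/-- Ping-pong on the axis of `u` and its translate by `v`. -/
theorem free_of_not_commute {u v : F} (h : u * v ≠ v * u) (l l' : List Bool)
    (hlen : l.length = l'.length)
    (he : wp (u ^ 3) (v * u ^ 3 * v⁻¹) l = wp (u ^ 3) (v * u ^ 3 * v⁻¹) l') : l = l' := by
  have hu : u ≠ 1 := by rintro rfl; simp at h
  obtain ⟨ℓ, hw, -⟩ := exists_axis_of_ne_one hu
  have hns : ¬ Same (ℓ.smul v) ℓ := fun hs => by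
    obtain ⟨t, ht⟩ := st_of_same hs
    have := ht.comm (isTr_w ℓ)
    rw [hw] at this
    exact h this.symm
  set m := ℓ.smul v with hm
  have hmτ : m.τ = ℓ.τ := rfl
  have hτ := ℓ.pos
  have ta : ℓ.IsTr (u ^ 3) (3 * ℓ.τ) := by
    have := (isTr_w ℓ).pow 3
    rw [hw] at this
    exact_mod_cast this
  have tb : m.IsTr (v * u ^ 3 * v⁻¹) (3 * ℓ.τ) := ta.conj v
  have o1 : ∀ d e : ℤ, (ℓ.proj (m.f d) - ℓ.proj (m.f e)).natAbs < 2 * ℓ.τ := fun d e => by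
    by_contra! hh
    exact hns (same_of_overlap ℓ m (a := d) (b := e) (by omega)).symm
  have o2 : ∀ d e : ℤ, (m.proj (ℓ.f d) - m.proj (ℓ.f e)).natAbs < 2 * ℓ.τ := fun d e => by
    by_contra! hh
    exact hns (same_of_overlap m ℓ (a := d) (b := e) (by omega))
  set a := u ^ 3
  set b := v * u ^ 3 * v⁻¹
  let P : F → Prop := fun x => ∀ d, ℓ.proj (m.f d) < ℓ.proj x
  let Q : F → Prop := fun x => ∀ d, m.proj (ℓ.f d) < m.proj x
  have hPQ : ∀ x, P x → ∃ d, m.proj x = m.proj (ℓ.f d) := fun x hx => by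
    rcases behrstock ℓ m x with h1 | h1
    · exact absurd h1 (hx _).ne'
    · exact ⟨_, h1⟩
  have hQP : ∀ x, Q x → ∃ d, ℓ.proj x = ℓ.proj (m.f d) := fun x hx => by
    rcases behrstock ℓ m x with h1 | h1
    · exact ⟨_, h1⟩
    · exact absurd h1 (hx _).ne'
  have hdis : ∀ x, P x → ¬ Q x := fun x hx hq => by
    obtain ⟨d, hd⟩ := hPQ x hx
    exact absurd hd (hq d).ne'
  have ha : ∀ x, P x ∨ Q x → P (a * x) := by
    rintro x (hx | hx) d
    · rw [ta.proj]; have := hx d; omega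
    · obtain ⟨e, he⟩ := hQP x hx
      rw [ta.proj, he]; have := o1 d e; omega
  have hb : ∀ x, P x ∨ Q x → Q (b * x) := by
    rintro x (hx | hx) d
    · obtain ⟨e, he⟩ := hPQ x hx
      rw [tb.proj, he]; have := o2 d e; omega
    · rw [tb.proj]; have := hx d; omega
  obtain ⟨z, hz⟩ : ∃ z, P z :=
    ⟨ℓ.f (ℓ.proj (m.f 0) + 2 * ℓ.τ), fun d => by rw [proj_f]; have := o1 d 0; omega⟩
  have hall : ∀ l, P (wp a b l * z) ∨ Q (wp a b l * z) := by
    intro l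
    induction l with
    | nil => simpa using Or.inl hz
    | cons c l ih =>
      rw [wp_cons, mul_assoc]
      rcases c
      · exact .inr (hb _ ih)
      · exact .inl (ha _ ih)
  have nab : ∀ l l', wp a b (true :: l) ≠ wp a b (false :: l') := by
    intro l l' he
    have h1 := ha _ (hall l)
    have h2 := hb _ (hall l')
    rw [← mul_assoc] at h1 h2
    rw [wp_cons, wp_cons, cond_true, cond_false] at he
    rw [he] at h1
    exact hdis _ h1 h2
  clear_value a b
  induction l generalizing l' with
  | nil => exact (List.length_eq_zero_iff.1 hlen.symm).symm
  | cons c l ih =>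
    rcases l' with _ | ⟨c', l'⟩
    · simp at hlen
    have hcc : c = c' := by
      rcases c <;> rcases c'
      · rfl
      · exact absurd he.symm (nab _ _)
      · exact absurd he (nab _ _)
      · rfl
    subst hcc
    simp only [wp_cons, mul_right_inj] at he
    rw [ih l' (by simpa using hlen) he]

/-! ### Words without long powers -/

/-- The even letters of `x` are given by the parity of the `2`-adic valuation; the odd letters are
arbitrary. -/
def Tm (x : ℕ → Bool) : Prop := ∀ m, x (2 * m) = decide (padicValNat 2 m % 2 = 1)

theorem val_pow_mul_odd (s q : ℕ) (hq : q % 2 = 1) : padicValNat 2 (2 ^ s * q) = s := by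
  have : Fact (Nat.Prime 2) := ⟨Nat.prime_two⟩
  rw [padicValNat.mul (by positivity) (by omega), padicValNat.prime_pow,
    padicValNat.eq_zero_of_not_dvd (by omega), add_zero]

/-- A word with the prescribed even letters has no window of length `12 p` with period `p`. -/
theorem Tm.power_free {x : ℕ → Bool} (hx : Tm x) {p k S : ℕ} (hp : 1 ≤ p) (hS : 12 * p ≤ S) :
    ¬ ∀ j, j + p < S → x (k + j) = x (k + j + p) := by
  intro hper
  have h2 : ∀ m, k ≤ 2 * m → 2 * m + 2 * p < k + S → x (2 * m) = x (2 * (m + p)) := by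
    intro m hm1 hm2
    have e1 := hper (2 * m - k) (by omega)
    have e2 := hper (2 * m - k + p) (by omega)
    have s1 : k + (2 * m - k) = 2 * m := by omega
    have s2 : k + (2 * m - k + p) = 2 * m + p := by omega
    have s3 : 2 * m + p + p = 2 * (m + p) := by ring
    rw [s1] at e1
    rw [s2, s3] at e2
    exact e1.trans e2
  obtain ⟨s, q, hq, hpq⟩ := Nat.exists_eq_two_pow_mul_odd (n := p) (by omega)
  have hq' : q % 2 = 1 := Nat.odd_iff.1 hq
  have hqpos : 0 < 2 ^ s := by positivity
  have hsp : 2 ^ s ≤ p := by rw [hpq]; exact Nat.le_mul_of_pos_right _ (by omega)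
  -- `M = m + p` is an odd multiple of `2 ^ (s + 1)`
  set A := (k + 1) / 2 with hA
  set e := (A + p + 2 * 2 ^ s - 1) / (4 * 2 ^ s) with he
  have hdm := Nat.div_add_mod (A + p + 2 * 2 ^ s - 1) (4 * 2 ^ s)
  have hml := Nat.mod_lt (A + p + 2 * 2 ^ s - 1) (by positivity : 0 < 4 * 2 ^ s)
  rw [← he] at hdm
  have hM : 4 * 2 ^ s * e + 2 * 2 ^ s = 2 ^ s * (4 * e + 2) := by ring
  have hge : A + p ≤ 4 * 2 ^ s * e + 2 * 2 ^ s := by omega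
  have hlt : 4 * 2 ^ s * e + 2 * 2 ^ s < A + p + 4 * 2 ^ s := by omega
  have hqe : q ≤ 4 * e + 2 := by
    have : 2 ^ s * q ≤ 2 ^ s * (4 * e + 2) := by rw [← hpq, ← hM]; omega
    exact Nat.le_of_mul_le_mul_left this hqpos
  have hm : 2 ^ s * (4 * e + 2 - q) + p = 2 ^ s * (4 * e + 2) := by
    have h3 : 2 ^ s * (4 * e + 2 - q) + 2 ^ s * q = 2 ^ s * (4 * e + 2) := by
      rw [← mul_add]; congr 1; omega
    rwa [← hpq] at h3
  have e1 := h2 (2 ^ s * (4 * e + 2 - q)) (by omega) (by omega)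
  rw [hx, hx, hm, val_pow_mul_odd _ _ (by omega)] at e1
  have e2 : 2 ^ s * (4 * e + 2) = 2 ^ (s + 1) * (2 * e + 1) := by rw [pow_succ]; ring
  rw [e2, val_pow_mul_odd _ _ (by omega), decide_eq_decide] at e1
  omega

/-- The window of length `p` of the infinite word `x`, starting at `k`. -/
def seg (x : ℕ → Bool) (k p : ℕ) : List Bool := (List.range p).map fun j => x (k + j)

theorem seg_length (x : ℕ → Bool) (k p : ℕ) : (seg x k p).length = p := by simp [seg]

theorem seg_add (x : ℕ → Bool) (k p q : ℕ) : seg x k (p + q) = seg x k p ++ seg x (k + p) q := by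
  simp [seg, List.range_add, add_assoc]

theorem seg_get (x : ℕ → Bool) (k p j : ℕ) (h : j < p) : (seg x k p)[j]? = some (x (k + j)) := by
  simp [seg, h]

/-- If a window commutes with its initial (or any other) subwindow of length `p`, it is
`p`-periodic. -/
theorem periodic_of_append {x : ℕ → Bool} {k S k' p : ℕ}
    (h : seg x k' p ++ seg x k S = seg x k S ++ seg x k' p) (j : ℕ) (hj : j + p < S) :
    x (k + j) = x (k + j + p) := by
  have h1 : (seg x k' p ++ seg x k S)[j + p]? = (seg x k S ++ seg x k' p)[j + p]? := by rw [h]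
  rw [List.getElem?_append_right (by rw [seg_length]; omega), seg_length,
    List.getElem?_append_left (by rw [seg_length]; omega), seg_get _ _ _ _ hj,
    Nat.add_sub_cancel, seg_get _ _ _ _ (by omega)] at h1
  have := Option.some.inj h1
  rw [this, add_assoc]

end TB

namespace TB
open PLine

/-! ### Power-free words survive in the quotient -/

theorem ball_finite (M : ℕ) : {r : F | nd 1 r ≤ M}.Finite := by
  refine Set.Finite.of_finite_image (f := FreeGroup.toWord) ?_ FreeGroup.toWord_injective.injOn
  refine (List.finite_length_le (Fin 2 × Bool) M).subset ?_
  rintro _ ⟨r, hr, rfl⟩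
  have hr' : nd 1 r ≤ M := hr
  rw [nd_one] at hr'
  exact hr'

/-- The number of elements of the ball of radius `M`. -/
def ballCard (M : ℕ) : ℕ := (ball_finite M).toFinset.card

theorem wp_step {a b : F} {M : ℕ} (ha : nd 1 a ≤ M) (hb : nd 1 b ≤ M) (x : ℕ → Bool) (k : ℕ) :
    nd (wp a b (seg x 0 k)) (wp a b (seg x 0 (k + 1))) ≤ M := by
  have h1 : seg x k 1 = [x k] := by simp [seg]
  rw [seg_add, wp_append, zero_add, h1]
  have h2 := nd_mul (wp a b (seg x 0 k)) 1 (wp a b [x k])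
  rw [mul_one] at h2
  rw [h2]
  cases x k <;> simp [wp_cons, wp_nil] <;> assumption

/-- The first index at which the path `y` projects to a point at or beyond `c`; the line is then
crossed within one step. -/
theorem exists_crossing {ℓ : PLine} {y : ℕ → F} {M T : ℕ} (hy : ∀ k, nd (y k) (y (k + 1)) ≤ M)
    {c : ℤ} (h0 : ℓ.proj (y 0) < c) (hT : c ≤ ℓ.proj (y T)) :
    ∃ k, (∀ m < k, ℓ.proj (y m) < c) ∧ c ≤ ℓ.proj (y k) ∧ nd (y k) (ℓ.f c) ≤ M := by
  classical
  have hex : ∃ k, c ≤ ℓ.proj (y k) := ⟨T, hT⟩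
  have hs := Nat.find_spec hex
  have hmin : ∀ m < Nat.find hex, ℓ.proj (y m) < c := fun m hm => by
    have := Nat.find_min hex hm; omega
  refine ⟨Nat.find hex, hmin, hs, ?_⟩
  generalize Nat.find hex = k at hs hmin
  cases k with
  | zero => omega
  | succ k =>
    have h1 := hmin k (by omega)
    have hb : Btw (y k) (ℓ.f c) (y (k + 1)) := ℓ.btw_of_proj (by omega) (by omega)
    have h2 := hy k
    unfold Btw at hb
    rw [nd_comm]
    omega

/-- A path spelled by a power-free sequence in two elements generating a free semigroup makes
bounded progress along every line of small translation length. -/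
theorem bounded_progress {i M : ℕ} {a b : F} (ha : nd 1 a ≤ M) (hb : nd 1 b ≤ M)
    (hfree : ∀ l l' : List Bool, l.length = l'.length → wp a b l = wp a b l' → l = l')
    {x : ℕ → Bool} (hx : Tm x) {ℓ : PLine} (hℓ : ℓ.τ ≤ i) (T : ℕ) :
    ℓ.proj (wp a b (seg x 0 T)) < ℓ.proj 1 + ((12 * ballCard M + 1) * i : ℕ) := by
  classical
  by_contra hcon
  push Not at hcon
  set y : ℕ → F := fun k => wp a b (seg x 0 k) with hydef
  have hy0 : y 0 = 1 := by simp [hydef, seg, wp_nil]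
  have hyT : ℓ.proj 1 + ((12 * ballCard M + 1) * i : ℕ) ≤ ℓ.proj (y T) := hcon
  have hstep : ∀ k, nd (y k) (y (k + 1)) ≤ M := fun k => wp_step ha hb x k
  set c : ℕ → ℤ := fun j => ℓ.proj 1 + 1 + j * ℓ.τ with hc
  have hpos := ℓ.pos
  have hf : ∀ j : ℕ, ℓ.f (c j) = ℓ.w ^ j * ℓ.f (c 0) := fun j => by
    have := (isTr_w ℓ).pow j (c 0)
    rw [this]; congr 1; simp [hc]
  have hex : ∀ j : ℕ, ∃ k, j < 12 * ballCard M + 1 → (∀ m < k, ℓ.proj (y m) < c j) ∧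
      c j ≤ ℓ.proj (y k) ∧ nd (y k) (ℓ.f (c j)) ≤ M := fun j => by
    by_cases hj : j < 12 * ballCard M + 1
    · obtain ⟨k, hk⟩ := exists_crossing (ℓ := ℓ) (T := T) hstep (c := c j)
        (by rw [hy0]; simp only [hc]; have : (0:ℤ) ≤ j * ℓ.τ := by positivity
            omega)
        (by
          have h1 : (j : ℤ) * ℓ.τ + ℓ.τ ≤ ((12 * ballCard M + 1) * i : ℕ) := by
            have : (j + 1) * ℓ.τ ≤ (12 * ballCard M + 1) * i := Nat.mul_le_mul (by omega) hℓ
            have h2 : ((j + 1) * ℓ.τ : ℕ) = (j : ℤ) * ℓ.τ + ℓ.τ := by push_cast; ring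
            rw [← h2]; exact_mod_cast this
          simp only [hc]; omega)
      exact ⟨k, fun _ => hk⟩
    · exact ⟨0, fun h => absurd h hj⟩
  choose K hK using hex
  have hmono : ∀ j j', j ≤ j' → j' < 12 * ballCard M + 1 → K j ≤ K j' := fun j j' h h' => by
    by_contra hlt
    have h1 := (hK j (by omega)).1 (K j') (by omega)
    have h2 := (hK j' h').2.1
    have h3 : c j ≤ c j' := by
      simp only [hc]; gcongr
    omega
  obtain ⟨r, -, hr⟩ := Finset.exists_lt_card_fiber_of_mul_lt_card_of_maps_to
    (s := Finset.range (12 * ballCard M + 1)) (t := (ball_finite M).toFinset)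
    (f := fun j => (y (K j))⁻¹ * ℓ.f (c j)) (n := 12)
    (fun j hj => by
      have h1 := (hK j (Finset.mem_range.1 hj)).2.2
      rw [Set.Finite.mem_toFinset, Set.mem_setOf_eq]
      have h2 := nd_mul (y (K j)) 1 ((y (K j))⁻¹ * ℓ.f (c j))
      rw [mul_one, mul_inv_cancel_left] at h2
      rw [← h2]; exact h1)
    (by rw [Finset.card_range]; change ballCard M * 12 < _; omega)
  set T' := (Finset.range (12 * ballCard M + 1)).filter
    (fun j => (y (K j))⁻¹ * ℓ.f (c j) = r) with hT'
  obtain ⟨T₁, hT₁, hcard⟩ := Finset.exists_subset_card_eq (s := T') (n := 13) (by omega)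
  set e := T₁.orderEmbOfFin hcard with he
  have hmem : ∀ t, e t < 12 * ballCard M + 1 ∧ (y (K (e t)))⁻¹ * ℓ.f (c (e t)) = r := fun t => by
    have := hT₁ (Finset.orderEmbOfFin_mem T₁ hcard t)
    rw [hT', Finset.mem_filter, Finset.mem_range] at this
    exact this
  have hye : ∀ t, y (K (e t)) = ℓ.w ^ (e t) * (ℓ.f (c 0) * r⁻¹) := fun t => by
    rw [← (hmem t).2, hf (e t)]; group
  have hlt : ∀ s t : Fin 13, s < t → K (e s) < K (e t) := fun s t hst => by
    have h1 : e s < e t := e.strictMono hst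
    refine lt_of_le_of_ne (hmono _ _ h1.le (hmem t).1) fun h2 => ?_
    have h3 : ℓ.f (c (e s)) = ℓ.f (c (e t)) := by
      have := (hmem s).2.trans (hmem t).2.symm
      rw [h2] at this
      exact mul_left_cancel this
    have h4 := ℓ.inj h3
    simp only [hc] at h4
    have h5 : ((e s : ℕ) : ℤ) * ℓ.τ = (e t : ℕ) * ℓ.τ := by omega
    have h6 : ((e s : ℕ) : ℤ) = (e t : ℕ) := mul_right_cancel₀ (by omega) h5
    omega
  -- values of the windows between two of these indices are powers of one element
  have hval : ∀ s t : Fin 13, s < t →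
      wp a b (seg x (K (e s)) (K (e t) - K (e s))) =
        (ℓ.f (c 0) * r⁻¹)⁻¹ * (ℓ.w ^ (e t - e s)) * (ℓ.f (c 0) * r⁻¹) := fun s t hst => by
    have h1 : y (K (e t)) = y (K (e s)) * wp a b (seg x (K (e s)) (K (e t) - K (e s))) := by
      simp only [hydef]
      rw [← wp_append]
      have := seg_add x 0 (K (e s)) (K (e t) - K (e s))
      rw [zero_add] at this
      rw [← this, Nat.add_sub_cancel' (hlt s t hst).le]
    have h2 : e s ≤ e t := (e.strictMono hst).le
    rw [hye, hye] at h1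
    have h3 : ℓ.w ^ (e t) = ℓ.w ^ (e s) * ℓ.w ^ (e t - e s) := by
      rw [← pow_add, Nat.add_sub_cancel' h2]
    rw [h3, mul_assoc, mul_assoc] at h1
    have h4 := mul_left_cancel h1
    rw [mul_assoc _ (ℓ.w ^ (e t - e s)), h4]; group
  obtain ⟨s, t, hst, hgap⟩ : ∃ s t : Fin 13, s < t ∧
      12 * (K (e t) - K (e s)) ≤ K (e 12) - K (e 0) := by
    by_contra hno
    push Not at hno
    have g0 := hno 0 1 (by decide)
    have g1 := hno 1 2 (by decide)
    have g2 := hno 2 3 (by decide)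
    have g3 := hno 3 4 (by decide)
    have g4 := hno 4 5 (by decide)
    have g5 := hno 5 6 (by decide)
    have g6 := hno 6 7 (by decide)
    have g7 := hno 7 8 (by decide)
    have g8 := hno 8 9 (by decide)
    have g9 := hno 9 10 (by decide)
    have g10 := hno 10 11 (by decide)
    have g11 := hno 11 12 (by decide)
    omega
  have hst' := hlt s t hst
  refine hx.power_free (p := K (e t) - K (e s)) (k := K (e 0)) (S := K (e 12) - K (e 0))
    (by omega) hgap (periodic_of_append (k' := K (e s)) (hfree _ _ ?_ ?_))
  · simp [seg_length, add_comm]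
  · rw [wp_append, wp_append, hval s t hst, hval 0 12 (by decide)]
    have : ℓ.w ^ (e t - e s) * ℓ.w ^ (e 12 - e 0) = ℓ.w ^ (e 12 - e 0) * ℓ.w ^ (e t - e s) := by
      rw [← pow_add, ← pow_add, add_comm]
    generalize ℓ.w ^ (e t - e s) = A at this ⊢
    generalize ℓ.w ^ (e 12 - e 0) = B at this ⊢
    generalize ℓ.f (c 0) * r⁻¹ = z
    calc z⁻¹ * A * z * (z⁻¹ * B * z) = z⁻¹ * (A * B) * z := by group
      _ = z⁻¹ * (B * A) * z := by rw [this]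
      _ = _ := by group

theorem bounded_progress' {i M : ℕ} {a b : F} (ha : nd 1 a ≤ M) (hb : nd 1 b ≤ M)
    (hfree : ∀ l l' : List Bool, l.length = l'.length → wp a b l = wp a b l' → l = l')
    {x : ℕ → Bool} (hx : Tm x) {ℓ : PLine} (hℓ : ℓ.τ ≤ i) (T : ℕ) :
    (ℓ.proj (wp a b (seg x 0 T)) - ℓ.proj 1).natAbs < (12 * ballCard M + 1) * i := by
  have h1 := bounded_progress ha hb hfree hx hℓ T
  have h2 := bounded_progress ha hb hfree hx (ℓ := ℓ.rev) hℓ T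
  rw [proj_rev, proj_rev] at h2
  omega

/-- Two power-free words of equal length with equal images in the quotient are equal. -/
theorem free_in_quotient {i n M : ℕ} (hi : 1 ≤ i) {a b : F} (ha : nd 1 a ≤ M) (hb : nd 1 b ≤ M)
    (hn : 14 * i ≤ n) (hn' : 2 * ((12 * ballCard M + 1) * i) + 6 * i ≤ n)
    (hfree : ∀ l l' : List Bool, l.length = l'.length → wp a b l = wp a b l' → l = l')
    {x x' : ℕ → Bool} (hx : Tm x) (hx' : Tm x') (T : ℕ)
    (h : (wp a b (seg x 0 T))⁻¹ * wp a b (seg x' 0 T) ∈ NN i n) :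
    seg x 0 T = seg x' 0 T := by
  by_contra hne
  have h1 : (wp a b (seg x 0 T))⁻¹ * wp a b (seg x' 0 T) ≠ 1 := fun h1 =>
    hne (hfree _ _ (by simp [seg_length]) (inv_mul_eq_one.1 h1))
  obtain ⟨ℓ, g, t, hτ, hg, ht, hG⟩ := good_of_mem_NN hn hi h h1
  have e1 := bounded_progress' ha hb hfree hx (ℓ := ℓ.smul (wp a b (seg x 0 T))) hτ T
  have e2 := bounded_progress' ha hb hfree hx' (ℓ := ℓ.smul (wp a b (seg x 0 T))) hτ T
  rw [proj_smul' _ _ (wp a b (seg x' 0 T))] at e2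
  rw [proj_smul' _ _ (wp a b (seg x 0 T)), inv_mul_cancel] at e1
  have h3 : n ≤ (n * t).natAbs := by
    rw [Int.natAbs_mul, Int.natAbs_natCast]
    exact Nat.le_mul_of_pos_right _ (by omega)
  omega

/-- The sequence whose even letters form a fixed power-free pattern and whose odd letters are
prescribed by `f`. -/
def tmSeq {k : ℕ} (f : Fin k → Bool) (j : ℕ) : Bool :=
  if j % 2 = 0 then decide (padicValNat 2 (j / 2) % 2 = 1)
  else if h : j / 2 < k then f ⟨j / 2, h⟩ else false

theorem tmSeq_tm {k : ℕ} (f : Fin k → Bool) : Tm (tmSeq f) := fun m => by simp [tmSeq]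

theorem tmSeq_inj {k : ℕ} {f f' : Fin k → Bool}
    (h : seg (tmSeq f) 0 (2 * k) = seg (tmSeq f') 0 (2 * k)) : f = f' := by
  funext j
  have h1 : (seg (tmSeq f) 0 (2 * k))[2 * j.1 + 1]? = (seg (tmSeq f') 0 (2 * k))[2 * j.1 + 1]? := by
    rw [h]
  have hj := j.2
  rw [seg_get _ _ _ _ (by omega), seg_get _ _ _ _ (by omega)] at h1
  have h2 : (2 * j.1 + 1) / 2 = j.1 := by omega
  have h3 : (2 * j.1 + 1) % 2 ≠ 0 := by omega
  simpa [tmSeq, h2, h3, hj] using h1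

theorem nd_mul_le (x y : F) : nd 1 (x * y) ≤ nd 1 x + nd 1 y := by
  have h1 := nd_tri 1 x (x * y)
  have h2 := nd_mul x 1 y
  rw [mul_one] at h2
  omega

theorem nd_inv (x : F) : nd 1 x⁻¹ = nd 1 x := by
  have h2 := nd_mul x 1 x⁻¹
  rw [mul_one, mul_inv_cancel, nd_comm] at h2
  omega

/-- Exponential growth for a pair of non-commuting elements which both move some vertex a
bounded distance. -/
theorem regime_one {i L n C : ℕ} (hi : 1 ≤ i) (hL : 1 ≤ L) (hC : C < L) (hn : 14 * i ≤ n)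
    (hn' : 2 * ((12 * ballCard (5 * (C * (i * 2 ^ C))) + 1) * i) + 6 * i ≤ n)
    {U : Set (HH i n)} (hfin : U.Finite) (hU : U⁻¹ = U) {u v : HH i n} (hu : u ∈ U) (hv : v ∈ U)
    (huv : ¬ Commute u v) (p : HH i n) (hpu : dH i L n p (u * p) ≤ C)
    (hpv : dH i L n p (v * p) ≤ C) (k : ℕ) : 2 ^ k ≤ (U ^ (10 * k)).ncard := by
  set φ : F →* HH i n := (MulAut.conj p).toMonoidHom.comp (QuotientGroup.mk' (NN i n)) with hφ
  have hφa : ∀ x : F, φ x = p * (x : HH i n) * p⁻¹ := fun x => by simp [hφ]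
  have lift : ∀ t : HH i n, dH i L n p (t * p) ≤ C →
      ∃ s : F, φ s = t ∧ nd 1 s ≤ C * (i * 2 ^ C) := fun t ht => by
    obtain ⟨s, hs, hd⟩ := dH_spec (i := i) (L := L) (n := n) 1 (p⁻¹ * t * p)
    refine ⟨s, by rw [hφa, hs]; group, nd_le_of_dd hi hL hC ?_⟩
    rw [hd]
    have := dH_mul (L := L) p⁻¹ p (t * p)
    rw [inv_mul_cancel, ← mul_assoc] at this
    exact this.trans_le ht
  obtain ⟨s, hs, hsM⟩ := lift u hpu
  obtain ⟨t, ht, htM⟩ := lift v hpv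
  have hst : s * t ≠ t * s := fun h => huv (by
    have := congrArg φ h
    rw [map_mul, map_mul, hs, ht] at this
    exact this)
  set M := C * (i * 2 ^ C) with hM
  have hs3 : nd 1 (s ^ 3) ≤ 3 * M := by
    have h1 := nd_mul_le (s * s) s
    have h2 := nd_mul_le s s
    rw [pow_three, ← mul_assoc]; omega
  have ha : nd 1 (s ^ 3) ≤ 5 * M := by omega
  have hb : nd 1 (t * s ^ 3 * t⁻¹) ≤ 5 * M := by
    have h1 := nd_mul_le (t * s ^ 3) t⁻¹
    have h2 := nd_mul_le t (s ^ 3)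
    rw [nd_inv] at h1
    omega
  have hv' : v⁻¹ ∈ U := by rw [← hU]; exact Set.inv_mem_inv.2 hv
  have hu3 : u ^ 3 ∈ U ^ 3 := Set.pow_mem_pow hu
  have hau : u ^ 3 ∈ U ^ 5 := pad_mem hU hu hu3 1
  have hbu : v * u ^ 3 * v⁻¹ ∈ U ^ 5 := by
    have : U ^ 5 = U * U ^ 3 * U := by
      rw [← pow_succ', ← pow_succ]
    rw [this]
    exact Set.mul_mem_mul (Set.mul_mem_mul hv hu3) hv'
  have := card_of_words hfin (k := k) hau hbu (fun f => seg (tmSeq f) 0 (2 * k))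
    (fun f => seg_length _ _ _) (fun f f' hff => ?_)
  · rwa [← mul_assoc] at this
  refine tmSeq_inj (free_in_quotient hi ha hb hn hn' (free_of_not_commute hst)
    (tmSeq_tm f) (tmSeq_tm f') (2 * k) ?_)
  rw [← mk_eq]
  have h1 : φ (wp (s ^ 3) (t * s ^ 3 * t⁻¹) (seg (tmSeq f) 0 (2 * k)))
      = φ (wp (s ^ 3) (t * s ^ 3 * t⁻¹) (seg (tmSeq f') 0 (2 * k))) := by
    rw [wp_map, wp_map]
    simp only [map_mul, map_pow, map_inv, hs, ht]
    exact hff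
  rw [hφa, hφa] at h1
  exact mul_left_cancel (mul_right_cancel h1)

end TB

namespace TB
open PLine

/-! ### Pairs with small displacement at a point of the hull -/

variable {i L n : ℕ}

/-- `x` is the point of parameter `a` on a translate of `ℓ`, and `y` lies on the same translate. -/
def OnTr (ℓ : PLine) (a : ℤ) (x y : F) : Prop := ∃ (k : F) (c : ℤ), x = k * ℓ.f a ∧ y = k * ℓ.f c

theorem bend_aux {ℓ₀ ℓ : PLine} (h₀ : ℓ₀.τ ≤ i) (hℓ : ℓ.τ ≤ i) {D : ℕ} (hD : 2 * i ≤ D)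
    {g k : F} (hg : ℓ.St g) {a c : ℤ}
    (h : D ≤ (ℓ.proj (k * ℓ₀.f a) - ℓ.proj (k * ℓ₀.f c)).natAbs) : (ℓ₀.smul k).St g := by
  refine St.of_same (same_of_overlap ℓ (ℓ₀.smul k) (a := a) (b := c) ?_) hg
  rw [smul_f, smul_f, smul_τ]
  omega

theorem side_onTr {ℓ₀ : PLine} (h₀ : ℓ₀.τ ≤ i) (a : ℤ) {D : ℕ} (hD : 2 * i ≤ D) :
    Inv (OnTr ℓ₀ a) ∧ Bend i D (OnTr ℓ₀ a) := by
  refine ⟨?_, ?_⟩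
  · rintro g _ _ ⟨k, c, rfl, rfl⟩
    exact ⟨g * k, c, by rw [mul_assoc], by rw [mul_assoc]⟩
  · rintro ℓ hℓ g hg _ _ h ⟨k, c, rfl, rfl⟩
    obtain ⟨t, ht⟩ := bend_aux h₀ hℓ hD hg h
    exact ⟨k, c + t, rfl, ht c⟩

theorem side_onTr' {ℓ₀ : PLine} (h₀ : ℓ₀.τ ≤ i) (a : ℤ) {D : ℕ} (hD : 2 * i ≤ D) :
    Inv (fun x y => OnTr ℓ₀ a y x) ∧ Bend i D (fun x y => OnTr ℓ₀ a y x) := by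
  refine ⟨?_, ?_⟩
  · rintro g _ _ ⟨k, c, rfl, rfl⟩
    exact ⟨g * k, c, by rw [mul_assoc], by rw [mul_assoc]⟩
  · rintro ℓ hℓ g hg _ _ h ⟨k, c, rfl, rfl⟩
    obtain ⟨t, ht⟩ := bend_aux h₀ hℓ hD hg h
    refine ⟨g * k, c - t, by rw [mul_assoc], ?_⟩
    have := ht (c - t)
    rw [smul_f, smul_f, sub_add_cancel] at this
    rw [← this, mul_assoc]

/-- Two distinct lines: distances between them are, up to a constant, sums of the distances along
the lines and of the distance between the closest points. -/
theorem dd_two_lines (hi : 1 ≤ i) (hL : 1 ≤ L) {ℓ ℓ' : PLine} (h : ℓ.τ ≤ i) (h' : ℓ'.τ ≤ i)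
    (hs : ¬ Same ℓ ℓ') : ∃ (q q' : ℤ), ∀ a b : ℤ, lam i L (a - q).natAbs + lam i L (b - q').natAbs +
      dd i L (ℓ.f q) (ℓ'.f q') ≤ dd i L (ℓ.f a) (ℓ'.f b) + 30 := by
  have hs' : ¬ Same ℓ' ℓ := fun hh => hs hh.symm
  have h5 : ∀ s : ℕ, s ≤ 16 * i → lam i L s ≤ 5 := fun s hs => (lam_mono hs).trans (lam16 hi)
  -- one line: a point `x` and a point of the line
  have one : ∀ {m : PLine} (hm : m.τ ≤ i) (x : F) (a : ℤ),
      lam i L (a - m.proj x).natAbs + dd i L x (m.f (m.proj x)) ≤ dd i L x (m.f a) + 5 := by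
    intro m hm x a
    by_cases hc : 8 * i ≤ (a - m.proj x).natAbs
    · have := dd_approx (L := L) hi hL m hm (x := x) (y := m.f a) (by rw [proj_f]; omega)
      rw [proj_f] at this
      have e : (m.proj x - a).natAbs = (a - m.proj x).natAbs := by omega
      rw [e] at this
      omega
    · have e1 := h5 (a - m.proj x).natAbs (by omega)
      have e2 := dd_mono_left (L := L) hi (btw_proj m x a)
      omega
  refine ⟨ℓ.proj (ℓ'.f 0), ℓ'.proj (ℓ.f (ℓ.proj (ℓ'.f 0))), fun a b => ?_⟩
  set q := ℓ.proj (ℓ'.f 0) with hq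
  set q' := ℓ'.proj (ℓ.f q) with hq'
  set r := ℓ.proj (ℓ'.f b) with hr
  set r' := ℓ'.proj (ℓ.f r) with hr'
  have d1 := not_same_lt h h' hs 0 b
  have d2 := not_same_lt h' h hs' q r
  rw [← hq, ← hr] at d1
  rw [← hq', ← hr'] at d2
  have e1 := one h (ℓ'.f b) a
  have e2 := one h' (ℓ.f r) b
  rw [← hr] at e1
  rw [← hr'] at e2
  have e3 := lam_tri (L := L) hi hL a r q
  have e4 := lam_tri (L := L) hi hL b r' q'
  have e5 := h5 (r - q).natAbs (by omega)
  have e6 := h5 (r' - q').natAbs (by omega)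
  have e7 := dd_tri (L := L) hi (ℓ.f q) (ℓ.f r) (ℓ'.f q')
  have e8 := dd_tri (L := L) hi (ℓ.f r) (ℓ'.f r') (ℓ'.f q')
  have e9 := (dd_line (L := L) h q r).trans (h5 _ (by omega))
  have e10 := (dd_line (L := L) h' r' q').trans (h5 _ (by omega))
  have e11 := dd_comm (i := i) (L := L) (ℓ'.f b) (ℓ.f a)
  have e12 := dd_comm (i := i) (L := L) (ℓ'.f b) (ℓ.f r)
  omega

/-- Lifting the quadrilateral `y, z, uz, uy`. -/
theorem lift_first (hi : 1 ≤ i) (hL : 1 ≤ L) (hn : 4 * (i * 2 ^ L + 4 * i) + 14 * i ≤ n)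
    {ℓ : PLine} (hℓ : ℓ.τ ≤ i) (a b : ℤ) (u : HH i n) :
    ∃ (k : F) (b₁ b₂ : ℤ), (k : HH i n) = u ∧ (ℓ.f b₁ : HH i n) = ℓ.f b ∧
      (ℓ.f b₂ : HH i n) = ℓ.f b ∧
      dd i L (ℓ.f b₁) (k * ℓ.f b₂) ≤ dH i L n (ℓ.f b) (u * ℓ.f b) ∧
      dd i L (ℓ.f a) (k * ℓ.f a) ≤ dH i L n (ℓ.f a) (u * ℓ.f a) := by
  obtain ⟨z', hz', hd⟩ := dH_spec (i := i) (L := L) (n := n) (ℓ.f b) (u * ℓ.f b)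
  set y' := z' * (ℓ.f b)⁻¹ * ℓ.f a with hy'
  have hyu : (y' : HH i n) = u * ℓ.f a := by
    rw [hy', QuotientGroup.mk_mul, QuotientGroup.mk_mul, hz', QuotientGroup.mk_inv]; group
  obtain ⟨y'', hy'', hd'⟩ := dH_spec (i := i) (L := L) (n := n) y' (ℓ.f a)
  have hD : 2 * i ≤ i * 2 ^ L + 4 * i := by omega
  obtain ⟨y₁, y₂, y₃, h1, h2, h3, s0, s1, s2, s3⟩ := lift_quad hi (i * 2 ^ L + 4 * i) hn
    (OnTr ℓ a) (fun x y => dd i L x y ≤ dH i L n (ℓ.f b) (u * ℓ.f b)) (fun x y => OnTr ℓ a y x)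
    (fun x y => dd i L x y ≤ dH i L n (ℓ.f a) (u * ℓ.f a))
    (side_onTr hℓ a hD) (side_dd hi hL _) (side_onTr' hℓ a hD) (side_dd hi hL _)
    (x₀ := ℓ.f a) (x₁ := ℓ.f b) (x₂ := z') (x₃ := y') (x₄ := y'')
    ⟨1, b, by simp, by simp⟩ hd.le ⟨z' * (ℓ.f b)⁻¹, b, hy', by group⟩
    (by rw [hd', hyu, dH_comm]) hy''.symm
  obtain ⟨k0, b₁, e1, e2⟩ := s0
  have hk0 : k0 = 1 := by
    have := e1.symm; exact mul_eq_right.1 this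
  obtain ⟨k, b₂, e3, e4⟩ := s2
  have hk : (k : HH i n) = u := by
    have : ((k * ℓ.f a : F) : HH i n) = u * ℓ.f a := by rw [← e3, h3, hyu]
    rw [QuotientGroup.mk_mul] at this
    exact mul_right_cancel this
  subst hk0
  rw [one_mul] at e2
  subst e2 e3 e4
  refine ⟨k, b₁, b₂, hk, h1, ?_, s1, ?_⟩
  · have : ((k * ℓ.f b₂ : F) : HH i n) = u * ℓ.f b := by rw [h2, hz']
    rw [QuotientGroup.mk_mul, hk] at this
    exact mul_left_cancel this
  · rw [dd_comm]; exact s3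

/-- Lifting the quadrilateral `y, z, uy, uz`. -/
theorem lift_second (hi : 1 ≤ i) (hL : 1 ≤ L) (hn : 4 * (i * 2 ^ L + 4 * i) + 14 * i ≤ n)
    {ℓ : PLine} (hℓ : ℓ.τ ≤ i) (a b : ℤ) (u : HH i n) :
    ∃ (k : F) (b₁ b₂ : ℤ), (k : HH i n) = u ∧ (ℓ.f b₁ : HH i n) = ℓ.f b ∧
      (ℓ.f b₂ : HH i n) = ℓ.f b ∧
      dd i L (ℓ.f b₁) (k * ℓ.f a) ≤ dH i L n (ℓ.f b) (u * ℓ.f a) ∧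
      dd i L (ℓ.f a) (k * ℓ.f b₂) ≤ dH i L n (ℓ.f a) (u * ℓ.f b) := by
  obtain ⟨y', hy', hd⟩ := dH_spec (i := i) (L := L) (n := n) (ℓ.f b) (u * ℓ.f a)
  set z' := y' * (ℓ.f a)⁻¹ * ℓ.f b with hz'
  have hzu : (z' : HH i n) = u * ℓ.f b := by
    rw [hz', QuotientGroup.mk_mul, QuotientGroup.mk_mul, hy', QuotientGroup.mk_inv]; group
  obtain ⟨y'', hy'', hd'⟩ := dH_spec (i := i) (L := L) (n := n) z' (ℓ.f a)
  have hD : 2 * i ≤ i * 2 ^ L + 4 * i := by omega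
  obtain ⟨y₁, y₂, y₃, h1, h2, h3, s0, s1, s2, s3⟩ := lift_quad hi (i * 2 ^ L + 4 * i) hn
    (OnTr ℓ a) (fun x y => dd i L x y ≤ dH i L n (ℓ.f b) (u * ℓ.f a)) (OnTr ℓ a)
    (fun x y => dd i L x y ≤ dH i L n (ℓ.f a) (u * ℓ.f b))
    (side_onTr hℓ a hD) (side_dd hi hL _) (side_onTr hℓ a hD) (side_dd hi hL _)
    (x₀ := ℓ.f a) (x₁ := ℓ.f b) (x₂ := y') (x₃ := z') (x₄ := y'')
    ⟨1, b, by simp, by simp⟩ hd.le ⟨y' * (ℓ.f a)⁻¹, b, by group, hz'⟩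
    (by rw [hd', hzu, dH_comm]) hy''.symm
  obtain ⟨k0, b₁, e1, e2⟩ := s0
  have hk0 : k0 = 1 := by
    have := e1.symm; exact mul_eq_right.1 this
  obtain ⟨k, b₂, e3, e4⟩ := s2
  have hk : (k : HH i n) = u := by
    have : ((k * ℓ.f a : F) : HH i n) = u * ℓ.f a := by rw [← e3, h2, hy']
    rw [QuotientGroup.mk_mul] at this
    exact mul_right_cancel this
  subst hk0
  rw [one_mul] at e2
  subst e2 e3 e4
  refine ⟨k, b₁, b₂, hk, h1, ?_, s1, ?_⟩
  · have : ((k * ℓ.f b₂ : F) : HH i n) = u * ℓ.f b := by rw [h3, hzu]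
    rw [QuotientGroup.mk_mul, hk] at this
    exact mul_left_cancel this
  · rw [dd_comm]; exact s3

/-- An element coarsely fixing the middle part of a long segment of a line lies in the image of the
stabilizer of that line. -/
theorem exists_lift_st (hi : 1 ≤ i) (hL : 1 ≤ L) (hn : 4 * (i * 2 ^ L + 4 * i) + 14 * i ≤ n)
    {ℓ : PLine} (hℓ : ℓ.τ ≤ i) (a b : ℤ) (u : HH i n) {D A B E₁ E₂ : ℕ}
    (hD : dH i L n (ℓ.f a) (ℓ.f b) = D) (hA : dH i L n (ℓ.f a) (u * ℓ.f a) = A)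
    (hB : dH i L n (ℓ.f b) (u * ℓ.f b) = B) (hE₁ : dH i L n (ℓ.f a) (u * ℓ.f b) = E₁)
    (hE₂ : dH i L n (ℓ.f b) (u * ℓ.f a) = E₂) (hAB : A + B ≤ 2 * D + 1100)
    (hA' : A + 1000 ≤ 2 * D) (hB' : B + 1000 ≤ 2 * D) (h1 : E₁ ≤ D + 600) (h2 : E₂ ≤ D + 600)
    (hD' : 2000 ≤ D) : ∃ k : F, (k : HH i n) = u ∧ ℓ.St k := by
  have sep : ∀ (c q : ℤ), (ℓ.f c : HH i n) = ℓ.f b →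
      D ≤ lam i L (a - q).natAbs + 1 ∨ D ≤ lam i L (c - q).natAbs + 1 := fun c q hc => by
    have e1 := (dH_le (i := i) (L := L) (n := n) (ℓ.f a) (ℓ.f c)).trans (dd_line hℓ a c)
    rw [hc, hD] at e1
    have e2 : (q - c).natAbs = (c - q).natAbs := by omega
    have e3 := lam_ultra3 (L := L) hi a q c
    rw [e2] at e3
    omega
  -- if the first lift does not already do, then `u` nearly flips the segment
  have first : (∃ k : F, (k : HH i n) = u ∧ ℓ.St k) ∨ E₂ ≤ 1200 ∨ E₁ ≤ 1200 := by
    obtain ⟨k, b₁, b₂, hk, e1, e2, e3, e4⟩ := lift_first (L := L) hi hL hn hℓ a b u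
    by_cases hs : Same ℓ (ℓ.smul k)
    · exact Or.inl ⟨k, hk, st_of_same hs.symm⟩
    obtain ⟨q, q', hq⟩ := dd_two_lines (L := L) hi hL hℓ (ℓ' := ℓ.smul k) hℓ hs
    have f1 := hq a a
    have f2 := hq b₁ b₂
    have t1 := sep b₁ q e1
    have t2 := sep b₂ q' e2
    have d1 : E₂ ≤ dd i L (ℓ.f b₁) ((ℓ.smul k).f a) := by
      have := dH_le (i := i) (L := L) (n := n) (ℓ.f b₁) (k * ℓ.f a)
      rw [e1, QuotientGroup.mk_mul, hk, hE₂] at this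
      exact this
    have d2 : E₁ ≤ dd i L (ℓ.f a) ((ℓ.smul k).f b₂) := by
      have := dH_le (i := i) (L := L) (n := n) (ℓ.f a) (k * ℓ.f b₂)
      rw [QuotientGroup.mk_mul, hk, e2, hE₁] at this
      exact this
    have via : ∀ c e : ℤ, dd i L (ℓ.f c) ((ℓ.smul k).f e) ≤ lam i L (c - q).natAbs +
        dd i L (ℓ.f q) ((ℓ.smul k).f q') + lam i L (e - q').natAbs := fun c e => by
      have g1 := dd_tri (L := L) hi (ℓ.f c) (ℓ.f q) ((ℓ.smul k).f e)
      have g2 := dd_tri (L := L) hi (ℓ.f q) ((ℓ.smul k).f q') ((ℓ.smul k).f e)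
      have g3 := dd_line (L := L) hℓ c q
      have g4 := dd_line (L := L) (ℓ := ℓ.smul k) hℓ q' e
      have g5 : (q' - e).natAbs = (e - q').natAbs := by omega
      rw [g5] at g4
      omega
    have v1 := via b₁ a
    have v2 := via a b₂
    rw [hA] at e4
    rw [hB] at e3
    rw [smul_f k ℓ a] at f1
    rw [smul_f k ℓ b₂] at f2
    omega
  rcases first with h | hflip
  · exact h
  obtain ⟨k, b₁, b₂, hk, e1, e2, e3, e4⟩ := lift_second (L := L) hi hL hn hℓ a b u
  by_cases hs : Same ℓ (ℓ.smul k)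
  · exact ⟨k, hk, st_of_same hs.symm⟩
  obtain ⟨q, q', hq⟩ := dd_two_lines (L := L) hi hL hℓ (ℓ' := ℓ.smul k) hℓ hs
  have f1 := hq b₁ a
  have f2 := hq a b₂
  have t1 := sep b₁ q e1
  have t2 := sep b₂ q' e2
  rw [hE₂] at e3
  rw [hE₁] at e4
  rw [smul_f k ℓ a] at f1
  rw [smul_f k ℓ b₂] at f2
  omega

/-- The step of a chain at a prescribed depth. -/
theorem Cost.cross {x y : F} {k : ℕ} (h : Cost i L x y k) (r : ℕ) (hr : r < k) :
    ∃ (ℓ : PLine) (a b : ℤ) (k₁ k₂ : ℕ), ℓ.τ ≤ i ∧ Cost i L x (ℓ.f a) k₁ ∧ Cost i L (ℓ.f b) y k₂ ∧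
      k = k₁ + lam i L (a - b).natAbs + k₂ ∧ k₁ ≤ r ∧ r ≤ k₁ + lam i L (a - b).natAbs := by
  induction h with
  | refl => omega
  | step y k ℓ a b h hτ hy ih =>
    by_cases hk : r < k
    · obtain ⟨ℓ', a', b', k₁, k₂, h1, h2, h3, h4, h5, h6⟩ := ih hk
      refine ⟨ℓ', a', b', k₁, k₂ + lam i L (a - b).natAbs, h1, h2, h3.step _ _ ℓ a b hτ hy,
        by omega, h5, h6⟩
    · subst hy
      exact ⟨ℓ, a, b, k, 0, hτ, h, .refl, by omega, by omega, by omega⟩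


theorem XX_pt_four (hi : 1 ≤ i) (hL : 1 ≤ L) (hn : 4 * (i * 2 ^ L + 4 * i) + 14 * i ≤ n)
    (e : XX i L n hi) (x y p : HH i n) : e.f p + dH i L n x y ≤
      max (e.f x + dH i L n p y) (dH i L n x p + e.f y) + 10 := by
  have := XX_four hi hL hn (Hull.pt _ p) e (Hull.pt _ x) (Hull.pt _ y)
  rw [dist_comm e, dist_comm e] at this
  simp only [Hull.dist_pt_pt, mH_d] at this
  simp only [Hull.dist_pt] at this
  rw [dH_comm p x, add_comm (dH i L n p y : ℝ), max_comm] at this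
  exact this

/-- If two elements move some point of the hull at most `500`, then either they commute or they
move some vertex a bounded distance. -/
theorem small_disp (hi : 1 ≤ i) (hL : 1 ≤ L) (hn : 4 * (i * 2 ^ L + 4 * i) + 14 * i ≤ n)
    {u v : HH i n} (e : XX i L n hi) (hu : dist (u • e) e ≤ 500) (hv : dist (v • e) e ≤ 500) :
    Commute u v ∨ ∃ p, dH i L n p (u * p) ≤ 4500 ∧ dH i L n p (v * p) ≤ 4500 := by
  have dle : ∀ x y : HH i n, (dH i L n x y : ℝ) ≤ e.f x + e.f y := fun x y => by
    have := e.le x y; rwa [mH_d] at this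
  have move : ∀ t : HH i n, dist (t • e) e ≤ 500 → ∀ x, e.f (t * x) ≤ e.f x + 500 := by
    intro t ht x
    have := e.le_add_dist (t • e) (t * x)
    rw [Hull.smul_f, inv_mul_cancel_left, dist_comm] at this
    linarith
  -- a vertex near `e` will do
  have near : ∀ x : HH i n, e.f x ≤ 2000 →
      ∃ p, dH i L n p (u * p) ≤ 4500 ∧ dH i L n p (v * p) ≤ 4500 := by
    intro x hx
    have h1 := dle x (u * x)
    have h2 := dle x (v * x)
    have h3 := move u hu x
    have h4 := move v hv x
    refine ⟨x, ?_, ?_⟩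
    · have : (dH i L n x (u * x) : ℝ) ≤ 4500 := by linarith
      exact_mod_cast this
    · have : (dH i L n x (v * x) : ℝ) ≤ 4500 := by linarith
      exact_mod_cast this
  by_contra hcon
  push Not at hcon
  obtain ⟨hcomm, hno⟩ := hcon
  have far : ∀ x : HH i n, 2000 < e.f x := fun x => by
    by_contra hx
    obtain ⟨p, h1, h2⟩ := near x (not_lt.1 hx)
    exact absurd h2 (not_le.2 (hno p h1))
  obtain ⟨y, hy⟩ := e.tight 1 1 one_pos
  rw [mH_d] at hy
  obtain ⟨y₀, rfl, hd⟩ := dH_spec (i := i) (L := L) (n := n) 1 y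
  have h0 := e.nonneg 1
  have hfl := Nat.floor_le h0
  have hfl' := Nat.lt_floor_add_one (e.f 1)
  have hr : ⌊e.f 1⌋₊ < dd i L 1 y₀ := by
    rw [hd]
    by_contra hge
    have : (dH i L n ((1 : F) : HH i n) y₀ : ℝ) ≤ ⌊e.f 1⌋₊ := by exact_mod_cast not_lt.1 hge
    have h2 := far y₀
    rw [QuotientGroup.mk_one] at this
    linarith
  obtain ⟨ℓ, a, b, k₁, k₂, hτ, c1, c2, hk, hk1, hk2⟩ := (dd_spec (L := L) hi 1 y₀).cross _ hr
  have d1 := (dH_le (n := n) (1 : F) (ℓ.f a)).trans (dd_le c1)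
  have d2 := (dH_le (n := n) (ℓ.f a) (ℓ.f b)).trans (dd_line (L := L) hτ a b)
  have d3 := (dH_le (n := n) (ℓ.f b) y₀).trans (dd_le c2)
  have t1 := dH_tri (n := n) (L := L) hi ((1 : F) : HH i n) (ℓ.f a) y₀
  have t2 := dH_tri (n := n) (L := L) hi (ℓ.f a : HH i n) (ℓ.f b) y₀
  have t3 := dH_tri (n := n) (L := L) hi ((1 : F) : HH i n) (ℓ.f a) (ℓ.f b)
  rw [hd] at hk
  set D := lam i L (a - b).natAbs with hDdef
  have e1 : dH i L n ((1 : F) : HH i n) (ℓ.f a) = k₁ := by omega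
  have e2 : dH i L n (ℓ.f a : HH i n) (ℓ.f b) = D := by omega
  have e3 : dH i L n (ℓ.f b : HH i n) y₀ = k₂ := by omega
  have e4 : dH i L n (ℓ.f a : HH i n) y₀ = D + k₂ := by omega
  have t4 := dH_tri (n := n) (L := L) hi ((1 : F) : HH i n) (ℓ.f b) y₀
  have e5 : dH i L n ((1 : F) : HH i n) (ℓ.f b) = k₁ + D := by omega
  rw [QuotientGroup.mk_one] at e1 e5 hk
  have f1 := XX_pt_four hi hL hn e 1 y₀ (ℓ.f a)
  have f2 := XX_pt_four hi hL hn e 1 y₀ (ℓ.f b)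
  rw [hk] at f1 f2 hy
  rw [e1, e4] at f1
  rw [e5, e3] at f2
  have r1 : (k₁ : ℝ) ≤ ⌊e.f 1⌋₊ := by exact_mod_cast hk1
  have r2 : (⌊e.f 1⌋₊ : ℝ) ≤ k₁ + D := by exact_mod_cast hk2
  push_cast at f1 f2 hy
  have g1 : e.f (ℓ.f a) ≤ e.f 1 - k₁ + 11 := by
    rcases max_choice (e.f 1 + ((D : ℝ) + k₂)) (k₁ + e.f y₀) with h | h <;> rw [h] at f1 <;>
      linarith
  have g2 : e.f (ℓ.f b) ≤ k₁ + D - e.f 1 + 13 := by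
    rcases max_choice (e.f 1 + (k₂ : ℝ)) (k₁ + D + e.f y₀) with h | h <;> rw [h] at f2 <;>
      linarith
  have ha := far (ℓ.f a)
  have hb := far (ℓ.f b)
  have hD := dle (ℓ.f a) (ℓ.f b)
  rw [e2] at hD
  have lift : ∀ t : HH i n, dist (t • e) e ≤ 500 → ∃ k : F, (k : HH i n) = t ∧ ℓ.St k := by
    intro t ht
    have m1 := move t ht (ℓ.f a)
    have m2 := move t ht (ℓ.f b)
    have p1 := dle (ℓ.f a) (t * ℓ.f a)
    have p2 := dle (ℓ.f b) (t * ℓ.f b)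
    have p3 := dle (ℓ.f a) (t * ℓ.f b)
    have p4 := dle (ℓ.f b) (t * ℓ.f a)
    refine exists_lift_st hi hL hn hτ a b t e2 rfl rfl rfl rfl ?_ ?_ ?_ ?_ ?_ ?_
    · rify; linarith
    · rify; linarith
    · rify; linarith
    · rify; linarith
    · rify; linarith
    · rify; linarith
  obtain ⟨k, rfl, s, hk'⟩ := lift u hu
  obtain ⟨k', rfl, s', hk''⟩ := lift v hv
  refine hcomm ?_
  have := hk'.comm hk''
  change (k : HH i n) * k' = k' * k
  rw [← QuotientGroup.mk_mul, ← QuotientGroup.mk_mul, this]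

end TB

namespace TB
open PLine

/-! ### Unbounded orbits and non-elementarity -/

section
variable {i L n : ℕ}

/-- Modulo the relators, each move of a path along a line can be shortened to length at most
`n * i`. -/
theorem Cost.shorten (hL : 1 ≤ L) (hn : 1 ≤ n) {x y : F} {k : ℕ} (h : Cost i L x y k) :
    ∃ y' : F, (y' : HH i n) = y ∧ nd x y' ≤ k * (n * i) := by
  induction h with
  | refl => exact ⟨x, rfl, by simp [nd_self]⟩
  | step y k ℓ a b _ hτ hy ih =>
    obtain ⟨y', hy', hd⟩ := ih
    by_cases hab : a = b
    · subst hab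
      exact ⟨y', by rw [hy', hy], by simpa [lam_zero] using hd⟩
    have hlam : 1 ≤ lam i L (a - b).natAbs := lam_pos hL (by omega)
    obtain ⟨m, hm, rfl⟩ := exists_mul_of_mk_eq hy'.symm
    set T : ℤ := n * ℓ.τ with hT
    have hTpos : 0 < T := by
      have := ℓ.pos
      have h1 : (1 : ℤ) ≤ n := by exact_mod_cast hn
      have h2 : (0 : ℤ) < ℓ.τ := by exact_mod_cast this
      positivity
    have hTle : T ≤ ((n * i : ℕ) : ℤ) := by
      rw [hT]; exact_mod_cast Nat.mul_le_mul_left n hτ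
    set q : ℤ := (a - b) / T with hq
    have hmod : a - (b + q * T) = (a - b) % T := by
      have := Int.emod_add_mul_ediv (a - b) T
      rw [← hq] at this
      linarith [mul_comm q T]
    have hw : ℓ.w ^ n ∈ NN i n := pow_mem_NN hτ ⟨_, ℓ.isTr_w⟩
    have hwq : (ℓ.w ^ n) ^ q * ℓ.f b = ℓ.f (b + q * T) := by
      rw [((ℓ.isTr_w.pow n).zpow q) b]
    refine ⟨m * ℓ.f (b + q * T), ?_, ?_⟩
    · rw [mk_mul_mem hm, ← hwq, mk_mul_mem (Subgroup.zpow_mem _ hw q)]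
    · have h1 := nd_tri x (m * y) (m * ℓ.f (b + q * T))
      rw [nd_mul, ← hy, ℓ.iso, hmod] at h1
      have h2 := Int.emod_nonneg (a - b) hTpos.ne'
      have h3 := Int.emod_lt_of_pos (a - b) hTpos
      have h4 : ((a - b) % T).natAbs ≤ n * i := by omega
      rw [← hy] at hd
      nlinarith

theorem finite_of_bounded (hi : 1 ≤ i) (hL : 1 ≤ L) (hn : 1 ≤ n) (R : ℕ)
    (h : ∀ g : HH i n, dH i L n 1 g ≤ R) : Finite (HH i n) := by
  have hfin := (ball_finite (R * (n * i))).image (fun x : F => (x : HH i n))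
  refine Set.finite_univ_iff.1 (hfin.subset fun g _ => ?_)
  obtain ⟨y, hy, hd⟩ := dH_spec (L := L) (1 : F) g
  obtain ⟨y', hy', hd'⟩ := (dd_spec (L := L) hi 1 y).shorten (n := n) hL hn
  refine ⟨y', ?_, hy'.trans hy⟩
  have h1 : dd i L 1 y ≤ R := hd.trans_le (h g)
  exact hd'.trans (Nat.mul_le_mul_right _ h1)

theorem dH_gen (hi : 1 ≤ i) (k : Fin 2) : dH i L n 1 (FreeGroup.of k : F) ≤ 5 := by
  have h1 : dd i L ((letterLine 1 k).f 0) ((letterLine 1 k).f 1) ≤ _ := dd_line (by exact hi) 0 1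
  have h2 : lam i L ((0 : ℤ) - 1).natAbs ≤ lam i L (16 * i) := lam_mono (by simp; omega)
  have h3 := lam16 (L := L) hi
  have h4 := dH_le (i := i) (L := L) (n := n) 1 (FreeGroup.of k)
  simp only [letterLine, zpow_zero, zpow_one, one_mul] at h1
  exact (h4.trans h1).trans (h2.trans h3)

/-- The two generators do not commute: their commutator has length four, which is too short for an
element of the normal closure. -/
theorem not_commute_gen (hi : 1 ≤ i) (hn : 14 * i ≤ n) :
    ¬ Commute ((FreeGroup.of 0 : F) : HH i n) ((FreeGroup.of 1 : F) : HH i n) := by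
  intro h
  set a : F := FreeGroup.of 0
  set b : F := FreeGroup.of 1
  have h1 : ((a * b : F) : HH i n) = ((b * a : F) : HH i n) := h
  rw [mk_eq] at h1
  have hne : (a * b)⁻¹ * (b * a) ≠ 1 := by decide
  have hlen : nd 1 ((a * b)⁻¹ * (b * a)) ≤ 4 := by rw [nd_one]; decide
  obtain ⟨ℓ, g, t, hτ, hg, ht, hle⟩ := good_of_mem_NN hn hi h1 hne
  have hl := ℓ.proj_lip 1 ((a * b)⁻¹ * (b * a))
  have hnt : n ≤ ((n : ℤ) * t).natAbs := by
    rw [Int.natAbs_mul, Int.natAbs_natCast]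
    exact Nat.le_mul_of_pos_right _ (Int.natAbs_pos.2 ht)
  generalize (n : ℤ) * t = m at *
  omega

theorem closure_gen : Subgroup.closure {((FreeGroup.of 0 : F) : HH i n), ((FreeGroup.of 1 : F) : HH i n)}
    = ⊤ := by
  have h := congrArg (Subgroup.map (QuotientGroup.mk' (NN i n)))
    (FreeGroup.closure_range_of (Fin 2))
  rw [MonoidHom.map_closure, ← MonoidHom.range_eq_map,
    MonoidHom.range_eq_top.2 (QuotientGroup.mk'_surjective _)] at h
  rw [← h]
  congr 1
  ext x
  simp [Fin.exists_fin_two, eq_comm]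

/-- An element of the ball of radius `k` lifts to an element of the free group of length at
most `k`. -/
theorem lift_ball (k : ℕ) (g : HH i n)
    (hg : g ∈ (({((FreeGroup.of 0 : F) : HH i n), ((FreeGroup.of 1 : F) : HH i n)} : Set (HH i n)) ∪
      ({((FreeGroup.of 0 : F) : HH i n), ((FreeGroup.of 1 : F) : HH i n)} : Set (HH i n))⁻¹) ^ k) :
    ∃ x : F, (x : HH i n) = g ∧ nd 1 x ≤ k := by
  induction k generalizing g with
  | zero =>
    rw [pow_zero, Set.mem_one] at hg
    exact ⟨1, hg.symm, by simp [nd_self]⟩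
  | succ k ih =>
    rw [pow_succ, Set.mem_mul] at hg
    obtain ⟨a, ha, b, hb, rfl⟩ := hg
    obtain ⟨x, rfl, hx⟩ := ih a ha
    obtain ⟨y, rfl, hy⟩ : ∃ y : F, (y : HH i n) = b ∧ nd 1 y ≤ 1 := by
      have h0 : nd 1 (FreeGroup.of 0 : F) ≤ 1 := by rw [nd_one]; decide
      have h1 : nd 1 (FreeGroup.of 1 : F) ≤ 1 := by rw [nd_one]; decide
      rcases hb with hb | hb
      · rcases hb with rfl | rfl
        · exact ⟨_, rfl, h0⟩
        · exact ⟨_, rfl, h1⟩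
      · rw [Set.mem_inv] at hb
        rcases hb with hb | hb
        · exact ⟨(FreeGroup.of 0)⁻¹, by rw [QuotientGroup.mk_inv, ← hb, inv_inv], by rwa [nd_inv]⟩
        · exact ⟨(FreeGroup.of 1)⁻¹, by rw [QuotientGroup.mk_inv, ← hb, inv_inv], by rwa [nd_inv]⟩
    exact ⟨x * y, rfl, (nd_mul_le x y).trans (by omega)⟩

/-- Elements of the free group of length at most `i` have finite order in the quotient. -/
theorem finOrder_of_short (hn : 1 ≤ n) {x : F} (hx : nd 1 x ≤ i) :
    IsOfFinOrder (x : HH i n) := by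
  by_cases h1 : x = 1
  · subst h1; exact IsOfFinOrder.one
  obtain ⟨ℓ, hw, hτ⟩ := exists_axis_of_ne_one h1
  rw [nd_one] at hx
  refine isOfFinOrder_iff_pow_eq_one.2 ⟨n, hn, ?_⟩
  have : x ^ n ∈ NN i n := pow_mem_NN (hτ.trans hx) ⟨_, hw ▸ ℓ.isTr_w⟩
  rw [← QuotientGroup.mk_pow]
  exact (QuotientGroup.eq_one_iff _).2 this

/-! ### Parameters and the growth dichotomy -/

/-- The lower bounds which the exponent `n` has to satisfy, together with its being an odd
prime. -/
structure Param (i L n : ℕ) : Prop where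
  hi : 1 ≤ i
  hL : 4500 < L
  prime : n.Prime
  odd : Odd n
  n40 : 40 * i ≤ n
  n1 : 4 * (i * 2 ^ L + 4 * i) + 14 * i ≤ n
  n2 : 12 * (1033 * (i * 2 ^ 1033)) + 28 * i ≤ n
  n3 : 2 * ((12 * ballCard (5 * (4500 * (i * 2 ^ 4500))) + 1) * i) + 6 * i ≤ n

theorem exists_param (hi : 1 ≤ i) (hL : 4500 < L) : ∃ n, Param i L n := by
  generalize ha : 4 * (i * 2 ^ L + 4 * i) + 14 * i = A
  generalize hb : 12 * (1033 * (i * 2 ^ 1033)) + 28 * i = B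
  generalize hc : 2 * ((12 * ballCard (5 * (4500 * (i * 2 ^ 4500))) + 1) * i) + 6 * i = C
  obtain ⟨n, hn, hp⟩ := Nat.exists_infinite_primes (A + B + C + 40 * i + 3)
  exact ⟨n, hi, hL, hp, hp.odd_of_ne_two (by omega), by omega, by omega, by omega, by omega⟩

namespace Param
theorem hL1 (P : Param i L n) : 1 ≤ L := by have := P.hL; omega

theorem vcyc (P : Param i L n) (K : Subgroup (HH i n)) (hv : VirtuallyCyclic K) (hg : ∃ g ∈ K, ¬ IsOfFinOrder g) :
    IsCyclic K ∧ Infinite K := by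
  have hn := P.n40
  have hfo : ∀ s : K, IsOfFinOrder s → IsOfFinOrder (s : HH i n) := fun s hs =>
    Submonoid.isOfFinOrder_coe.2 hs
  refine cyclic_of_virtuallyCyclic P.odd (fun s hs => ?_) (fun s z hs h1 hz => ?_) hv ?_
  · exact Subtype.ext (by simpa using torsion_pow P.hi (by omega) (hfo s hs))
  · refine Subtype.ext ?_
    have h2 : (s : HH i n) ≠ 1 := fun h => h1 (Subtype.ext h)
    have h3 : Commute (s : HH i n) z := congrArg Subtype.val hz
    simpa using torsion_centralizer P.hi hn P.prime (hfo s hs) h2 h3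
  · obtain ⟨g, hgK, hg⟩ := hg
    exact ⟨⟨g, hgK⟩, fun h => hg (hfo _ h)⟩

theorem no_two_torsion (P : Param i L n) (t : HH i n) (h : t ^ 2 = 1) : t = 1 := by
  have hn := P.n40
  have h1 : t ^ n = 1 :=
    torsion_pow P.hi (by omega) (isOfFinOrder_iff_pow_eq_one.2 ⟨2, by norm_num, h⟩)
  obtain ⟨k, hk⟩ := P.odd
  have h2 : t ^ (2 * k + 1) = t := by rw [pow_succ, pow_mul, h, one_pow, one_mul]
  rw [← h2, ← h1]
  congr 1
  exact hk.symm

theorem hact (P : Param i L n) : HAct (HH i n) (XX i L n P.hi) where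
  hyp := Hull.hyperbolic (mH_four P.hi P.hL1 P.n1) le_rfl
  geo := Hull.geodesic
  iso := Hull.dist_smul

theorem acyl (P : Param i L n) : Acyl (HH i n) (XX i L n P.hi) (3 * L + 6 * 1033 + 50) (2 * (2 * 1033 + L) + 1) := by
  intro a b hab
  have hL := P.hL
  have := acyl_X (K := 1000) (D := 1033) P.hi rfl (by omega) P.n1 P.n2 a b
    (by push_cast at hab ⊢; linarith)
  simpa using this

/-- The growth dichotomy: uniformly many distinct products of non-commuting elements. -/
theorem words (P : Param i L n) {U : Set (HH i n)} (hfin : U.Finite) (hU : U⁻¹ = U) {u v : HH i n} (hu : u ∈ U)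
    (hv : v ∈ U) (huv : ¬ Commute u v) :
    (∀ k, 2 ^ k ≤ (U ^ (10 * k)).ncard) ∨
    ∀ k, 2 ^ k ≤ (U ^ ((2 * mExp (3 * L + 6 * 1033 + 50) (2 * (2 * 1033 + L) + 1) + 2) * k)).ncard := by
  by_cases hC : ∀ x : XX i L n P.hi, 500 ≤ disp u v x
  · right
    intro k
    have : Nonempty (XX i L n P.hi) := ⟨Hull.pt _ 1⟩
    obtain ⟨a, ha, b, hb, hab⟩ := regime_two P.hact P.acyl
      (fun K hv hg => (P.vcyc K hv hg).1) P.no_two_torsion hU hu hv huv hC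
    refine card_of_words hfin ha hb (fun f : Fin k → Bool => List.ofFn f) (fun f => by simp) ?_
    intro f f' h
    exact List.ofFn_injective (hab _ _ (by simp) h)
  · left
    push Not at hC
    obtain ⟨e, he⟩ := hC
    unfold disp at he
    have hn := P.n40
    rcases small_disp P.hi P.hL1 P.n1 e ((le_max_left _ _).trans he.le)
      ((le_max_right _ _).trans he.le) with h | ⟨p, h1, h2⟩
    · exact absurd h huv
    · exact regime_one P.hi P.hL1 P.hL (by omega) P.n3 hfin hU hu hv huv p h1 h2

theorem infinite (P : Param i L n) : Infinite (HH i n) := by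
  by_contra hfin
  rw [not_infinite_iff_finite] at hfin
  have hL := P.hL
  have hn := P.n40
  have := regime_one (U := Set.univ) P.hi P.hL1 P.hL (by omega) P.n3 Set.finite_univ
    (by simp) (Set.mem_univ _) (Set.mem_univ _) (not_commute_gen P.hi (by omega)) 1
    (by rw [mul_one]; exact (dH_gen P.hi 0).trans (by norm_num))
    (by rw [mul_one]; exact (dH_gen P.hi 1).trans (by norm_num)) (Nat.card (HH i n))
  have h2 := this.trans (Set.ncard_le_card _)
  exact absurd h2 (not_le.2 Nat.lt_two_pow_self)

theorem not_virtuallyCyclic (P : Param i L n) : ¬ VirtuallyCyclic (HH i n) := by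
  intro hv
  have hinf := P.infinite
  have hn := P.n40
  obtain ⟨g, hg⟩ : ∃ g : HH i n, ¬ IsOfFinOrder g := by
    by_contra! hall
    obtain ⟨C, ⟨c, hc⟩, hC⟩ := hv
    have hfc : IsOfFinOrder c := Submonoid.isOfFinOrder_coe.1 (hall c)
    have hCf : Finite C := by
      have h1 : (Subgroup.zpowers c : Set C).Finite := finite_zpowers.2 hfc
      refine Set.finite_univ_iff.1 (h1.subset fun x _ => hc x)
    have : Finite (HH i n ⧸ C) := Subgroup.finite_quotient_of_finiteIndex
    have h2 : Finite (HH i n) :=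
      Finite.of_equiv _ (Subgroup.groupEquivQuotientProdSubgroup (s := C)).symm
    exact hinf.not_finite h2
  have h := cyclic_of_virtuallyCyclic P.odd (fun s hs => torsion_pow P.hi (by omega) hs)
    (fun s z hs h1 hz => torsion_centralizer P.hi hn P.prime hs h1 hz) hv ⟨g, hg⟩
  obtain ⟨c, hc⟩ := h.1
  refine not_commute_gen P.hi (by omega) (i := i) (n := n) ?_
  obtain ⟨a, ha⟩ := hc ((FreeGroup.of 0 : F) : HH i n)
  obtain ⟨b, hb⟩ := hc ((FreeGroup.of 1 : F) : HH i n)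
  rw [← ha, ← hb]
  exact (Commute.refl c).zpow_zpow a b

theorem unbounded (P : Param i L n) : ¬ Bornology.IsBounded
    (MulAction.orbit (HH i n) (Hull.pt (mH i L n P.hi) 1)) := by
  intro hb
  rw [Metric.isBounded_iff_subset_closedBall (Hull.pt (mH i L n P.hi) 1)] at hb
  obtain ⟨R, hR⟩ := hb
  have hn := P.n40
  have hi := P.hi
  have hinf := P.infinite
  refine hinf.not_finite (finite_of_bounded P.hi P.hL1 (by omega) ⌈R⌉₊ fun g => ?_)
  have h1 := hR ⟨g, rfl⟩
  rw [Metric.mem_closedBall, dist_comm] at h1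
  have h2 : dist (Hull.pt (mH i L n P.hi) 1) (g • Hull.pt (mH i L n P.hi) 1) =
      (dH i L n 1 g : ℝ) := by
    rw [Hull.smul_pt, Hull.dist_pt_pt, mul_one, mH_d]
  have h3 : (dH i L n 1 g : ℝ) ≤ ⌈R⌉₊ := (h2 ▸ h1).trans (Nat.le_ceil R)
  exact_mod_cast h3

theorem uueg (P : Param i L n) {c : ℕ} (hc : c = 2 * mExp (3 * L + 6 * 1033 + 50) (2 * (2 * 1033 + L) + 1) + 2) :
    UUEG (Real.log 2 / (2 * c)) (HH i n) := by
  intro K _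
  by_cases hK : ∀ a b : K, Commute a b
  · left
    refine ⟨⊤, ?_, inferInstance⟩
    let _ : CommGroup (⊤ : Subgroup K) :=
      { (inferInstance : Group (⊤ : Subgroup K)) with
        mul_comm := fun a b => Subtype.ext (hK a b) }
    infer_instance
  right
  intro U hfin hU hgen
  obtain ⟨u, hu, v, hv, huv⟩ : ∃ u ∈ U, ∃ v ∈ U, ¬ Commute u v := by
    by_contra! hcom
    apply hK
    intro a b
    have hab : ∀ x : K, x ∈ Subgroup.closure U := fun x => hgen ▸ Subgroup.mem_top x
    have hcU : ∀ x ∈ U, ∀ y ∈ U, x * y = y * x := fun x hx y hy => hcom x hx y hy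
    have := (Subgroup.isMulCommutative_closure hcU).is_comm.comm ⟨a, hab a⟩ ⟨b, hab b⟩
    exact congrArg Subtype.val this
  have hc10 : 10 ≤ c := by rw [hc]; unfold mExp; omega
  have hpow : ∀ m, (K.subtype '' U) ^ m = K.subtype '' (U ^ m) := fun m =>
    (Set.image_pow K.subtype U m).symm
  have hcard : ∀ m, ((K.subtype '' U) ^ m).ncard = (U ^ m).ncard := fun m => by
    rw [hpow]; exact Set.ncard_image_of_injective _ K.subtype_injective
  have hlog : 0 < Real.log 2 := Real.log_pos (by norm_num)
  have hcpos : (0 : ℝ) < c := by exact_mod_cast (by omega : 0 < c)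
  have hlt : Real.log 2 / (2 * c) < Real.log 2 / c := by
    apply div_lt_div_of_pos_left hlog hcpos; linarith
  refine hlt.trans_le ?_
  have hUi : (K.subtype '' U)⁻¹ = K.subtype '' U := by
    rw [← Set.image_inv, hU]
  rcases P.words (hfin.image K.subtype) hUi (Set.mem_image_of_mem _ hu) (Set.mem_image_of_mem _ hv)
    (fun h => huv (Subtype.ext h)) with h | h
  · have := growth_ge hfin (c := 10) (by norm_num) fun k => by rw [← hcard]; exact h k
    refine le_trans ?_ this
    apply div_le_div_of_nonneg_left hlog.le (by norm_num)
    exact_mod_cast hc10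
  · exact growth_ge hfin (by omega) fun k => by rw [← hcard, hc]; exact h k

theorem lox_infinite (P : Param i L n) {g : HH i n} (hg : IsLoxodromic (XX i L n P.hi) g) : ¬ IsOfFinOrder g := by
  intro hf
  obtain ⟨m, hm, h1⟩ := isOfFinOrder_iff_pow_eq_one.1 hf
  have h := hg (Hull.pt _ 1)
  unfold stableLength at h
  have h2 := ciInf_le (f := fun n' : ℕ+ => dist ((g ^ (n' : ℕ)) • (Hull.pt (mH i L n P.hi) 1))
    (Hull.pt (mH i L n P.hi) 1) / ((n' : ℕ) : ℝ)) ⟨0, by rintro _ ⟨k, rfl⟩; positivity⟩ ⟨m, hm⟩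
  simp only [PNat.mk_coe, h1, one_smul, dist_self, zero_div] at h2
  linarith

theorem witness (P : Param i L n) : Nonempty (BigTorsionBallWitness
    (Real.log 2 / (2 * ((2 * mExp (3 * L + 6 * 1033 + 50) (2 * (2 * 1033 + L) + 1) + 2 : ℕ) : ℝ)))
    ((2 * (2 * 1033 + L) + 1 : ℕ) : ℝ) ((3 * L + 6 * 1033 + 50 : ℕ) : ℝ) 5 i) := by
  have hn := P.n40
  have hi := P.hi
  exact ⟨{
    H := HH i n
    X := XX i L n P.hi
    s₁ := ((FreeGroup.of 0 : F) : HH i n)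
    s₂ := ((FreeGroup.of 1 : F) : HH i n)
    generates := closure_gen
    torsion_ball := fun g hg => by
      obtain ⟨x, rfl, hx⟩ := lift_ball i g hg
      exact finOrder_of_short (by omega) hx
    hyperbolic := P.hact.hyp
    geodesic := P.hact.geo
    isometric := Hull.isometric
    acylindrical := fun x y hxy => by
      obtain ⟨h1, h2⟩ := P.acyl x y hxy
      have hsub : {g : HH i n | dist (g • x) x ≤ 100 * 5 ∧ dist (g • y) y ≤ 100 * 5} ⊆
          {g : HH i n | dist (g • x) x ≤ 1000 ∧ dist (g • y) y ≤ 1000} := fun g hg =>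
        ⟨hg.1.trans (by norm_num), hg.2.trans (by norm_num)⟩
      exact ⟨h1.subset hsub, by exact_mod_cast (Set.ncard_le_ncard hsub h1).trans h2⟩
    unbounded_orbit := ⟨_, P.unbounded⟩
    not_virtually_cyclic := P.not_virtuallyCyclic
    uueg := P.uueg rfl
    loxodromic_subgroups_cyclic := fun K hK ⟨g, hgK, hg⟩ =>
      P.vcyc K hK ⟨g, hgK, P.lox_infinite hg⟩ }⟩

end Param
end
end TB

/-- uniformly acylindrical, uniformly hyperbolic, uniformly
growing groups with arbitrarily large torsion balls. -/
theorem groups_with_large_torsion_balls :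
    ∃ ξ N κ δ : ℝ, 0 < ξ ∧ 0 < N ∧ 0 < κ ∧ 0 < δ ∧ δ ≤ κ ∧
      ∀ i : ℕ, 1 ≤ i → Nonempty (BigTorsionBallWitness ξ N κ δ i) := by
  -- The saturation level `L` of the cost function only has to exceed the displacement bound 4500.
  obtain ⟨L, hL⟩ : ∃ L : ℕ, 4500 < L := ⟨5000, by norm_num⟩
  have hlog : 0 < Real.log 2 := Real.log_pos (by norm_num)
  refine ⟨Real.log 2 / (2 * ((2 * TB.mExp (3 * L + 6 * 1033 + 50) (2 * (2 * 1033 + L) + 1) + 2 : ℕ)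
      : ℝ)), ((2 * (2 * 1033 + L) + 1 : ℕ) : ℝ), ((3 * L + 6 * 1033 + 50 : ℕ) : ℝ), 5,
    ?_, ?_, ?_, by norm_num, ?_, fun i hi => (TB.exists_param hi hL).choose_spec.witness⟩
  · apply div_pos hlog
    push_cast
    positivity
  · exact_mod_cast Nat.succ_pos _
  · exact_mod_cast Nat.succ_pos _
  · exact_mod_cast (by omega : 5 ≤ 3 * L + 6 * 1033 + 50)
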